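/- arXiv:1110.6140 — 3 statements merged into one kernel-verified Lean document; each statement's English description precedes it below -/
import Mathlib

section
/- There exists a nonempty Π⁰₁ closed subset Q of [0,1]² ⊆ ℝ² such that the subspace Q is contractible and Q contains no computable point. -/
open Set Metric

section TopDefs

variable {α : Type*} [TopologicalSpace α]

/-- `A ⊆ α` is an arc with endpoints `x` and `y`:
a homeomorphic (continuous injective) image of `[0,1]` sending `0 ↦ x`, `1 ↦ y`. -/
def IsArc (A : Set α) (x y : α) : Prop :=
  ∃ f : Set.Icc (0:ℝ) 1 → α, Continuous f ∧ Function.Injective f ∧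
    Set.range f = A ∧ f ⟨0, by norm_num⟩ = x ∧ f ⟨1, by norm_num⟩ = y

/-- A continuum: a nonempty compact connected set. -/
def IsContinuum (X : Set α) : Prop := IsCompact X ∧ IsConnected X

/-- Any two distinct points of `X` are endpoints of an arc contained in `X`. -/
def ArcwiseConnectedSet (X : Set α) : Prop :=
  ∀ x ∈ X, ∀ y ∈ X, x ≠ y → ∃ A, A ⊆ X ∧ IsArc A x y

/-- `X` is unicoherent: for all closed connected `A, B ⊆ X` with `A ∪ B = X`,
the intersection `A ∩ B` is connected. -/
def UnicoherentSet (X : Set α) : Prop :=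
  ∀ A B : Set α, A ⊆ X → B ⊆ X → IsClosed A → IsClosed B →
    IsConnected A → IsConnected B → A ∪ B = X → IsConnected (A ∩ B)

/-- Every subcontinuum of `X` is unicoherent. -/
def HereditarilyUnicoherent (X : Set α) : Prop :=
  ∀ Y, Y ⊆ X → IsContinuum Y → UnicoherentSet Y

/-- A dendroid: an arcwise connected, hereditarily unicoherent continuum. -/
def IsDendroid (X : Set α) : Prop :=
  IsContinuum X ∧ ArcwiseConnectedSet X ∧ HereditarilyUnicoherent X

/-- The unit circle `S¹`. -/
def unitCircle : Set (EuclideanSpace ℝ (Fin 2)) := Metric.sphere 0 1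

/-- A dendrite: a locally connected continuum containing no subset homeomorphic to `S¹`. -/
def IsDendrite (X : Set α) : Prop :=
  IsContinuum X ∧ LocallyConnectedSpace ↥X ∧
    ∀ S : Set α, S ⊆ X → IsEmpty (↥S ≃ₜ ↥unitCircle)

/-- `x` and `y` lie in the same arc-component of `Y`. -/
def SameArcComponent (Y : Set α) (x y : α) : Prop :=
  x = y ∨ ∃ A, A ⊆ Y ∧ IsArc A x y

/-- `x` is a ramification point of `X`: `X \ {x}` has at least three arc-components. -/
def IsRamificationPoint (X : Set α) (x : α) : Prop :=
  x ∈ X ∧ ∃ u v w, u ∈ X \ {x} ∧ v ∈ X \ {x} ∧ w ∈ X \ {x} ∧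
    ¬ SameArcComponent (X \ {x}) u v ∧ ¬ SameArcComponent (X \ {x}) u w ∧
    ¬ SameArcComponent (X \ {x}) v w

/-- A tree (as a continuum): a dendrite with finitely many ramification points. -/
def IsTreeContinuum (X : Set α) : Prop :=
  IsDendrite X ∧ {x | IsRamificationPoint X x}.Finite

end TopDefs

section CompDefs

/-- The rational open ball in `ℝ²` coded by `((q₁, q₂), r)`. -/
def ballOfCode (c : (ℚ × ℚ) × ℚ) : Set (ℝ × ℝ) :=
  {x | dist x (((c.1.1 : ℝ), (c.1.2 : ℝ)) : ℝ × ℝ) < (c.2 : ℝ)}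

/-- A closed set `F ⊆ ℝ²` is `Π⁰₁` if it is the complement of the union of the rational
open balls coded by some c.e. set of codes. -/
def IsPi01Closed (F : Set (ℝ × ℝ)) : Prop :=
  ∃ W : (ℚ × ℚ) × ℚ → Prop, REPred W ∧ F = Set.univ \ ⋃ c ∈ {c | W c}, ballOfCode c

/-- `F ⊆ ℝ²` is c.e. closed if the set of codes of rational open balls meeting `F` is c.e. -/
def IsCEClosed (F : Set (ℝ × ℝ)) : Prop :=
  REPred (fun c : (ℚ × ℚ) × ℚ => (F ∩ ballOfCode c).Nonempty)

/-- A computable closed subset of `ℝ²`: both `Π⁰₁` and c.e. closed. -/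
def IsComputableClosed (F : Set (ℝ × ℝ)) : Prop :=
  IsPi01Closed F ∧ IsCEClosed F

/-- A point of `ℝ²` is computable if the set of codes of rational open balls
containing it is c.e. -/
def IsComputablePoint (x : ℝ × ℝ) : Prop :=
  REPred (fun c : (ℚ × ℚ) × ℚ => x ∈ ballOfCode c)

end CompDefs

section PsiDefs

/-- A tree of binary strings: a set of finite binary strings closed under prefixes. -/
def IsTreeOfStrings (T : Set (List Bool)) : Prop :=
  ∀ σ ∈ T, ∀ τ : List Bool, τ <+: σ → τ ∈ T

/-- The point `ψ(σ) ∈ ℝ²` associated with the binary string `σ`. -/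
noncomputable def psiPt (σ : List Bool) : ℝ × ℝ :=
  ((3:ℝ) ^ (-(σ.length : ℤ)) / 2 +
      2 * ∑ i ∈ Finset.range σ.length,
        (if σ.getD i false then (3:ℝ) ^ (-((i : ℤ) + 1)) else 0),
    (2:ℝ) ^ (-(σ.length : ℤ)))

/-- The planar embedding `Ψ(T)` of a tree `T` of binary strings: the closure of the union
of the segments from `ψ(σ⁻)` to `ψ(σ)` over nonempty `σ ∈ T` (together with the points
`ψ(σ)`, `σ ∈ T`, which makes no difference except for the degenerate trees `∅`, `{⟨⟩}`). -/
noncomputable def PsiSet (T : Set (List Bool)) : Set (ℝ × ℝ) :=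
  closure (psiPt '' T ∪ ⋃ σ ∈ T, ⋃ (_ : σ ≠ []), segment ℝ (psiPt σ.dropLast) (psiPt σ))

end PsiDefs

/-!
Diagonalization yields a computable list of constraints `X (pos k) = bit k`, at distinct positions,
that no computable binary sequence `X` satisfies. Coding sequences by base-four digits turns the set
of solutions into a compact set `S` of heights, and `[0, 1] × S` into a bundle of horizontal hairs.

The fan arises from this bundle by infinitely many folds. The constraint on bit `n` that appears at
stage `s` bends everything to the right of `1 - 2⁻ⁿ` into a hook, which runs down close to the right
edge and back to the left inside a thin strip below the heights that are still allowed at the next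
stage. Each bit is constrained at most once, so the folds are eventually constant to the left of
every breakpoint `1 - 2⁻ⁿ`, and the images of what lies to its right shrink to a point. Hence the
folds converge uniformly, and the limit identifies exactly the right ends of the hairs: they form an
apex to which the fan contracts along the hairs.

The fan is the decreasing intersection of images of finite unions of rectangles with rational
corners under maps that are computable on rational points, so it is `Π⁰₁`. A computable point on a
hair, off the apex, computes the height of the hair and so a solution. If the apex were computable,
one could wait, for each `n`, for a stage at which it is seen to be away from the image of
everything to the left of `1 - 2⁻⁽ⁿ⁺¹⁾`. A later constraint on bit `n` would fold the apex back into
that image, so bit `n` can be decided at this stage, which again computes a solution.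
-/

namespace CantorFan

/-! ### Recursively enumerable and computable predicates -/

section Computability

open Encodable
open Nat.Partrec (Code)

variable {α β : Type*} [Primcodable α] [Primcodable β]

theorem exists_computable_iff_of_rePred {p : α → Prop} (hp : REPred p) :
    ∃ f : α → ℕ → Bool, Computable₂ f ∧ ∀ a, p a ↔ ∃ n, f a n = true := by
  obtain ⟨c, hc⟩ := Code.exists_code.1 (show Nat.Partrec _ from hp)
  refine ⟨fun a n => (Code.evaln n c (encode a)).isSome, ?_, fun a => ?_⟩
  · have hargs : Primrec fun x : α × ℕ => ((x.2, c), encode x.1) :=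
      (Primrec.snd.pair (Primrec.const c)).pair (Primrec.encode.comp Primrec.fst)
    exact (Primrec.option_isSome.comp (Code.primrec_evaln.comp hargs)).to_comp
  · have hdom : (Code.eval c (encode a)).Dom ↔ p a := by
      rw [hc]; simp [Part.assert]
    rw [← hdom, Part.dom_iff_mem]
    constructor
    · rintro ⟨y, hy⟩
      obtain ⟨k, hk⟩ := Code.evaln_complete.1 hy
      exact ⟨k, Option.isSome_iff_exists.2 ⟨y, hk⟩⟩
    · rintro ⟨n, hn⟩
      obtain ⟨y, hy⟩ := Option.isSome_iff_exists.1 hn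
      exact ⟨y, Code.evaln_sound hy⟩

theorem rePred_exists_nat {p : α → ℕ → Prop} (hp : ComputablePred fun x : α × ℕ => p x.1 x.2) :
    REPred fun a => ∃ n, p a n := by
  classical
  have hsearch : Partrec fun a => Nat.rfind fun n => Part.some (decide (p a n)) :=
    Partrec.rfind (Computable.partrec hp.decide : Partrec₂ fun a n => Part.some (decide (p a n)))
  refine hsearch.dom_re.of_eq fun a => Nat.rfind_dom'.trans ?_
  simp

theorem exists_computable_enumeration {R : α → β → Prop}
    (hR : REPred fun x : α × β => R x.1 x.2) :
    ∃ e : α → ℕ → Option β, Computable₂ e ∧ ∀ a b, R a b ↔ ∃ n, e a n = some b := by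
  obtain ⟨f, hf, hfR⟩ := exists_computable_iff_of_rePred hR
  refine ⟨fun a n => (decode n.unpair.1).bind fun b =>
    bif f (a, b) n.unpair.2 then some b else none, ?_, fun a b => ?_⟩
  · refine Computable.option_bind
      (Computable.decode.comp (Computable.fst.comp (Computable.unpair.comp Computable.snd))) ?_
    refine Computable.cond ?_ (Computable.option_some.comp Computable.snd) (Computable.const none)
    exact hf.comp (Computable.pair (Computable.fst.comp Computable.fst) Computable.snd)
      (Computable.snd.comp (Computable.unpair.comp (Computable.snd.comp Computable.fst)))
  · rw [hfR (a, b)]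
    constructor
    · rintro ⟨m, hm⟩
      exact ⟨Nat.pair (encode b) m, by simp [hm]⟩
    · rintro ⟨n, hn⟩
      obtain ⟨b', -, hb'⟩ := Option.bind_eq_some_iff.1 hn
      cases hfb : f (a, b') n.unpair.2 <;> simp only [hfb, cond_true, cond_false] at hb'
      · cases hb'
      · cases hb'
        exact ⟨_, hfb⟩

theorem rePred_exists {R : α → β → Prop} (hR : REPred fun x : α × β => R x.1 x.2) :
    REPred fun a => ∃ b, R a b := by
  obtain ⟨e, he, heR⟩ := exists_computable_enumeration hR
  have hsome : ComputablePred fun x : α × ℕ => (e x.1 x.2).isSome = true :=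
    ⟨inferInstance, by simpa using Primrec.option_isSome.to_comp.comp he⟩
  refine (rePred_exists_nat (p := fun a n => (e a n).isSome = true) hsome).of_eq fun a => ?_
  simp only [heR, Option.isSome_iff_exists]
  exact exists_comm

theorem exists_computable_choice {R : α → β → Prop} (hR : REPred fun x : α × β => R x.1 x.2)
    (htotal : ∀ a, ∃ b, R a b) : ∃ f : α → β, Computable f ∧ ∀ a, R a (f a) := by
  obtain ⟨e, he, heR⟩ := exists_computable_enumeration hR
  have hdom : ∀ a, (Nat.rfindOpt (e a)).Dom := fun a => by
    obtain ⟨b, hb⟩ := htotal a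
    obtain ⟨n, hn⟩ := (heR a b).1 hb
    exact Nat.rfindOpt_dom.2 ⟨n, b, hn⟩
  refine ⟨fun a => (Nat.rfindOpt (e a)).get (hdom a),
    (Partrec.rfindOpt he).of_eq_tot fun a => Part.get_mem (hdom a), fun a => ?_⟩
  exact (heR a _).2 (Nat.rfindOpt_spec (Part.get_mem (hdom a)))

theorem computable_of_rePred_graph {f : α → β} (hf : REPred fun x : α × β => f x.1 = x.2) :
    Computable f := by
  obtain ⟨g, hg, hgf⟩ := exists_computable_choice (R := fun a b => f a = b) hf fun a => ⟨f a, rfl⟩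
  exact hg.of_eq fun a => (hgf a).symm

theorem rePred_comp {p : β → Prop} (hp : REPred p) {f : α → β} (hf : Computable f) :
    REPred fun a => p (f a) :=
  Partrec.comp hp hf

theorem rePred_and {p q : α → Prop} (hp : REPred p) (hq : REPred q) :
    REPred fun a => p a ∧ q a := by
  have hseq := Partrec.bind hp (g := fun a (_ : Unit) => Part.assert (q a) fun _ => Part.some ())
    (Partrec.comp hq Computable.fst)
  refine hseq.dom_re.of_eq fun a => ?_
  simp [Part.assert]

theorem computablePred_comp {p : β → Prop} (hp : ComputablePred p) {f : α → β}
    (hf : Computable f) : ComputablePred fun a => p (f a) := by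
  classical
  exact (hp.decide.comp hf).computablePred

theorem computablePred_true : ComputablePred fun _ : α => True :=
  ⟨inferInstance, by simpa using Computable.const true⟩

theorem computablePred_and {p q : α → Prop} (hp : ComputablePred p) (hq : ComputablePred q) :
    ComputablePred fun a => p a ∧ q a := by
  classical
  exact Computable.computablePred
    ((Primrec.and.to_comp.comp hp.decide hq.decide).of_eq fun a => by simp)

theorem computablePred_or {p q : α → Prop} (hp : ComputablePred p) (hq : ComputablePred q) :
    ComputablePred fun a => p a ∨ q a := by
  classical
  exact Computable.computablePred
    ((Primrec.or.to_comp.comp hp.decide hq.decide).of_eq fun a => by simp)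

theorem computablePred_imp {p q : α → Prop} (hp : ComputablePred p) (hq : ComputablePred q) :
    ComputablePred fun a => p a → q a :=
  (computablePred_or hp.not hq).of_eq fun _ => imp_iff_not_or.symm

theorem computable_ite {p : α → Prop} [DecidablePred p] (hp : ComputablePred p) {f g : α → β}
    (hf : Computable f) (hg : Computable g) : Computable fun a => if p a then f a else g a :=
  (Computable.cond hp.decide hf hg).of_eq fun a => by by_cases h : p a <;> simp [h]

theorem computablePred_forall_lt {p : α → ℕ → Prop} {b : α → ℕ} (hb : Computable b)
    (hp : ComputablePred fun x : α × ℕ => p x.1 x.2) :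
    ComputablePred fun a => ∀ i < b a, p a i := by
  classical
  have hrec := Computable.nat_rec (f := b) (g := fun _ : α => true)
    (h := fun a (x : ℕ × Bool) => x.2 && decide (p a x.1)) hb (Computable.const true)
    (Primrec.and.to_comp.comp (Computable.snd.comp Computable.snd)
      (hp.decide.comp (Computable.pair Computable.fst (Computable.fst.comp Computable.snd))))
  refine Computable.computablePred (hrec.of_eq fun a => ?_)
  induction b a with
  | zero => simp
  | succ n ih => simp only [ih, Bool.decide_and, Nat.forall_lt_succ_right]

theorem computablePred_exists_lt {p : α → ℕ → Prop} {b : α → ℕ} (hb : Computable b)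
    (hp : ComputablePred fun x : α × ℕ => p x.1 x.2) :
    ComputablePred fun a => ∃ i < b a, p a i :=
  (computablePred_forall_lt (p := fun a i => ¬ p a i) hb hp.not).not.of_eq fun a => by
    push Not; rfl

variable {f g : α → ℕ}

theorem computablePred_eq {f g : α → β} (hf : Computable f) (hg : Computable g) :
    ComputablePred fun a => f a = g a := by
  classical
  exact computablePred_comp (p := fun x : β × β => x.1 = x.2)
    (PrimrecPred.computablePred Primrec.eq) (hf.pair hg)

theorem computablePred_nat_le (hf : Computable f) (hg : Computable g) :
    ComputablePred fun a => f a ≤ g a :=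
  computablePred_comp (p := fun x : ℕ × ℕ => x.1 ≤ x.2)
    (PrimrecPred.computablePred Primrec.nat_le) (hf.pair hg)

theorem computablePred_nat_lt (hf : Computable f) (hg : Computable g) :
    ComputablePred fun a => f a < g a :=
  computablePred_comp (p := fun x : ℕ × ℕ => x.1 < x.2)
    (PrimrecPred.computablePred Primrec.nat_lt) (hf.pair hg)

theorem computable_nat_add (hf : Computable f) (hg : Computable g) :
    Computable fun a => f a + g a :=
  Primrec.nat_add.to_comp.comp hf hg

theorem computable_nat_sub (hf : Computable f) (hg : Computable g) :
    Computable fun a => f a - g a :=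
  Primrec.nat_sub.to_comp.comp hf hg

theorem computable_nat_mul (hf : Computable f) (hg : Computable g) :
    Computable fun a => f a * g a :=
  Primrec.nat_mul.to_comp.comp hf hg

theorem computable_nat_div (hf : Computable f) (hg : Computable g) :
    Computable fun a => f a / g a :=
  Primrec.nat_div.to_comp.comp hf hg

theorem computable_nat_mod (hf : Computable f) (hg : Computable g) :
    Computable fun a => f a % g a :=
  Primrec.nat_mod.to_comp.comp hf hg

theorem computable_nat_pow (hf : Computable f) (hg : Computable g) :
    Computable fun a => f a ^ g a :=
  (Primrec₂.unpaired'.1 Nat.Primrec.pow).to_comp.comp hf hg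

theorem computable_testBit (hf : Computable f) (hg : Computable g) :
    Computable fun a => Nat.testBit (f a) (g a) := by
  have hquot := computable_nat_div hf (computable_nat_pow (Computable.const 2) hg)
  refine (computablePred_eq (computable_nat_mod hquot (Computable.const 2))
    (Computable.const 1)).decide.of_eq fun a => ?_
  rw [Nat.testBit_eq_decide_div_mod_eq]

theorem computablePred_dvd (hf : Computable f) (hg : Computable g) :
    ComputablePred fun a => f a ∣ g a :=
  (computablePred_eq (computable_nat_mod hg hf) (Computable.const 0)).of_eq fun _ =>
    Nat.dvd_iff_mod_eq_zero.symm

theorem computablePred_coprime (hf : Computable f) (hg : Computable g) :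
    ComputablePred fun a => (f a).Coprime (g a) := by
  have hdvd : ComputablePred fun a =>
      ∀ k < f a + g a + 1, k ∣ f a → k ∣ g a → k = 1 :=
    computablePred_forall_lt (computable_nat_add (computable_nat_add hf hg) (Computable.const 1))
      (computablePred_imp (computablePred_dvd Computable.snd (hf.comp Computable.fst))
        (computablePred_imp (computablePred_dvd Computable.snd (hg.comp Computable.fst))
          (computablePred_eq Computable.snd (Computable.const 1))))
  refine hdvd.of_eq fun a => ⟨fun h => ?_, fun h k _ => Nat.eq_one_of_dvd_coprimes h⟩
  refine h _ (Nat.lt_succ_of_le ?_) (Nat.gcd_dvd_left _ _) (Nat.gcd_dvd_right _ _)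
  rcases (f a).eq_zero_or_pos with h0 | hpos
  · simp [h0]
  · exact (Nat.gcd_le_left _ hpos).trans (Nat.le_add_right _ _)

theorem computable_of_strictMono {f : ℕ → ℕ} (hf : StrictMono f)
    (hrange : ComputablePred (· ∈ Set.range f)) : Computable f := by
  classical
  have hnext : ∀ m, ∃ k, m ≤ k ∧ k ∈ Set.range f := fun m =>
    ⟨f m, hf.le_apply, m, rfl⟩
  have hfind := Computable.find (P := fun m k => m ≤ k ∧ k ∈ Set.range f)
    (computablePred_and (computablePred_nat_le Computable.fst Computable.snd)
      (computablePred_comp hrange Computable.snd)) hnext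
  have hrec := Computable.nat_rec (f := fun n : ℕ => n) (g := fun _ => f 0)
    (h := fun _ (x : ℕ × ℕ) => Nat.find (hnext (x.2 + 1))) Computable.id (Computable.const _)
    (hfind.comp (Computable.succ.comp (Computable.snd.comp Computable.snd)))
  refine hrec.of_eq fun n => ?_
  induction n with
  | zero => rfl
  | succ n ih =>
    simp only [ih]
    refine (Nat.find_eq_iff _).2 ⟨⟨hf n.lt_succ_self, n + 1, rfl⟩, ?_⟩
    rintro _ hk ⟨hle, j, rfl⟩
    exact absurd (hf.lt_iff_lt.1 hle) (Nat.not_lt.2 (Nat.lt_succ_iff.1 (hf.lt_iff_lt.1 hk)))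

end Computability

/-! ### Computable arithmetic of rational numbers -/

section Rational

open Encodable Denumerable

theorem encode_int_ofNat (n : ℕ) : encode (Int.ofNat n) = 2 * n := rfl

theorem encode_int_negSucc (n : ℕ) : encode (Int.negSucc n) = 2 * n + 1 := rfl

theorem computable_int_natAbs : Computable Int.natAbs := by
  refine (computable_nat_div (computable_nat_add Computable.encode (Computable.const 1))
    (Computable.const 2)).of_eq fun z => ?_
  rcases z with n | n
  · rw [encode_int_ofNat]; simp only [Int.ofNat_eq_natCast, Int.natAbs_natCast]; omega
  · rw [encode_int_negSucc, Int.natAbs_negSucc]; omega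

theorem computable_int_toNat : Computable Int.toNat := by
  have heven : ComputablePred fun z : ℤ => encode z % 2 = 0 :=
    computablePred_eq (computable_nat_mod Computable.encode (Computable.const 2))
      (Computable.const 0)
  refine (computable_ite heven computable_int_natAbs (Computable.const 0)).of_eq fun z => ?_
  rcases z with n | n
  · rw [if_pos (by rw [encode_int_ofNat]; omega)]; rfl
  · rw [if_neg (by rw [encode_int_negSucc]; omega)]; rfl

/-- The code of a rational number as a pair of numerator and denominator. The code `encode q` of
the `Primcodable` instance of `ℚ` is instead the rank of `fractionCode q` among all fraction
codes, so decoding it has to enumerate the reduced fractions. -/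
def fractionCode (q : ℚ) : ℕ := @encode ℚ Rat.instEncodable q

theorem fractionCode_eq_pair (q : ℚ) : fractionCode q = Nat.pair (encode q.num) q.den := rfl

theorem fractionCode_injective : Function.Injective fractionCode :=
  @encode_injective ℚ Rat.instEncodable

theorem mem_range_fractionCode {m : ℕ} :
    m ∈ Set.range fractionCode ↔
      0 < m.unpair.2 ∧ (ofNat ℤ m.unpair.1).natAbs.Coprime m.unpair.2 := by
  constructor
  · rintro ⟨q, rfl⟩
    rw [fractionCode_eq_pair, Nat.unpair_pair, ofNat_encode]
    exact ⟨q.pos, q.reduced⟩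
  · rintro ⟨hpos, hcop⟩
    refine ⟨⟨ofNat ℤ m.unpair.1, m.unpair.2, hpos.ne', hcop⟩, ?_⟩
    rw [fractionCode_eq_pair, encode_ofNat, Nat.pair_unpair]

theorem strictMono_fractionCode_ofNat : StrictMono fun n => fractionCode (ofNat ℚ n) := by
  have : Infinite (Set.range fractionCode) :=
    Infinite.of_injective _ (Equiv.ofInjective _ fractionCode_injective).injective
  have hval : ∀ n, fractionCode (ofNat ℚ n) = @Nat.Subtype.ofNat (Set.range fractionCode)
      (@decidableRangeEncode ℚ Rat.instEncodable) this n := fun n =>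
    congrArg Subtype.val ((@equivRangeEncode ℚ Rat.instEncodable).apply_symm_apply
      (@Nat.Subtype.ofNat (Set.range fractionCode)
        (@decidableRangeEncode ℚ Rat.instEncodable) this n))
  refine strictMono_nat_of_lt_succ fun n => ?_
  rw [hval, hval]
  exact @Nat.Subtype.lt_succ_self _ this (@decidableRangeEncode ℚ Rat.instEncodable) _

theorem computable_fractionCode : Computable fractionCode := by
  have hrange : ComputablePred (· ∈ Set.range fun n => fractionCode (ofNat ℚ n)) := by
    have hnum : Computable fun m : ℕ => (ofNat ℤ m.unpair.1).natAbs :=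
      computable_int_natAbs.comp
        ((Computable.ofNat ℤ).comp (Computable.fst.comp Computable.unpair))
    have hden : Computable fun m : ℕ => m.unpair.2 := Computable.snd.comp Computable.unpair
    refine (computablePred_and (computablePred_nat_lt (Computable.const 0) hden)
      (computablePred_coprime hnum hden)).of_eq fun m => ?_
    rw [← mem_range_fractionCode, ← (Denumerable.eqv ℚ).symm.surjective.range_comp]
    rfl
  exact ((computable_of_strictMono strictMono_fractionCode_ofNat hrange).comp
    Computable.encode).of_eq fun q => by rw [ofNat_encode]

theorem computable_rat_num : Computable Rat.num :=
  ((Computable.ofNat ℤ).comp (Computable.fst.comp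
    (Computable.unpair.comp computable_fractionCode))).of_eq fun q => by
      rw [fractionCode_eq_pair, Nat.unpair_pair, ofNat_encode]

theorem computable_rat_den : Computable Rat.den :=
  (Computable.snd.comp (Computable.unpair.comp computable_fractionCode)).of_eq fun q => by
    rw [fractionCode_eq_pair, Nat.unpair_pair]

/-- The positive part of the numerator of a rational number. -/
def numPos (q : ℚ) : ℕ := q.num.toNat

/-- The negative part of the numerator of a rational number. -/
def numNeg (q : ℚ) : ℕ := (-q.num).toNat

theorem computable_numPos : Computable numPos :=
  computable_int_toNat.comp computable_rat_num

theorem computable_numNeg : Computable numNeg := by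
  refine (computable_nat_sub (computable_int_natAbs.comp computable_rat_num)
    computable_numPos).of_eq fun q => ?_
  unfold numPos numNeg
  omega

theorem cast_den_pos (q : ℚ) : (0 : ℚ) < q.den := by exact_mod_cast q.pos

theorem numPos_sub_numNeg_div_den (q : ℚ) : ((numPos q : ℚ) - numNeg q) / q.den = q := by
  have hnum : (numPos q : ℤ) - numNeg q = q.num := by unfold numPos numNeg; omega
  have hcast : (numPos q : ℚ) - numNeg q = q.num := by exact_mod_cast hnum
  rw [hcast, Rat.num_div_den]

variable {α : Type*} [Primcodable α]

theorem computable_natCast_sub_natCast_div {p n d : α → ℕ} (hp : Computable p)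
    (hn : Computable n) (hd : Computable d) (hd0 : ∀ a, 0 < d a) :
    Computable fun a => ((p a : ℚ) - n a) / d a := by
  apply computable_of_rePred_graph
  apply ComputablePred.to_re
  have hq : Computable fun x : α × ℚ => x.2 := Computable.snd
  have hgraph : ComputablePred fun x : α × ℚ =>
      p x.1 * x.2.den + numNeg x.2 * d x.1 = numPos x.2 * d x.1 + n x.1 * x.2.den := by
    refine computablePred_eq
      (computable_nat_add (computable_nat_mul ?_ ?_) (computable_nat_mul ?_ ?_))
      (computable_nat_add (computable_nat_mul ?_ ?_) (computable_nat_mul ?_ ?_))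
    exacts [hp.comp Computable.fst, computable_rat_den.comp hq, computable_numNeg.comp hq,
      hd.comp Computable.fst, computable_numPos.comp hq, hd.comp Computable.fst,
      hn.comp Computable.fst, computable_rat_den.comp hq]
  refine hgraph.of_eq fun x => ?_
  have hdx : (0 : ℚ) < d x.1 := by exact_mod_cast hd0 x.1
  conv_rhs => rw [← numPos_sub_numNeg_div_den x.2]
  rw [div_eq_div_iff hdx.ne' (cast_den_pos _).ne', ← Nat.cast_inj (R := ℚ)]
  push_cast
  constructor <;> intro h <;> linarith

theorem computable_natCast : Computable fun n : ℕ => (n : ℚ) :=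
  (computable_natCast_sub_natCast_div Computable.id (Computable.const 0) (Computable.const 1)
    fun _ => one_pos).of_eq fun n => by simp

variable {f g : α → ℚ}

theorem computable_rat_sub (hf : Computable f) (hg : Computable g) :
    Computable fun a => f a - g a := by
  have hfp := computable_numPos.comp hf
  have hgp := computable_numPos.comp hg
  have hfn := computable_numNeg.comp hf
  have hgn := computable_numNeg.comp hg
  have hfd := computable_rat_den.comp hf
  have hgd := computable_rat_den.comp hg
  refine (computable_natCast_sub_natCast_div
    (computable_nat_add (computable_nat_mul hfp hgd) (computable_nat_mul hfd hgn))
    (computable_nat_add (computable_nat_mul hfn hgd) (computable_nat_mul hfd hgp))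
    (computable_nat_mul hfd hgd) fun a => Nat.mul_pos (f a).pos (g a).pos).of_eq fun a => ?_
  conv_rhs => rw [← numPos_sub_numNeg_div_den (f a), ← numPos_sub_numNeg_div_den (g a),
    div_sub_div _ _ (cast_den_pos _).ne' (cast_den_pos _).ne']
  push_cast
  ring

theorem computable_rat_add (hf : Computable f) (hg : Computable g) :
    Computable fun a => f a + g a :=
  (computable_rat_sub hf (computable_rat_sub (Computable.const 0) hg)).of_eq fun a => by ring

theorem computable_rat_mul (hf : Computable f) (hg : Computable g) :
    Computable fun a => f a * g a := by
  have hfp := computable_numPos.comp hf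
  have hgp := computable_numPos.comp hg
  have hfn := computable_numNeg.comp hf
  have hgn := computable_numNeg.comp hg
  refine (computable_natCast_sub_natCast_div
    (computable_nat_add (computable_nat_mul hfp hgp) (computable_nat_mul hfn hgn))
    (computable_nat_add (computable_nat_mul hfp hgn) (computable_nat_mul hfn hgp))
    (computable_nat_mul (computable_rat_den.comp hf) (computable_rat_den.comp hg))
    fun a => Nat.mul_pos (f a).pos (g a).pos).of_eq fun a => ?_
  conv_rhs => rw [← numPos_sub_numNeg_div_den (f a), ← numPos_sub_numNeg_div_den (g a),
    div_mul_div_comm]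
  push_cast
  ring

theorem computablePred_rat_le (hf : Computable f) (hg : Computable g) :
    ComputablePred fun a => f a ≤ g a := by
  have hnum := computable_rat_num.comp (computable_rat_sub hg hf)
  refine (computablePred_eq (computable_int_toNat.comp hnum)
    (computable_int_natAbs.comp hnum)).of_eq fun a => ?_
  rw [← sub_nonneg, ← Rat.num_nonneg]
  omega

theorem computable_rat_max (hf : Computable f) (hg : Computable g) :
    Computable fun a => max (f a) (g a) :=
  (computable_ite (computablePred_rat_le hf hg) hg hf).of_eq fun _ => (max_def _ _).symm

theorem computable_rat_min (hf : Computable f) (hg : Computable g) :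
    Computable fun a => min (f a) (g a) :=
  (computable_ite (computablePred_rat_le hf hg) hf hg).of_eq fun _ => (min_def _ _).symm

theorem computable_rat_pow (hf : Computable f) {n : α → ℕ} (hn : Computable n) :
    Computable fun a => f a ^ n a := by
  have hrec := Computable.nat_rec (f := n) (g := fun _ => (1 : ℚ))
    (h := fun a (x : ℕ × ℚ) => x.2 * f a) hn (Computable.const _)
    (computable_rat_mul (Computable.snd.comp Computable.snd) (hf.comp Computable.fst))
  refine hrec.of_eq fun a => ?_
  induction n a with
  | zero => simp
  | succ n ih => simp only [ih, pow_succ]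

end Rational

/-! ### Constraint sequences without computable solutions -/

/-- A sequence of constraints `X (pos k) = bit k`, at pairwise distinct positions, on an infinite
binary sequence `X : ℕ → Bool`. -/
structure ConstraintSeq where
  /-- The position constrained at stage `k`. -/
  pos : ℕ → ℕ
  /-- The value prescribed at stage `k`. -/
  bit : ℕ → Bool
  pos_injective : Function.Injective pos

/-- `C.Solves X` says that the binary sequence `X` satisfies every constraint of `C`. -/
def ConstraintSeq.Solves (C : ConstraintSeq) (X : ℕ → Bool) : Prop :=
  ∀ k, X (C.pos k) = C.bit k

/-- A constraint sequence given by computable functions. -/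
structure ConstraintSeq.IsComputable (C : ConstraintSeq) : Prop where
  pos : Computable C.pos
  bit : Computable C.bit

section Diagonal

open Encodable Denumerable
open Nat.Partrec (Code)

/-- The computation of the `n`th program on input `n`, run for `t` steps. -/
def diagonalRun (n t : ℕ) : Option ℕ := Code.evaln t (ofNat Code n) n

/-- The `n`th program halts on input `n` after `t + 1` steps, but not after `t` steps. -/
def diagonalHaltsAt (n t : ℕ) : Bool := (diagonalRun n (t + 1)).isSome && !(diagonalRun n t).isSome

theorem computable_diagonalRun : Computable₂ diagonalRun := by
  have hargs : Primrec fun x : ℕ × ℕ => ((x.2, ofNat Code x.1), x.1) :=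
    (Primrec.snd.pair ((Primrec.ofNat Code).comp Primrec.fst)).pair Primrec.fst
  exact (Code.primrec_evaln.comp hargs).to_comp

theorem computable_diagonalHaltsAt : Computable₂ diagonalHaltsAt :=
  Primrec.and.to_comp.comp
    (Primrec.option_isSome.to_comp.comp
      (computable_diagonalRun.comp Computable.fst (Computable.succ.comp Computable.snd)))
    (Primrec.not.to_comp.comp (Primrec.option_isSome.to_comp.comp computable_diagonalRun))

theorem diagonalHaltsAt_unique {n t t' : ℕ} (ht : diagonalHaltsAt n t = true)
    (ht' : diagonalHaltsAt n t' = true) : t = t' := by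
  wlog hlt : t < t' generalizing t t'
  · rcases Nat.lt_trichotomy t t' with h | h | h
    exacts [absurd h hlt, h, (this ht' ht h).symm]
  simp only [diagonalHaltsAt, Bool.and_eq_true, Bool.not_eq_true'] at ht ht'
  obtain ⟨x, hx⟩ := Option.isSome_iff_exists.1 ht.1
  have hrun : diagonalRun n t' = some x := Code.evaln_mono hlt hx
  rw [hrun] at ht'
  exact absurd ht'.2 (by simp)

theorem exists_diagonalHaltsAt {n : ℕ} (h : ∃ t, (diagonalRun n t).isSome = true) :
    ∃ t, diagonalHaltsAt n t = true := by
  classical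
  obtain ⟨t, ht⟩ : ∃ t, Nat.find h = t + 1 := Nat.exists_eq_succ_of_ne_zero fun h0 => by
    have hrun := Nat.find_spec h
    rw [h0] at hrun
    simp [diagonalRun, Code.evaln] at hrun
  refine ⟨t, ?_⟩
  rw [diagonalHaltsAt, ← ht, Nat.find_spec h]
  simpa using Nat.find_min h (m := t) (by omega)

/-- At stage `Nat.pair n t`, if the `n`th program is seen to halt on `n` then position `2 * n + 1`
is constrained to differ from the parity of its output; the even positions serve as distinct dummy
positions for all other stages. No computable sequence is a solution. -/
def diagonalConstraints : ConstraintSeq where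
  pos s := bif diagonalHaltsAt s.unpair.1 s.unpair.2 then 2 * s.unpair.1 + 1 else 2 * s
  bit s := bif diagonalHaltsAt s.unpair.1 s.unpair.2 then
    !((diagonalRun s.unpair.1 (s.unpair.2 + 1)).getD 0).bodd else false
  pos_injective s s' h := by
    cases hs : diagonalHaltsAt s.unpair.1 s.unpair.2 <;>
      cases hs' : diagonalHaltsAt s'.unpair.1 s'.unpair.2 <;>
      simp only [hs, hs', cond_true, cond_false] at h
    · omega
    · omega
    · omega
    · have hn : s.unpair.1 = s'.unpair.1 := by omega
      rw [← hn] at hs'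
      rw [← Nat.pair_unpair s, ← Nat.pair_unpair s', ← hn, diagonalHaltsAt_unique hs hs']

theorem computable_diagonalHaltsAt_unpair :
    Computable fun s : ℕ => diagonalHaltsAt s.unpair.1 s.unpair.2 :=
  computable_diagonalHaltsAt.comp (Computable.fst.comp Computable.unpair)
    (Computable.snd.comp Computable.unpair)

theorem isComputable_diagonalConstraints : diagonalConstraints.IsComputable where
  pos := Computable.cond computable_diagonalHaltsAt_unpair
    (Primrec.nat_double_succ.to_comp.comp (Computable.fst.comp Computable.unpair))
    Primrec.nat_double.to_comp
  bit := Computable.cond computable_diagonalHaltsAt_unpair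
    (Primrec.not.to_comp.comp (Computable.nat_bodd.comp (Computable.option_getD
      (computable_diagonalRun.comp (Computable.fst.comp Computable.unpair)
        (Computable.succ.comp (Computable.snd.comp Computable.unpair)))
      (Computable.const 0))))
    (Computable.const false)

theorem diagonalConstraints_not_solves {X : ℕ → Bool} (hX : Computable X) :
    ¬ diagonalConstraints.Solves X := by
  intro hsolves
  have hodd : Computable fun m => (X (2 * m + 1)).toNat :=
    (Computable.cond (hX.comp Primrec.nat_double_succ.to_comp) (Computable.const 1)
      (Computable.const 0)).of_eq fun m => by cases X (2 * m + 1) <;> rfl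
  obtain ⟨c, hc⟩ := Code.exists_code.1 (Partrec.nat_iff.1 hodd.partrec)
  have heval : (X (2 * encode c + 1)).toNat ∈ (ofNat Code (encode c)).eval (encode c) := by
    rw [ofNat_encode, hc]; exact Part.mem_some _
  obtain ⟨t, ht⟩ := exists_diagonalHaltsAt (n := encode c) <|
    (Code.evaln_complete.1 heval).imp fun _ h => Option.isSome_iff_exists.2 ⟨_, h⟩
  obtain ⟨v, hv⟩ := Option.isSome_iff_exists.1 (Bool.and_eq_true_iff.1 ht).1
  have hvX : v = (X (2 * encode c + 1)).toNat := Part.mem_unique (Code.evaln_sound hv) heval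
  have hstage := hsolves (Nat.pair (encode c) t)
  simp only [diagonalConstraints, Nat.unpair_pair, ht, hv, cond_true, Option.getD_some, hvX]
    at hstage
  cases hXc : X (2 * encode c + 1) <;> simp [hXc] at hstage

end Diagonal

/-! ### Cylinders of the Cantor set of expansions with base-four digits `1` and `3` -/

section Cylinders

variable (𝕜 : Type*) [Field 𝕜]

/-- The left endpoint of the cylinder of the first `n` bits of `X`. Bits `false` and `true` become
the base-four digits `1` and `3`, so that the cylinders of two sequences with different bits are
disjoint. The field is `ℚ` in computations and `ℝ` in the geometry. -/
def cylLeft (X : ℕ → Bool) : ℕ → 𝕜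
  | 0 => 0
  | n + 1 => cylLeft X n + (bif X n then 3 else 1) * (1 / 4) ^ (n + 1)

variable {𝕜}

theorem cylLeft_succ (X : ℕ → Bool) (n : ℕ) :
    cylLeft 𝕜 X (n + 1) = cylLeft 𝕜 X n + (bif X n then 3 else 1) * (1 / 4) ^ (n + 1) :=
  rfl

theorem cylLeft_congr {X Y : ℕ → Bool} {n : ℕ} (h : ∀ i < n, X i = Y i) :
    cylLeft 𝕜 X n = cylLeft 𝕜 Y n := by
  induction n with
  | zero => rfl
  | succ n ih =>
    rw [cylLeft_succ, cylLeft_succ, ih fun i hi => h i (hi.trans n.lt_succ_self),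
      h n n.lt_succ_self]

variable [LinearOrder 𝕜] [IsStrictOrderedRing 𝕜]

theorem quarter_pow_pos (n : ℕ) : (0 : 𝕜) < (1 / 4) ^ n := by positivity

theorem cylLeft_add_le_succ (X : ℕ → Bool) (n : ℕ) :
    cylLeft 𝕜 X n + (1 / 4) ^ (n + 1) ≤ cylLeft 𝕜 X (n + 1) := by
  have := quarter_pow_pos (𝕜 := 𝕜) (n + 1)
  rw [cylLeft_succ]
  cases X n <;> simp only [cond_true, cond_false] <;> linarith

theorem cylLeft_succ_add_le (X : ℕ → Bool) (n : ℕ) :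
    cylLeft 𝕜 X (n + 1) + (1 / 4) ^ (n + 1) ≤ cylLeft 𝕜 X n + (1 / 4) ^ n := by
  have := quarter_pow_pos (𝕜 := 𝕜) n
  rw [cylLeft_succ, pow_succ]
  cases X n <;> simp only [cond_true, cond_false] <;> linarith

theorem cylLeft_monotone (X : ℕ → Bool) : Monotone (cylLeft 𝕜 X) :=
  monotone_nat_of_le_succ fun n =>
    (le_add_of_nonneg_right (quarter_pow_pos _).le).trans (cylLeft_add_le_succ X n)

theorem cylLeft_add_antitone (X : ℕ → Bool) :
    Antitone fun n => cylLeft 𝕜 X n + (1 / 4) ^ n :=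
  antitone_nat_of_succ_le (cylLeft_succ_add_le X)

theorem cylLeft_nonneg (X : ℕ → Bool) (n : ℕ) : 0 ≤ cylLeft 𝕜 X n :=
  cylLeft_monotone X (Nat.zero_le n)

theorem cylLeft_add_le_one (X : ℕ → Bool) (n : ℕ) : cylLeft 𝕜 X n + (1 / 4) ^ n ≤ 1 := by
  simpa [cylLeft] using cylLeft_add_antitone (𝕜 := 𝕜) X (Nat.zero_le n)

theorem cylLeft_mono {X Y : ℕ → Bool} (h : ∀ i, X i = true → Y i = true) (n : ℕ) :
    cylLeft 𝕜 X n ≤ cylLeft 𝕜 Y n := by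
  induction n with
  | zero => exact le_rfl
  | succ n ih =>
    have := quarter_pow_pos (𝕜 := 𝕜) (n + 1)
    rw [cylLeft_succ, cylLeft_succ]
    cases hX : X n <;> cases hY : Y n <;> simp only [cond_true, cond_false]
    case true.false => simp [h n hX] at hY
    all_goals linarith

/-- The interval of reals whose base-four expansion starts with the digits coding the first `n`
bits of `X`. -/
def cylinder (X : ℕ → Bool) (n : ℕ) : Set ℝ :=
  Icc (cylLeft ℝ X n) (cylLeft ℝ X n + (1 / 4) ^ n)

theorem cylinder_antitone (X : ℕ → Bool) : Antitone (cylinder X) := fun _ _ h =>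
  Icc_subset_Icc (cylLeft_monotone X h) (cylLeft_add_antitone X h)

theorem cylinder_congr {X Y : ℕ → Bool} {n : ℕ} (h : ∀ i < n, X i = Y i) :
    cylinder X n = cylinder Y n := by
  rw [cylinder, cylinder, cylLeft_congr h]

theorem bit_eq_of_mem_cylinder {X Y : ℕ → Bool} {y : ℝ} {N n : ℕ} (hX : y ∈ cylinder X N)
    (hY : y ∈ cylinder Y N) (hn : n < N) : X n = Y n := by
  induction n using Nat.strong_induction_on with
  | _ n ih =>
    obtain ⟨hX₁, hX₂⟩ := cylinder_antitone X (Nat.succ_le_of_lt hn) hX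
    obtain ⟨hY₁, hY₂⟩ := cylinder_antitone Y (Nat.succ_le_of_lt hn) hY
    have hleft : cylLeft ℝ X n = cylLeft ℝ Y n :=
      cylLeft_congr fun i hi => ih i hi (hi.trans hn)
    have := quarter_pow_pos (𝕜 := ℝ) (n + 1)
    rw [Nat.succ_eq_add_one, cylLeft_succ, hleft] at hX₁ hX₂
    rw [Nat.succ_eq_add_one, cylLeft_succ] at hY₁ hY₂
    cases hx : X n <;> cases hy : Y n <;>
      simp only [hx, hy, cond_true, cond_false] at hX₁ hX₂ hY₁ hY₂ ⊢ <;> linarith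

theorem exists_testBit_eq (X : ℕ → Bool) (n : ℕ) :
    ∃ k < 2 ^ n, ∀ i < n, Nat.testBit k i = X i :=
  ⟨Nat.ofBits fun i : Fin n => X i, Nat.ofBits_lt_two_pow _, fun i hi =>
    Nat.testBit_ofBits_lt _ i hi⟩

theorem isClosed_setOf_exists_mem_cylinder (p : (ℕ → Bool) → Prop) (n : ℕ) :
    IsClosed {y | ∃ X, p X ∧ y ∈ cylinder X n} := by
  have hfin : (range fun X => cylinder X n).Finite := by
    refine ((Set.finite_lt_nat (2 ^ n)).image fun k => cylinder (Nat.testBit k) n).subset ?_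
    rintro _ ⟨X, rfl⟩
    obtain ⟨k, hk, hkX⟩ := exists_testBit_eq X n
    exact ⟨k, hk, cylinder_congr hkX⟩
  have hunion : {y | ∃ X, p X ∧ y ∈ cylinder X n} =
      ⋃ S ∈ (fun X => cylinder X n) '' {X | p X}, S := by
    ext y
    simp
  rw [hunion]
  refine Set.Finite.isClosed_biUnion (hfin.subset (image_subset_range _ _)) ?_
  rintro _ ⟨X, _, rfl⟩
  exact isClosed_Icc

end Cylinders

namespace ConstraintSeq

/-! ### The closed set of solutions of a constraint sequence -/

variable (C : ConstraintSeq)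

/-- The number of bits that stage `s` of the construction looks at. The increments are large enough
for `(1 / 4) ^ C.precision (s + 1)` to be small compared with `(1 / 2) ^ C.pos s`. -/
def precision : ℕ → ℕ
  | 0 => 0
  | s + 1 => precision s + C.pos s + 4

/-- The first `s` constraints hold for `X`. -/
def SolvesUpTo (s : ℕ) (X : ℕ → Bool) : Prop := ∀ k < s, X (C.pos k) = C.bit k

/-- The pointwise least binary sequence satisfying the first `s` constraints. -/
def leastSolution (s n : ℕ) : Bool := decide (∃ k < s, C.pos k = n ∧ C.bit k = true)

/-- The lower endpoint of the lowest cylinder that is compatible with the first `s` constraints. -/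
def bottom (𝕜 : Type*) [Field 𝕜] (s : ℕ) : 𝕜 := cylLeft 𝕜 (C.leastSolution s) (C.precision s)

/-- The union of the cylinders compatible with the first `s` constraints. -/
def heights (s : ℕ) : Set ℝ := {y | ∃ X, C.SolvesUpTo s X ∧ y ∈ cylinder X (C.precision s)}

/-- The copy in the Cantor set of the set of solutions of `C`. -/
def limitHeights : Set ℝ := ⋂ s, C.heights s

variable {C}

theorem precision_succ (s : ℕ) : C.precision (s + 1) = C.precision s + C.pos s + 4 := rfl

theorem precision_strictMono : StrictMono C.precision :=
  strictMono_nat_of_lt_succ fun s => by rw [precision_succ]; omega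

theorem le_precision (s : ℕ) : s ≤ C.precision s := precision_strictMono.le_apply

theorem pos_lt_precision {k s : ℕ} (h : k < s) : C.pos k < C.precision s :=
  calc C.pos k < C.precision (k + 1) := by rw [precision_succ]; omega
    _ ≤ C.precision s := precision_strictMono.monotone h

theorem SolvesUpTo.mono {s s' : ℕ} {X : ℕ → Bool} (hX : C.SolvesUpTo s' X) (h : s ≤ s') :
    C.SolvesUpTo s X :=
  fun k hk => hX k (hk.trans_le h)

theorem SolvesUpTo.congr {s : ℕ} {X Y : ℕ → Bool} (hX : C.SolvesUpTo s X)
    (h : ∀ n < C.precision s, X n = Y n) : C.SolvesUpTo s Y := fun k hk => by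
  rw [← h _ (pos_lt_precision hk), hX k hk]

theorem solvesUpTo_leastSolution (s : ℕ) : C.SolvesUpTo s (C.leastSolution s) := by
  intro k hk
  rw [leastSolution, Bool.eq_iff_iff, decide_eq_true_iff]
  constructor
  · rintro ⟨j, _, hj, hbit⟩
    rwa [← C.pos_injective hj]
  · exact fun hbit => ⟨k, hk, rfl, hbit⟩

theorem SolvesUpTo.leastSolution_le {s : ℕ} {X : ℕ → Bool} (hX : C.SolvesUpTo s X) (n : ℕ)
    (hn : C.leastSolution s n = true) : X n = true := by
  obtain ⟨k, hk, rfl, hbit⟩ := of_decide_eq_true hn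
  rw [hX k hk, hbit]

section Bottom

variable {𝕜 : Type*} [Field 𝕜] [LinearOrder 𝕜] [IsStrictOrderedRing 𝕜]

theorem bottom_nonneg (s : ℕ) : 0 ≤ C.bottom 𝕜 s := cylLeft_nonneg _ _

theorem bottom_add_le_succ (s : ℕ) :
    C.bottom 𝕜 s + (1 / 4) ^ (C.precision s + 1) ≤ C.bottom 𝕜 (s + 1) :=
  calc C.bottom 𝕜 s + (1 / 4) ^ (C.precision s + 1)
      ≤ cylLeft 𝕜 (C.leastSolution (s + 1)) (C.precision s) + (1 / 4) ^ (C.precision s + 1) := by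
        gcongr
        exact cylLeft_mono ((solvesUpTo_leastSolution _).mono s.le_succ).leastSolution_le _
    _ ≤ cylLeft 𝕜 (C.leastSolution (s + 1)) (C.precision s + 1) := cylLeft_add_le_succ _ _
    _ ≤ C.bottom 𝕜 (s + 1) := cylLeft_monotone _ (by rw [precision_succ]; omega)

theorem bottom_monotone : Monotone (C.bottom 𝕜) :=
  monotone_nat_of_le_succ fun s =>
    (le_add_of_nonneg_right (quarter_pow_pos _).le).trans (bottom_add_le_succ s)

end Bottom

theorem isClosed_heights (s : ℕ) : IsClosed (C.heights s) :=
  isClosed_setOf_exists_mem_cylinder _ _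

theorem heights_antitone : Antitone C.heights := by
  rintro s s' h y ⟨X, hX, hy⟩
  exact ⟨X, hX.mono h, cylinder_antitone X (precision_strictMono.monotone h) hy⟩

theorem heights_subset (s : ℕ) : C.heights s ⊆ Icc (C.bottom ℝ s) 1 := by
  rintro y ⟨X, hX, hy⟩
  exact ⟨(cylLeft_mono hX.leastSolution_le _).trans hy.1, hy.2.trans (cylLeft_add_le_one _ _)⟩

theorem Icc_bottom_subset_heights (s : ℕ) :
    Icc (C.bottom ℝ s) (C.bottom ℝ s + (1 / 4) ^ C.precision s) ⊆ C.heights s :=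
  fun _ hy => ⟨C.leastSolution s, solvesUpTo_leastSolution s, hy⟩

theorem isCompact_heights (s : ℕ) : IsCompact (C.heights s) :=
  isCompact_Icc.of_isClosed_subset (isClosed_heights s) (heights_subset s)

theorem limitHeights_subset_heights (s : ℕ) : C.limitHeights ⊆ C.heights s := iInter_subset _ s

theorem isCompact_limitHeights : IsCompact C.limitHeights :=
  (isCompact_heights 0).of_isClosed_subset (isClosed_iInter isClosed_heights)
    (limitHeights_subset_heights 0)

theorem nonempty_limitHeights : C.limitHeights.Nonempty := by
  refine IsCompact.nonempty_iInter_of_sequence_nonempty_isCompact_isClosed C.heights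
    (fun s => heights_antitone s.le_succ) (fun s => ?_) (isCompact_heights 0) isClosed_heights
  exact ⟨_, Icc_bottom_subset_heights s
    (left_mem_Icc.2 (le_add_of_nonneg_right (quarter_pow_pos _).le))⟩

theorem exists_solves_of_mem_limitHeights {y : ℝ} (hy : y ∈ C.limitHeights) :
    ∃ X, C.Solves X ∧ ∀ s, y ∈ cylinder X (C.precision s) := by
  choose X hsol hcyl using mem_iInter.1 hy
  have hagree : ∀ s s' n, n < C.precision s → n < C.precision s' → X s n = X s' n := by
    intro s s' n hn hn'
    rcases le_total s s' with h | h
    · exact bit_eq_of_mem_cylinder (hcyl s)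
        (cylinder_antitone _ (precision_strictMono.monotone h) (hcyl s')) hn
    · exact bit_eq_of_mem_cylinder
        (cylinder_antitone _ (precision_strictMono.monotone h) (hcyl s)) (hcyl s') hn'
  have hlt : ∀ n, n < C.precision (n + 1) := fun n => le_precision (n + 1)
  refine ⟨fun n => X (n + 1) n, fun k => ?_, fun s => ?_⟩
  · rw [← hsol (k + 1) k k.lt_succ_self]
    exact hagree _ _ _ (hlt _) (pos_lt_precision k.lt_succ_self)
  · rw [cylinder_congr (Y := X s) fun i hi => hagree _ _ _ (hlt i) hi]
    exact hcyl s

end ConstraintSeq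

/-! ### Hooks -/

section Breakpoint

variable (𝕜 : Type*) [Field 𝕜]

/-- The abscissa `1 - 2⁻ᵐ`. A stage acting on bit `m` moves only points to the right of it. -/
def breakpoint (m : ℕ) : 𝕜 := 1 - (1 / 2) ^ m

variable {𝕜} [LinearOrder 𝕜] [IsStrictOrderedRing 𝕜]

theorem breakpoint_strictMono : StrictMono (breakpoint 𝕜) := fun _ _ h =>
  sub_lt_sub_left (pow_lt_pow_right_of_lt_one₀ (by norm_num) (by norm_num) h) 1

theorem breakpoint_nonneg (m : ℕ) : 0 ≤ breakpoint 𝕜 m :=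
  sub_nonneg.2 (pow_le_one₀ (by norm_num) (by norm_num))

theorem breakpoint_lt_one (m : ℕ) : breakpoint 𝕜 m < 1 := sub_lt_self 1 (by positivity)

theorem exists_lt_breakpoint [Archimedean 𝕜] {t : 𝕜} (h : t < 1) : ∃ m, t < breakpoint 𝕜 m := by
  obtain ⟨m, hm⟩ := exists_pow_lt_of_lt_one (sub_pos.2 h) (y := (1 : 𝕜) / 2) (by norm_num)
  exact ⟨m, lt_sub_comm.1 hm⟩

end Breakpoint

section Clamp

variable {𝕜 : Type*} [Field 𝕜] [LinearOrder 𝕜] {u v : 𝕜}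

/-- The nearest point of the unit interval. -/
def clamp (u : 𝕜) : 𝕜 := max 0 (min u 1)

theorem clamp_nonneg (u : 𝕜) : 0 ≤ clamp u := le_max_left _ _

theorem clamp_mono (h : u ≤ v) : clamp u ≤ clamp v := max_le_max_left _ (min_le_min_right _ h)

theorem clamp_of_nonpos (h : u ≤ 0) : clamp u = 0 := max_eq_left ((min_le_left _ _).trans h)

theorem clamp_of_mem_Icc (h : u ∈ Icc 0 1) : clamp u = u := by
  rw [clamp, min_eq_left h.2, max_eq_right h.1]

variable [IsStrictOrderedRing 𝕜]

theorem clamp_le_one (u : 𝕜) : clamp u ≤ 1 := max_le zero_le_one (min_le_right _ _)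

theorem clamp_of_one_le (h : 1 ≤ u) : clamp u = 1 := by
  rw [clamp, min_eq_right h, max_eq_right zero_le_one]

theorem clamp_lt_clamp (h : u < v) (hv : 0 < v) (hu : u < 1) : clamp u < clamp v := by
  refine lt_max_of_lt_right (max_lt (lt_min hv one_pos) ?_)
  exact lt_min (min_lt_of_left_lt h) (min_lt_of_left_lt hu)

theorem abs_clamp_sub_clamp_le (u v : 𝕜) : |clamp u - clamp v| ≤ |u - v| := by
  have hmin : |min u 1 - min v 1| ≤ |u - v| := by
    simpa using abs_min_sub_min_le_max u 1 v 1
  refine (abs_max_sub_max_le_max _ _ _ _).trans (max_le ?_ hmin)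
  simp

theorem abs_clamp_mul_sub_clamp_mul_le (u v a b : 𝕜) :
    |clamp u * a - clamp v * b| ≤ |u - v| * |a| + |a - b| :=
  calc |clamp u * a - clamp v * b| = |(clamp u - clamp v) * a + clamp v * (a - b)| := by ring_nf
    _ ≤ |clamp u - clamp v| * |a| + clamp v * |a - b| := by
        refine (abs_add_le _ _).trans_eq ?_
        rw [abs_mul, abs_mul, abs_of_nonneg (clamp_nonneg v)]
    _ ≤ |u - v| * |a| + 1 * |a - b| :=
        add_le_add (mul_le_mul_of_nonneg_right (abs_clamp_sub_clamp_le u v) (abs_nonneg a))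
          (mul_le_mul_of_nonneg_right (clamp_le_one v) (abs_nonneg _))
    _ = |u - v| * |a| + |a - b| := by rw [one_mul]

end Clamp

/-- The parameters of a map of the plane that bends the part of each horizontal segment
`[0, 1] × {y}` to the right of `breakpoint 𝕜 exponent` into a hook: the segment runs on to the right
up to distance `gap * (1 - y)` from the line `x = 1`, down to height `floor + slope * (1 - y)`, and
then back to the left. -/
structure Hook (𝕜 : Type*) where
  exponent : ℕ
  floor : 𝕜
  slope : 𝕜
  gap : 𝕜

namespace Hook

section Formulas

variable {𝕜 : Type*} [Field 𝕜] (H : Hook 𝕜)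

/-- The rescaling of time for which the three legs of the hook are run through during `[0, 1]`,
`[1, 2]` and `[2, 3]`; time `3` is reached at `breakpoint 𝕜 (H.exponent + 1)`. -/
def phase (t : 𝕜) : 𝕜 := 6 * 2 ^ H.exponent * (t - breakpoint 𝕜 H.exponent)

/-- The abscissa of the downward leg of the hook made of the segment at height `y`. -/
def corner (y : 𝕜) : 𝕜 := 1 - H.gap * (1 - y)

/-- The height of the leftward leg of the hook made of the segment at height `y`. -/
def level (y : 𝕜) : 𝕜 := H.floor + H.slope * (1 - y)

/-- The abscissa at which the leftward legs slow down from full speed to speed `H.slope`. -/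
def turn : 𝕜 := (breakpoint 𝕜 H.exponent + breakpoint 𝕜 (H.exponent + 1)) / 2

variable {H} in
theorem phase_breakpoint : H.phase (breakpoint 𝕜 H.exponent) = 0 := by simp [phase]

variable [LinearOrder 𝕜]

/-- The map that bends horizontal segments into hooks. -/
def map (p : 𝕜 × 𝕜) : 𝕜 × 𝕜 :=
  (min p.1 (breakpoint 𝕜 H.exponent)
      + clamp (H.phase p.1) * (H.corner p.2 - breakpoint 𝕜 H.exponent)
      - clamp (H.phase p.1 - 2) * (H.corner p.2 - H.turn)
      - H.slope * max (p.1 - breakpoint 𝕜 (H.exponent + 1)) 0,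
    p.2 + clamp (H.phase p.1 - 1) * (H.level p.2 - p.2))

/-- The segments on which `H.map` is considered lie above all leftward legs. -/
def domain : Set (𝕜 × 𝕜) := Icc 0 1 ×ˢ Icc (H.floor + 2 * H.slope) 1

/-- The conditions under which `H.map` is injective on `H.domain`. -/
structure IsAdmissible : Prop where
  floor_nonneg : 0 ≤ H.floor
  slope_pos : 0 < H.slope
  slope_le : H.slope ≤ 1 / 16
  gap_pos : 0 < H.gap
  gap_le : H.gap ≤ (1 / 2) ^ H.exponent / 16

end Formulas

section Geometry

variable {𝕜 : Type*} [Field 𝕜] [LinearOrder 𝕜] [IsStrictOrderedRing 𝕜] {H : Hook 𝕜}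

theorem phase_strictMono : StrictMono H.phase := fun _ _ h =>
  mul_lt_mul_of_pos_left (sub_lt_sub_right h _) (by positivity)

theorem phase_breakpoint_succ : H.phase (breakpoint 𝕜 (H.exponent + 1)) = 3 := by
  have h : (2 : 𝕜) ^ H.exponent * (1 / 2) ^ H.exponent = 1 := by rw [← mul_pow]; norm_num
  rw [phase, breakpoint, breakpoint, pow_succ]
  linear_combination 3 * h

theorem phase_nonpos_iff {t : 𝕜} : H.phase t ≤ 0 ↔ t ≤ breakpoint 𝕜 H.exponent := by
  rw [← phase_breakpoint (H := H), phase_strictMono.le_iff_le]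

theorem phase_le_three_iff {t : 𝕜} : H.phase t ≤ 3 ↔ t ≤ breakpoint 𝕜 (H.exponent + 1) := by
  rw [← phase_breakpoint_succ (H := H), phase_strictMono.le_iff_le]

theorem three_le_phase_iff {t : 𝕜} : 3 ≤ H.phase t ↔ breakpoint 𝕜 (H.exponent + 1) ≤ t := by
  rw [← phase_breakpoint_succ (H := H), phase_strictMono.le_iff_le]

theorem breakpoint_le_of_phase_nonneg {t : 𝕜} (h : 0 ≤ H.phase t) :
    breakpoint 𝕜 H.exponent ≤ t := by
  rwa [← phase_strictMono.le_iff_le (f := H.phase), phase_breakpoint]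

theorem map_of_phase_le_one {p : 𝕜 × 𝕜} (h : H.phase p.1 ≤ 1) :
    H.map p = (min p.1 (breakpoint 𝕜 H.exponent)
      + clamp (H.phase p.1) * (H.corner p.2 - breakpoint 𝕜 H.exponent), p.2) := by
  have hp : p.1 ≤ breakpoint 𝕜 (H.exponent + 1) := phase_le_three_iff.1 (by linarith)
  rw [map, clamp_of_nonpos (u := H.phase p.1 - 1) (by linarith),
    clamp_of_nonpos (u := H.phase p.1 - 2) (by linarith), max_eq_right (by linarith)]
  simp only [zero_mul, mul_zero, sub_zero, add_zero]

theorem map_of_phase_mem_Icc {p : 𝕜 × 𝕜} (h : H.phase p.1 ∈ Icc 1 2) :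
    H.map p = (H.corner p.2, p.2 + (H.phase p.1 - 1) * (H.level p.2 - p.2)) := by
  obtain ⟨h₁, h₂⟩ := h
  have hp : p.1 ≤ breakpoint 𝕜 (H.exponent + 1) := phase_le_three_iff.1 (by linarith)
  rw [map, clamp_of_one_le (u := H.phase p.1) h₁,
    clamp_of_mem_Icc (u := H.phase p.1 - 1) ⟨by linarith, by linarith⟩,
    clamp_of_nonpos (u := H.phase p.1 - 2) (by linarith), max_eq_right (by linarith),
    min_eq_right (breakpoint_le_of_phase_nonneg (by linarith))]
  ext <;> simp

theorem map_of_two_le_phase {p : 𝕜 × 𝕜} (h : 2 ≤ H.phase p.1) :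
    H.map p = (H.corner p.2 - clamp (H.phase p.1 - 2) * (H.corner p.2 - H.turn)
      - H.slope * max (p.1 - breakpoint 𝕜 (H.exponent + 1)) 0, H.level p.2) := by
  rw [map, clamp_of_one_le (u := H.phase p.1) (by linarith),
    clamp_of_one_le (u := H.phase p.1 - 1) (by linarith),
    min_eq_right (breakpoint_le_of_phase_nonneg (by linarith))]
  simp only [one_mul, add_sub_cancel]

theorem map_of_le_breakpoint {p : 𝕜 × 𝕜} (h : p.1 ≤ breakpoint 𝕜 H.exponent) : H.map p = p := by
  have hp : H.phase p.1 ≤ 0 := phase_nonpos_iff.2 h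
  rw [map_of_phase_le_one (hp.trans zero_le_one), clamp_of_nonpos hp, min_eq_left h, zero_mul,
    add_zero]

theorem map_of_breakpoint_succ_le {p : 𝕜 × 𝕜} (h : breakpoint 𝕜 (H.exponent + 1) ≤ p.1) :
    H.map p = (H.turn - H.slope * (p.1 - breakpoint 𝕜 (H.exponent + 1)), H.level p.2) := by
  have hp : 3 ≤ H.phase p.1 := three_le_phase_iff.2 h
  rw [map_of_two_le_phase (by linarith), clamp_of_one_le (by linarith), max_eq_left (by linarith),
    one_mul, sub_sub_cancel]

theorem breakpoint_lt_turn : breakpoint 𝕜 H.exponent < H.turn := by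
  rw [turn]
  linarith [breakpoint_strictMono (𝕜 := 𝕜) H.exponent.lt_succ_self]

theorem turn_eq : H.turn = 1 - 3 / 4 * (1 / 2) ^ H.exponent := by
  rw [turn, breakpoint, breakpoint, pow_succ]
  ring

namespace IsAdmissible

variable {p q : 𝕜 × 𝕜}

theorem snd_nonneg (hH : H.IsAdmissible) (hp : p ∈ H.domain) : 0 ≤ p.2 := by
  linarith [hp.2.1, hH.floor_nonneg, hH.slope_pos]

theorem corner_mem_Icc (hH : H.IsAdmissible) (hp : p ∈ H.domain) :
    H.corner p.2 ∈ Icc (1 - H.gap) 1 := by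
  have hy : 0 ≤ p.2 := hH.snd_nonneg hp
  have hnonneg : 0 ≤ H.gap * (1 - p.2) := mul_nonneg hH.gap_pos.le (sub_nonneg.2 hp.2.2)
  have hle : H.gap * (1 - p.2) ≤ H.gap := mul_le_of_le_one_right hH.gap_pos.le (by linarith)
  constructor <;> rw [corner] <;> linarith

theorem level_mem_Icc (hH : H.IsAdmissible) (hp : p ∈ H.domain) :
    H.level p.2 ∈ Icc H.floor (H.floor + H.slope) := by
  have hy : 0 ≤ p.2 := hH.snd_nonneg hp
  have hnonneg : 0 ≤ H.slope * (1 - p.2) := mul_nonneg hH.slope_pos.le (sub_nonneg.2 hp.2.2)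
  have hle : H.slope * (1 - p.2) ≤ H.slope := mul_le_of_le_one_right hH.slope_pos.le (by linarith)
  constructor <;> rw [level] <;> linarith

theorem level_lt_snd (hH : H.IsAdmissible) (hp : p ∈ H.domain) (hq : q ∈ H.domain) :
    H.level p.2 < q.2 := by
  linarith [(hH.level_mem_Icc hp).2, hq.2.1, hH.slope_pos]

theorem turn_lt_corner (hH : H.IsAdmissible) (hp : p ∈ H.domain) : H.turn < H.corner p.2 := by
  have hκ : (0 : 𝕜) < (1 / 2) ^ H.exponent := by positivity
  linarith [(hH.corner_mem_Icc hp).1, hH.gap_le, turn_eq (H := H)]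

theorem breakpoint_lt_corner (hH : H.IsAdmissible) (hp : p ∈ H.domain) :
    breakpoint 𝕜 H.exponent < H.corner p.2 :=
  breakpoint_lt_turn.trans (hH.turn_lt_corner hp)

theorem slope_mul_max_mem_Ico (hH : H.IsAdmissible) (hp : p ∈ H.domain) :
    H.slope * max (p.1 - breakpoint 𝕜 (H.exponent + 1)) 0 ∈
      Ico 0 (H.turn - breakpoint 𝕜 H.exponent) := by
  have hκ : (0 : 𝕜) < (1 / 2) ^ H.exponent := by positivity
  have hmax : max (p.1 - breakpoint 𝕜 (H.exponent + 1)) 0 ≤ (1 / 2) ^ H.exponent / 2 := by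
    refine max_le ?_ (by linarith)
    rw [breakpoint, pow_succ]
    linarith [hp.1.2]
  refine ⟨mul_nonneg hH.slope_pos.le (le_max_right _ _), ?_⟩
  calc H.slope * max (p.1 - breakpoint 𝕜 (H.exponent + 1)) 0
      ≤ 1 / 16 * ((1 / 2) ^ H.exponent / 2) :=
        mul_le_mul hH.slope_le hmax (le_max_right _ _) (by norm_num)
    _ < H.turn - breakpoint 𝕜 H.exponent := by
        rw [turn_eq, breakpoint]
        linarith

theorem map_fst_mem_of_phase_le_one (hH : H.IsAdmissible) (hp : p ∈ H.domain)
    (h : H.phase p.1 ≤ 1) :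
    (H.map p).1 ∈ Icc (min p.1 (breakpoint 𝕜 H.exponent)) (H.corner p.2) := by
  have hpos : 0 < H.corner p.2 - breakpoint 𝕜 H.exponent :=
    sub_pos.2 (hH.breakpoint_lt_corner hp)
  rw [map_of_phase_le_one h]
  constructor
  · exact le_add_of_nonneg_right (mul_nonneg (clamp_nonneg _) hpos.le)
  · have hle := mul_le_of_le_one_left hpos.le (clamp_le_one (H.phase p.1))
    linarith [min_le_right p.1 (breakpoint 𝕜 H.exponent)]

theorem map_fst_mem_of_two_le_phase (hH : H.IsAdmissible) (hp : p ∈ H.domain)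
    (h : 2 ≤ H.phase p.1) :
    (H.map p).1 ∈ Ioc (breakpoint 𝕜 H.exponent) (H.corner p.2) := by
  have hpos : 0 < H.corner p.2 - H.turn := sub_pos.2 (hH.turn_lt_corner hp)
  have hnonneg := mul_nonneg (clamp_nonneg (H.phase p.1 - 2)) hpos.le
  have hle := mul_le_of_le_one_left hpos.le (clamp_le_one (H.phase p.1 - 2))
  obtain ⟨hslow, hslow'⟩ := hH.slope_mul_max_mem_Ico hp
  rw [map_of_two_le_phase h]
  constructor <;> linarith

theorem map_snd_mem_of_phase_mem_Icc (hH : H.IsAdmissible) (hp : p ∈ H.domain)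
    (h : H.phase p.1 ∈ Icc 1 2) : (H.map p).2 ∈ Icc (H.level p.2) p.2 := by
  have hpos : 0 < p.2 - H.level p.2 := sub_pos.2 (hH.level_lt_snd hp hp)
  have hnonneg := mul_nonneg (sub_nonneg.2 h.1) hpos.le
  have hle := mul_le_of_le_one_left hpos.le (by linarith [h.2] : H.phase p.1 - 1 ≤ 1)
  rw [map_of_phase_mem_Icc h]
  constructor <;> linarith

theorem map_trichotomy (hH : H.IsAdmissible) (hp : p ∈ H.domain) :
    ((H.map p).2 = p.2 ∧
      (H.map p).1 ∈ Icc (min p.1 (breakpoint 𝕜 H.exponent)) (H.corner p.2)) ∨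
    ((H.map p).1 = H.corner p.2 ∧ (H.map p).2 ∈ Icc (H.level p.2) p.2) ∨
    ((H.map p).2 = H.level p.2 ∧
      (H.map p).1 ∈ Ioc (breakpoint 𝕜 H.exponent) (H.corner p.2)) := by
  rcases le_total (H.phase p.1) 1 with h | h
  · exact .inl ⟨by rw [map_of_phase_le_one h], hH.map_fst_mem_of_phase_le_one hp h⟩
  rcases le_total (H.phase p.1) 2 with h' | h'
  · exact .inr (.inl ⟨by rw [map_of_phase_mem_Icc ⟨h, h'⟩],
      hH.map_snd_mem_of_phase_mem_Icc hp ⟨h, h'⟩⟩)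
  · exact .inr (.inr ⟨by rw [map_of_two_le_phase h'], hH.map_fst_mem_of_two_le_phase hp h'⟩)

theorem min_le_map_fst (hH : H.IsAdmissible) (hp : p ∈ H.domain) :
    min p.1 (breakpoint 𝕜 H.exponent) ≤ (H.map p).1 := by
  rcases hH.map_trichotomy hp with ⟨_, h, _⟩ | ⟨h, _⟩ | ⟨_, h, _⟩
  · exact h
  · exact (min_le_right _ _).trans (h ▸ (hH.breakpoint_lt_corner hp).le)
  · exact (min_le_right _ _).trans h.le

theorem map_mem (hH : H.IsAdmissible) (hp : p ∈ H.domain) :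
    H.map p ∈ Icc (0 : 𝕜) 1 ×ˢ Icc H.floor 1 := by
  have hmin : 0 ≤ min p.1 (breakpoint 𝕜 H.exponent) := le_min hp.1.1 (breakpoint_nonneg _)
  obtain ⟨_, hcorner⟩ := hH.corner_mem_Icc hp
  obtain ⟨hlevel, _⟩ := hH.level_mem_Icc hp
  have hlt := hH.level_lt_snd hp hp
  refine ⟨⟨hmin.trans (hH.min_le_map_fst hp), ?_⟩, ?_⟩
  · rcases hH.map_trichotomy hp with ⟨_, _, h⟩ | ⟨h, _⟩ | ⟨_, _, h⟩ <;> linarith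
  · rcases hH.map_trichotomy hp with ⟨h, _⟩ | ⟨_, h, h'⟩ | ⟨h, _⟩ <;>
      constructor <;> linarith [hp.2.2]

theorem map_ne_map_of_snd_lt (hH : H.IsAdmissible) (hp : p ∈ H.domain) (hq : q ∈ H.domain)
    (hlt : p.2 < q.2) : H.map p ≠ H.map q := by
  intro heq
  have hcorner : H.corner p.2 < H.corner q.2 :=
    sub_lt_sub_left (mul_lt_mul_of_pos_left (by linarith) hH.gap_pos) 1
  have hlevel : H.level q.2 < H.level p.2 :=
    add_lt_add_right (mul_lt_mul_of_pos_left (by linarith) hH.slope_pos) _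
  have hpq := hH.level_lt_snd hp hq
  have hqp := hH.level_lt_snd hq hp
  have hp' := hH.map_trichotomy hp
  rw [heq] at hp'
  rcases hp' with ⟨_, _, _⟩ | ⟨_, _, _⟩ | ⟨_, _, _⟩ <;>
    rcases hH.map_trichotomy hq with ⟨_, _, _⟩ | ⟨_, _, _⟩ | ⟨_, _, _⟩ <;> linarith

theorem map_fst_lt_of_phase_le_one (hH : H.IsAdmissible) {t t' y : 𝕜} (hp : (t, y) ∈ H.domain)
    (hlt : t < t') (h : H.phase t' ≤ 1) : (H.map (t, y)).1 < (H.map (t', y)).1 := by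
  have hphase : H.phase t < H.phase t' := phase_strictMono hlt
  have hpos : 0 < H.corner y - breakpoint 𝕜 H.exponent := sub_pos.2 (hH.breakpoint_lt_corner hp)
  rw [map_of_phase_le_one (p := (t, y)) (hphase.le.trans h), map_of_phase_le_one (p := (t', y)) h]
  dsimp only
  rcases le_or_gt t' (breakpoint 𝕜 H.exponent) with h0 | h0
  · rw [min_eq_left h0, min_eq_left (hlt.le.trans h0)]
    exact add_lt_add_of_lt_of_le hlt (mul_le_mul_of_nonneg_right (clamp_mono hphase.le) hpos.le)
  · refine add_lt_add_of_le_of_lt (min_le_min_right _ hlt.le) (mul_lt_mul_of_pos_right ?_ hpos)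
    exact clamp_lt_clamp hphase (not_le.1 fun h' => h0.not_ge (phase_nonpos_iff.1 h'))
      (hphase.trans_le h)

theorem map_fst_lt_of_two_le_phase (hH : H.IsAdmissible) {t t' y : 𝕜} (hp : (t, y) ∈ H.domain)
    (hlt : t < t') (h : 2 ≤ H.phase t) : (H.map (t', y)).1 < (H.map (t, y)).1 := by
  have hphase : H.phase t < H.phase t' := phase_strictMono hlt
  have hpos : 0 < H.corner y - H.turn := sub_pos.2 (hH.turn_lt_corner hp)
  rw [map_of_two_le_phase (p := (t, y)) h, map_of_two_le_phase (p := (t', y)) (h.trans hphase.le)]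
  dsimp only
  rcases le_or_gt (breakpoint 𝕜 (H.exponent + 1)) t with h3 | h3
  · rw [max_eq_left (sub_nonneg.2 h3), max_eq_left (sub_nonneg.2 (h3.trans hlt.le))]
    have hclamp := mul_le_mul_of_nonneg_right
      (clamp_mono (sub_le_sub_right hphase.le (2 : 𝕜))) hpos.le
    have hslow := mul_lt_mul_of_pos_left (sub_lt_sub_right hlt (breakpoint 𝕜 (H.exponent + 1)))
      hH.slope_pos
    linarith
  · have hphase3 : H.phase t < 3 := not_le.1 fun h' => h3.not_ge (three_le_phase_iff.1 h')
    have hclamp := mul_lt_mul_of_pos_right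
      (clamp_lt_clamp (sub_lt_sub_right hphase (2 : 𝕜)) (by linarith) (by linarith)) hpos
    have hslow := mul_le_mul_of_nonneg_left
      (max_le_max_right 0 (sub_le_sub_right hlt.le (breakpoint 𝕜 (H.exponent + 1))))
      hH.slope_pos.le
    linarith

/-- Two points of a segment with images at the same height lie both before or both after the
downward leg. -/
theorem map_ne_map_of_fst_lt (hH : H.IsAdmissible) {t t' y : 𝕜} (hp : (t, y) ∈ H.domain)
    (hlt : t < t') : H.map (t, y) ≠ H.map (t', y) := by
  intro heq
  have hphase : H.phase t < H.phase t' := phase_strictMono hlt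
  rcases le_or_gt (H.phase t') 1 with h | h
  · exact (hH.map_fst_lt_of_phase_le_one hp hlt h).ne (congrArg Prod.fst heq)
  rcases le_or_gt 2 (H.phase t) with h' | h'
  · exact (hH.map_fst_lt_of_two_le_phase hp hlt h').ne' (congrArg Prod.fst heq)
  · have hclamp : clamp (H.phase t - 1) < clamp (H.phase t' - 1) :=
      clamp_lt_clamp (by linarith) (by linarith) (by linarith)
    have hneg : H.level y - y < 0 := sub_neg.2 (hH.level_lt_snd hp hp)
    have hsnd := congrArg Prod.snd heq
    simp only [map, add_right_inj] at hsnd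
    exact (mul_lt_mul_of_neg_right hclamp hneg).ne' hsnd

theorem injOn_map (hH : H.IsAdmissible) : InjOn H.map H.domain := by
  rintro ⟨t, y⟩ hp ⟨t', y'⟩ hq heq
  rcases lt_trichotomy y y' with hy | rfl | hy
  · exact absurd heq (hH.map_ne_map_of_snd_lt hp hq hy)
  · rcases lt_trichotomy t t' with ht | rfl | ht
    · exact absurd heq (hH.map_ne_map_of_fst_lt hp ht)
    · rfl
    · exact absurd heq.symm (hH.map_ne_map_of_fst_lt hq ht)
  · exact absurd heq.symm (hH.map_ne_map_of_snd_lt hq hp hy)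

theorem abs_corner_sub_corner (hH : H.IsAdmissible) (y y' : 𝕜) :
    |H.corner y - H.corner y'| = H.gap * |y - y'| := by
  rw [← abs_of_pos hH.gap_pos, ← abs_mul, corner, corner]
  ring_nf

theorem abs_level_sub_level (hH : H.IsAdmissible) (y y' : 𝕜) :
    |H.level y - H.level y'| = H.slope * |y - y'| := by
  rw [← abs_of_pos hH.slope_pos, ← abs_mul, level, level, ← abs_neg]
  ring_nf

theorem abs_clamp_phase_mul_sub_le (a b c : 𝕜) {t t' : 𝕜} (ha : |a| ≤ 1) :
    |clamp (H.phase t - c) * a - clamp (H.phase t' - c) * b| ≤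
      6 * 2 ^ H.exponent * |t - t'| + |a - b| := by
  have hphase : |H.phase t - c - (H.phase t' - c)| = 6 * 2 ^ H.exponent * |t - t'| := by
    rw [← abs_of_pos (show (0 : 𝕜) < 6 * 2 ^ H.exponent by positivity), ← abs_mul, phase, phase]
    ring_nf
  refine (abs_clamp_mul_sub_clamp_mul_le _ _ a b).trans (add_le_add_left ?_ _)
  rw [hphase]
  exact mul_le_of_le_one_right (by positivity) ha

theorem gap_le_one_div (hH : H.IsAdmissible) : H.gap ≤ 1 / 16 := by
  have hκ : ((1 : 𝕜) / 2) ^ H.exponent ≤ 1 := pow_le_one₀ (by norm_num) (by norm_num)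
  linarith [hH.gap_le]

theorem abs_map_fst_sub_le (hH : H.IsAdmissible) (hp : p ∈ H.domain) {d : 𝕜}
    (h₁ : |p.1 - q.1| ≤ d) (h₂ : |p.2 - q.2| ≤ d) :
    |(H.map p).1 - (H.map q).1| ≤ 16 * 2 ^ H.exponent * d := by
  have hd : 0 ≤ d := (abs_nonneg _).trans h₁
  have hK : d ≤ 2 ^ H.exponent * d := le_mul_of_one_le_left hd (one_le_pow₀ one_le_two)
  have hKt : 2 ^ H.exponent * |p.1 - q.1| ≤ 2 ^ H.exponent * d := by gcongr
  have hgap : H.gap * |p.2 - q.2| ≤ 1 / 16 * d :=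
    mul_le_mul hH.gap_le_one_div h₂ (abs_nonneg _) (by norm_num)
  have hcorner := hH.abs_corner_sub_corner p.2 q.2
  have hcorner1 := (hH.corner_mem_Icc hp).2
  have hright := abs_clamp_phase_mul_sub_le (H := H) (t := p.1) (t' := q.1)
    (H.corner p.2 - breakpoint 𝕜 H.exponent) (H.corner q.2 - breakpoint 𝕜 H.exponent) 0
    (abs_le.2 ⟨by linarith [hH.breakpoint_lt_corner hp],
      by linarith [breakpoint_nonneg (𝕜 := 𝕜) H.exponent]⟩)
  have hleft := abs_clamp_phase_mul_sub_le (H := H) (t := p.1) (t' := q.1)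
    (H.corner p.2 - H.turn) (H.corner q.2 - H.turn) 2
    (abs_le.2 ⟨by linarith [hH.turn_lt_corner hp],
      by linarith [breakpoint_nonneg (𝕜 := 𝕜) H.exponent, breakpoint_lt_turn (H := H)]⟩)
  have hmin : |min p.1 (breakpoint 𝕜 H.exponent) - min q.1 (breakpoint 𝕜 H.exponent)| ≤ d :=
    (abs_min_sub_min_le_max _ _ _ _).trans (by simpa [hd] using h₁)
  have hslow : |H.slope * max (p.1 - breakpoint 𝕜 (H.exponent + 1)) 0
      - H.slope * max (q.1 - breakpoint 𝕜 (H.exponent + 1)) 0| ≤ 1 / 16 * d := by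
    rw [← mul_sub, abs_mul, abs_of_pos hH.slope_pos]
    refine mul_le_mul hH.slope_le ?_ (abs_nonneg _) (by norm_num)
    exact (abs_max_sub_max_le_max _ _ _ _).trans (by simpa [hd] using h₁)
  simp only [sub_zero, sub_sub_sub_cancel_right] at hright hleft
  simp only [map]
  rw [abs_le] at *
  constructor <;> linarith

theorem abs_map_snd_sub_le (hH : H.IsAdmissible) (hp : p ∈ H.domain) {d : 𝕜}
    (h₁ : |p.1 - q.1| ≤ d) (h₂ : |p.2 - q.2| ≤ d) :
    |(H.map p).2 - (H.map q).2| ≤ 16 * 2 ^ H.exponent * d := by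
  have hd : 0 ≤ d := (abs_nonneg _).trans h₁
  have hK : d ≤ 2 ^ H.exponent * d := le_mul_of_one_le_left hd (one_le_pow₀ one_le_two)
  have hKt : 2 ^ H.exponent * |p.1 - q.1| ≤ 2 ^ H.exponent * d := by gcongr
  have hslope : H.slope * |p.2 - q.2| ≤ 1 / 16 * d :=
    mul_le_mul hH.slope_le h₂ (abs_nonneg _) (by norm_num)
  have hlevel := hH.abs_level_sub_level p.2 q.2
  have hdown := abs_clamp_phase_mul_sub_le (H := H) (t := p.1) (t' := q.1)
    (H.level p.2 - p.2) (H.level q.2 - q.2) 1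
    (abs_le.2 ⟨by linarith [(hH.level_mem_Icc hp).1, hH.floor_nonneg, hp.2.2],
      by linarith [hH.level_lt_snd hp hp]⟩)
  have hdiff : |H.level p.2 - p.2 - (H.level q.2 - q.2)| ≤
      |H.level p.2 - H.level q.2| + |p.2 - q.2| := by
    rw [sub_sub_sub_comm]
    exact abs_sub _ _
  simp only [map]
  calc |p.2 + clamp (H.phase p.1 - 1) * (H.level p.2 - p.2)
          - (q.2 + clamp (H.phase q.1 - 1) * (H.level q.2 - q.2))|
      ≤ |p.2 - q.2| + |clamp (H.phase p.1 - 1) * (H.level p.2 - p.2)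
          - clamp (H.phase q.1 - 1) * (H.level q.2 - q.2)| := by
        rw [add_sub_add_comm]
        exact abs_add_le _ _
    _ ≤ 16 * 2 ^ H.exponent * d := by linarith

end IsAdmissible

end Geometry

section Metric

variable {H : Hook ℝ} {p q : ℝ × ℝ}

theorem IsAdmissible.lipschitzOnWith_map (hH : H.IsAdmissible) :
    LipschitzOnWith (2 ^ (H.exponent + 4)) H.map H.domain := by
  refine LipschitzOnWith.of_dist_le_mul fun p hp q _ => ?_
  have hconst : ((2 ^ (H.exponent + 4) : NNReal) : ℝ) = 16 * 2 ^ H.exponent := by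
    push_cast
    ring
  have h₁ : |p.1 - q.1| ≤ dist p q := le_max_left _ _
  have h₂ : |p.2 - q.2| ≤ dist p q := le_max_right _ _
  rw [hconst]
  exact max_le (hH.abs_map_fst_sub_le hp h₁ h₂) (hH.abs_map_snd_sub_le hp h₁ h₂)

theorem IsAdmissible.dist_map_le (hH : H.IsAdmissible)
    (hp : breakpoint ℝ (H.exponent + 1) ≤ p.1) (hq : breakpoint ℝ (H.exponent + 1) ≤ q.1) :
    dist (H.map p) (H.map q) ≤ H.slope * dist p q := by
  have hslope : ∀ {a b : ℝ}, |a - b| ≤ dist p q → H.slope * |a - b| ≤ H.slope * dist p q :=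
    fun h => mul_le_mul_of_nonneg_left h hH.slope_pos.le
  rw [map_of_breakpoint_succ_le hp, map_of_breakpoint_succ_le hq]
  refine max_le ?_ ((hH.abs_level_sub_level _ _).trans_le (hslope (le_max_right _ _)))
  dsimp only
  rw [Real.dist_eq, sub_sub_sub_cancel_left, ← mul_sub, sub_sub_sub_cancel_right, abs_mul,
    abs_of_pos hH.slope_pos, abs_sub_comm]
  exact hslope (le_max_left _ _)

end Metric

end Hook

/-! ### The stages of the construction -/

theorem quarter_pow_anti {n m : ℕ} (h : n ≤ m) : ((1 : ℝ) / 4) ^ m ≤ (1 / 4) ^ n :=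
  pow_le_pow_of_le_one (by norm_num) (by norm_num) h

theorem quarter_pow_le_half_pow {n m : ℕ} (h : n ≤ m) : ((1 : ℝ) / 4) ^ m ≤ (1 / 2) ^ n :=
  (pow_le_pow_left₀ (by norm_num) (by norm_num) m).trans
    (pow_le_pow_of_le_one (by norm_num) (by norm_num) h)

theorem dist_le_one_of_mem_unit_square {p q : ℝ × ℝ} (hp : p ∈ Icc (0 : ℝ) 1 ×ˢ Icc (0 : ℝ) 1)
    (hq : q ∈ Icc (0 : ℝ) 1 ×ˢ Icc (0 : ℝ) 1) : dist p q ≤ 1 :=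
  max_le (Real.dist_le_of_mem_Icc_01 hp.1 hq.1) (Real.dist_le_of_mem_Icc_01 hp.2 hq.2)

namespace ConstraintSeq

section Maps

variable (C : ConstraintSeq) (𝕜 : Type*) [Field 𝕜]

/-- The hook of stage `s`: it starts at the breakpoint of the bit that constraint `s` prescribes,
and its leftward legs run inside the strip over the lowest cylinder of stage `s`. -/
def hook (s : ℕ) : Hook 𝕜 where
  exponent := C.pos s
  floor := C.bottom 𝕜 s
  slope := (1 / 4) ^ (C.precision s + 2)
  gap := (1 / 4) ^ C.precision (s + 1)

/-- The composition of the hooks of the first `s` stages, the latest hook being applied first. -/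
def fold [LinearOrder 𝕜] : ℕ → 𝕜 × 𝕜 → 𝕜 × 𝕜
  | 0 => id
  | s + 1 => fold s ∘ (C.hook 𝕜 s).map

end Maps

variable (C : ConstraintSeq)

/-- The domain of `C.fold ℝ s`: the part of the unit square above the bottom of stage `s`. -/
def slab (s : ℕ) : Set (ℝ × ℝ) := Icc 0 1 ×ˢ Icc (C.bottom ℝ s) 1

/-- The part of a slab to the right of a breakpoint. -/
def tail (m s : ℕ) : Set (ℝ × ℝ) := Icc (breakpoint ℝ m) 1 ×ˢ Icc (C.bottom ℝ s) 1

/-- The hooks from stage `s` on do not move points to the left of `breakpoint ℝ m`. -/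
def Settled (m s : ℕ) : Prop := ∀ k, s ≤ k → m ≤ C.pos k

/-- The sliver at the right end of a slab into which later hooks may place downward legs. -/
def rightEnd (s : ℕ) : Set (ℝ × ℝ) := Icc (1 - (1 / 4) ^ C.precision s) 1 ×ˢ Icc (C.bottom ℝ s) 1

/-- The segments at the heights allowed at stage `s`, joined by the right end of the slab. -/
def strands (s : ℕ) : Set (ℝ × ℝ) := Icc 0 1 ×ˢ C.heights s ∪ C.rightEnd s

/-- The approximation of the fan at stage `s`. -/
def stage (s : ℕ) : Set (ℝ × ℝ) := C.fold ℝ s '' C.strands s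

variable {C}

theorem isAdmissible_hook (s : ℕ) : (C.hook ℝ s).IsAdmissible where
  floor_nonneg := bottom_nonneg s
  slope_pos := quarter_pow_pos _
  slope_le := (quarter_pow_anti (Nat.le_add_left 2 _)).trans (by norm_num)
  gap_pos := quarter_pow_pos _
  gap_le := by
    have hle : C.pos s + 4 ≤ C.precision (s + 1) := by rw [precision_succ]; omega
    refine (quarter_pow_le_half_pow hle).trans_eq ?_
    simp only [hook, pow_add]
    ring

theorem slab_succ_subset_domain (s : ℕ) : C.slab (s + 1) ⊆ (C.hook ℝ s).domain := by
  refine prod_mono le_rfl (Icc_subset_Icc_left ((le_trans ?_ (bottom_add_le_succ s))))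
  have hslope := quarter_pow_pos (𝕜 := ℝ) (C.precision s + 1)
  simp only [hook, pow_succ _ (C.precision s + 1)]
  linarith

theorem mapsTo_hook (s : ℕ) : MapsTo (C.hook ℝ s).map (C.slab (s + 1)) (C.slab s) := fun _ hp =>
  (isAdmissible_hook s).map_mem (slab_succ_subset_domain s hp)

theorem fold_succ_apply (s : ℕ) (p : ℝ × ℝ) :
    C.fold ℝ (s + 1) p = C.fold ℝ s ((C.hook ℝ s).map p) :=
  rfl

theorem mapsTo_fold (s : ℕ) : MapsTo (C.fold ℝ s) (C.slab s) (Icc 0 1 ×ˢ Icc 0 1) := by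
  induction s with
  | zero => exact prod_mono le_rfl (Icc_subset_Icc_left (bottom_nonneg 0))
  | succ s ih => exact ih.comp (mapsTo_hook s)

theorem injOn_fold (s : ℕ) : InjOn (C.fold ℝ s) (C.slab s) := by
  induction s with
  | zero => exact injOn_id _
  | succ s ih =>
    exact ih.comp ((isAdmissible_hook s).injOn_map.mono (slab_succ_subset_domain s)) (mapsTo_hook s)

theorem lipschitzOnWith_fold (s : ℕ) :
    LipschitzOnWith (2 ^ C.precision s) (C.fold ℝ s) (C.slab s) := by
  induction s with
  | zero => exact LipschitzWith.id.lipschitzOnWith.weaken (one_le_pow₀ one_le_two)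
  | succ s ih =>
    rw [precision_succ, add_assoc, pow_add]
    exact ih.comp ((isAdmissible_hook s).lipschitzOnWith_map.mono (slab_succ_subset_domain s))
      (mapsTo_hook s)

theorem continuousOn_fold (s : ℕ) : ContinuousOn (C.fold ℝ s) (C.slab s) :=
  (lipschitzOnWith_fold s).continuousOn

theorem tail_subset_slab (m s : ℕ) : C.tail m s ⊆ C.slab s :=
  prod_mono (Icc_subset_Icc_left (breakpoint_nonneg m)) le_rfl

theorem slab_subset_unit_square (s : ℕ) : C.slab s ⊆ Icc 0 1 ×ˢ Icc 0 1 :=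
  prod_mono le_rfl (Icc_subset_Icc_left (bottom_nonneg s))

theorem dist_fold_succ_le {s : ℕ} {p q : ℝ × ℝ} (hp : p ∈ C.tail (C.pos s + 1) (s + 1))
    (hq : q ∈ C.tail (C.pos s + 1) (s + 1)) :
    dist (C.fold ℝ (s + 1) p) (C.fold ℝ (s + 1) q) ≤ (1 / 2) ^ (s + 1) := by
  have hp' := tail_subset_slab _ _ hp
  have hq' := tail_subset_slab _ _ hq
  have hdist : dist p q ≤ 1 := dist_le_one_of_mem_unit_square (slab_subset_unit_square _ hp')
    (slab_subset_unit_square _ hq')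
  calc dist (C.fold ℝ (s + 1) p) (C.fold ℝ (s + 1) q)
      ≤ 2 ^ C.precision s * dist ((C.hook ℝ s).map p) ((C.hook ℝ s).map q) := by
        simpa [fold_succ_apply] using (lipschitzOnWith_fold s).dist_le_mul _ (mapsTo_hook s hp') _
          (mapsTo_hook s hq')
    _ ≤ 2 ^ C.precision s * ((1 / 4) ^ (C.precision s + 2) * 1) := by
        gcongr
        exact ((isAdmissible_hook s).dist_map_le hp.1.1 hq.1.1).trans
          (mul_le_mul_of_nonneg_left hdist (quarter_pow_pos _).le)
    _ = (1 / 2) ^ (C.precision s + 4) := by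
        rw [mul_one, pow_add, pow_add, ← mul_assoc, ← mul_pow]
        norm_num
    _ ≤ (1 / 2) ^ (s + 1) :=
        pow_le_pow_of_le_one (by norm_num) (by norm_num) (by have := C.le_precision s; omega)

theorem fold_eq_of_le_breakpoint {m s k : ℕ} (hsk : s ≤ k)
    (h : ∀ i, s ≤ i → i < k → m ≤ C.pos i) {p : ℝ × ℝ} (hp : p.1 ≤ breakpoint ℝ m) :
    C.fold ℝ k p = C.fold ℝ s p := by
  induction k, hsk using Nat.le_induction with
  | base => rfl
  | succ k hk ih =>
    have hfix : (C.hook ℝ k).map p = p := Hook.map_of_le_breakpoint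
      (hp.trans (breakpoint_strictMono.monotone (h k hk k.lt_succ_self)))
    rw [fold_succ_apply, hfix]
    exact ih fun i hi hik => h i hi (hik.trans k.lt_succ_self)

theorem mapsTo_hook_tail {m k : ℕ} (h : m ≤ C.pos k) :
    MapsTo (C.hook ℝ k).map (C.tail m (k + 1)) (C.tail m k) := by
  intro p hp
  have hslab := tail_subset_slab _ _ hp
  obtain ⟨hfst, hsnd⟩ := mapsTo_hook k hslab
  refine ⟨⟨?_, hfst.2⟩, hsnd⟩
  exact (le_min hp.1.1 (breakpoint_strictMono.monotone h)).trans
    ((isAdmissible_hook k).min_le_map_fst (slab_succ_subset_domain k hslab))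

theorem exists_settled (m : ℕ) : ∃ s, C.Settled m s := by
  have hfin : {k | C.pos k < m}.Finite :=
    (Set.finite_lt_nat m).preimage C.pos_injective.injOn
  obtain ⟨b, hb⟩ := hfin.bddAbove
  refine ⟨b + 1, fun k hk => not_lt.1 fun hlt => ?_⟩
  have := hb hlt
  omega

theorem Settled.mono {m s s' : ℕ} (h : C.Settled m s) (hs : s ≤ s') : C.Settled m s' :=
  fun k hk => h k (hs.trans hk)

theorem Settled.fold_eq {m s k : ℕ} (h : C.Settled m s) (hk : s ≤ k) {p : ℝ × ℝ}
    (hp : p.1 ≤ breakpoint ℝ m) : C.fold ℝ k p = C.fold ℝ s p :=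
  fold_eq_of_le_breakpoint hk (fun i hi _ => h i hi) hp

theorem isCompact_image_tail (m s : ℕ) : IsCompact (C.fold ℝ s '' C.tail m s) :=
  (isCompact_Icc.prod isCompact_Icc).image_of_continuousOn
    ((continuousOn_fold s).mono (tail_subset_slab m s))

theorem Settled.image_tail_subset {m s k : ℕ} (h : C.Settled m s) (hk : s ≤ k) :
    C.fold ℝ k '' C.tail m k ⊆ C.fold ℝ s '' C.tail m s := by
  induction k, hk using Nat.le_induction with
  | base => exact le_rfl
  | succ k hk ih =>
    rintro _ ⟨p, hp, rfl⟩
    exact ih ⟨_, mapsTo_hook_tail (h k hk) hp, rfl⟩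

theorem exists_stage_pos_minimal (s : ℕ) :
    ∃ k, s ≤ k ∧ ∀ i, s ≤ i → i ≠ k → C.pos k + 1 ≤ C.pos i := by
  have hne : (Ici s).Nonempty := nonempty_Ici
  refine ⟨Function.argminOn C.pos (Ici s) hne, Function.argminOn_mem _ _ _, fun i hi hik => ?_⟩
  exact lt_of_le_of_ne (Function.argminOn_le C.pos _ hi) (C.pos_injective.ne hik.symm)

theorem exists_settled_image_tail_small {ε : ℝ} (hε : 0 < ε) :
    ∃ m s, C.Settled m s ∧
      ∀ x ∈ C.fold ℝ s '' C.tail m s, ∀ y ∈ C.fold ℝ s '' C.tail m s, dist x y ≤ ε := by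
  obtain ⟨s, hs⟩ := exists_pow_lt_of_lt_one hε (y := (1 : ℝ) / 2) (by norm_num)
  obtain ⟨k, hk, hmin⟩ := exists_stage_pos_minimal (C := C) s
  refine ⟨C.pos k + 1, k + 1, fun i hi => hmin i (by omega) (by omega), ?_⟩
  rintro _ ⟨p, hp, rfl⟩ _ ⟨q, hq, rfl⟩
  refine (dist_fold_succ_le hp hq).trans (le_trans ?_ hs.le)
  exact pow_le_pow_of_le_one (by norm_num) (by norm_num) (by omega)

theorem rightEnd_subset_slab (s : ℕ) : C.rightEnd s ⊆ C.slab s :=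
  prod_mono (Icc_subset_Icc_left (sub_nonneg.2 (pow_le_one₀ (by norm_num) (by norm_num)))) le_rfl

theorem strands_subset_slab (s : ℕ) : C.strands s ⊆ C.slab s :=
  union_subset (prod_mono le_rfl (heights_subset s)) (rightEnd_subset_slab s)

theorem isCompact_strands (s : ℕ) : IsCompact (C.strands s) :=
  (isCompact_Icc.prod (isCompact_heights s)).union (isCompact_Icc.prod isCompact_Icc)

theorem isClosed_stage (s : ℕ) : IsClosed (C.stage s) :=
  ((isCompact_strands s).image_of_continuousOn
    ((continuousOn_fold s).mono (strands_subset_slab s))).isClosed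

theorem rightEnd_succ_subset_tail (s : ℕ) :
    C.rightEnd (s + 1) ⊆ C.tail (C.pos s + 1) (s + 1) := by
  refine prod_mono (Icc_subset_Icc_left (sub_le_sub_left (quarter_pow_le_half_pow ?_) 1)) le_rfl
  rw [precision_succ]
  omega

theorem hook_fst_mem_of_mem_tail {s : ℕ} {p : ℝ × ℝ} (hp : p ∈ C.tail (C.pos s + 1) (s + 1)) :
    ((C.hook ℝ s).map p).1 ∈ Icc (breakpoint ℝ (C.pos s)) (breakpoint ℝ (C.pos s + 1)) := by
  have hdom := slab_succ_subset_domain s (tail_subset_slab _ _ hp)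
  have hmin := (isAdmissible_hook s).min_le_map_fst hdom
  have hlt : breakpoint ℝ (C.pos s) < breakpoint ℝ (C.pos s + 1) :=
    breakpoint_strictMono (Nat.lt_succ_self _)
  refine ⟨(le_min (hlt.le.trans hp.1.1) le_rfl).trans hmin, ?_⟩
  have hslow := mul_nonneg (quarter_pow_pos (𝕜 := ℝ) (C.precision s + 2)).le (sub_nonneg.2 hp.1.1)
  rw [Hook.map_of_breakpoint_succ_le hp.1.1]
  simp only [Hook.turn, hook]
  linarith

theorem level_mem_Icc_bottom {s : ℕ} {p : ℝ × ℝ} (hp : p ∈ C.slab (s + 1)) :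
    (C.hook ℝ s).level p.2 ∈ Icc (C.bottom ℝ s) (C.bottom ℝ s + (1 / 4) ^ C.precision s) := by
  obtain ⟨hlow, hhigh⟩ := (isAdmissible_hook s).level_mem_Icc (slab_succ_subset_domain s hp)
  exact ⟨hlow, hhigh.trans (add_le_add_right (quarter_pow_anti (Nat.le_add_right _ 2)) _)⟩

theorem mapsTo_hook_strands (s : ℕ) :
    MapsTo (C.hook ℝ s).map (C.strands (s + 1)) (C.strands s) := by
  intro p hp
  have hslab := strands_subset_slab _ hp
  obtain ⟨hfst, hsnd⟩ := mapsTo_hook s hslab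
  have hlevel := Icc_bottom_subset_heights s (level_mem_Icc_bottom hslab)
  rcases hp with hp | hp
  · have hdom := slab_succ_subset_domain s hslab
    rcases (isAdmissible_hook s).map_trichotomy hdom with ⟨h, _⟩ | ⟨h, _⟩ | ⟨h, _⟩
    · exact .inl ⟨hfst, h ▸ heights_antitone s.le_succ hp.2⟩
    · refine .inr ⟨⟨?_, hfst.2⟩, hsnd⟩
      have hcorner := ((isAdmissible_hook s).corner_mem_Icc hdom).1
      rw [h]
      exact (sub_le_sub_left (quarter_pow_anti (precision_strictMono.monotone s.le_succ)) 1).trans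
        hcorner
    · exact .inl ⟨hfst, h ▸ hlevel⟩
  · refine .inl ⟨hfst, ?_⟩
    rwa [Hook.map_of_breakpoint_succ_le (rightEnd_succ_subset_tail s hp).1.1]

theorem stage_antitone : Antitone C.stage :=
  antitone_nat_of_succ_le fun s => by
    rintro _ ⟨p, hp, rfl⟩
    exact ⟨_, mapsTo_hook_strands s hp, rfl⟩

theorem dist_fold_le_of_mem_rightEnd {s : ℕ} {p q : ℝ × ℝ} (hp : p ∈ C.rightEnd s)
    (hq : q ∈ C.rightEnd s) : dist (C.fold ℝ s p) (C.fold ℝ s q) ≤ (1 / 2) ^ s := by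
  cases s with
  | zero =>
    rw [pow_zero]
    exact dist_le_one_of_mem_unit_square (mapsTo_fold 0 (rightEnd_subset_slab 0 hp))
      (mapsTo_fold 0 (rightEnd_subset_slab 0 hq))
  | succ s =>
    exact dist_fold_succ_le (rightEnd_succ_subset_tail s hp) (rightEnd_succ_subset_tail s hq)

end ConstraintSeq

/-! ### The limit fan and its contractibility -/

section Limit

open Filter Topology

theorem contractibleSpace_of_fiberwise_contraction {X Y : Type*} [TopologicalSpace X]
    [CompactSpace X] [TopologicalSpace Y] [T2Space Y] {π : X → Y} (hπ : Continuous π)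
    (hsurj : Function.Surjective π) {H : unitInterval × X → X} (hH : Continuous H)
    (hfiber : ∀ u x x', π x = π x' → π (H (u, x)) = π (H (u, x'))) (h0 : ∀ x, π (H (0, x)) = π x)
    {y₀ : Y} (h1 : ∀ x, π (H (1, x)) = y₀) : ContractibleSpace Y := by
  let G : C(unitInterval × X, unitInterval × Y) := ⟨Prod.map id π, continuous_id.prodMap hπ⟩
  have hG : IsQuotientMap G :=
    G.continuous.isClosedMap.isQuotientMap G.continuous (Function.surjective_id.prodMap hsurj)
  let K : C(unitInterval × X, Y) := ⟨π ∘ H, hπ.comp hH⟩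
  have hfactors : Function.FactorsThrough K G := by
    rintro ⟨u, x⟩ ⟨u', x'⟩ h
    obtain ⟨rfl, hx⟩ : u = u' ∧ π x = π x' := Prod.ext_iff.1 h
    exact hfiber u x x' hx
  have hlift : ∀ u x, hG.lift K hfactors (u, π x) = π (H (u, x)) := fun u x =>
    DFunLike.congr_fun (hG.lift_comp K hfactors) (u, x)
  refine (contractible_iff_id_nullhomotopic Y).2
    ⟨y₀, ⟨⟨hG.lift K hfactors, hsurj.forall.2 fun x => ?_, hsurj.forall.2 fun x => ?_⟩⟩⟩
  · exact (hlift 0 x).trans (h0 x)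
  · exact (hlift 1 x).trans (h1 x)

namespace ConstraintSeq

variable (C : ConstraintSeq)

/-- The bundle of horizontal segments, one for each solution of `C`, whose right ends get
identified in the fan. -/
def hairs : Set (ℝ × ℝ) := Icc 0 1 ×ˢ C.limitHeights

/-- The pointwise limit of the folds, meaningful on `C.hairs`. -/
noncomputable def limitMap (p : ℝ × ℝ) : ℝ × ℝ := limUnder atTop fun k => C.fold ℝ k p

/-- The fan over the set of solutions of `C`: all hairs share their right end, the apex. -/
def fan : Set (ℝ × ℝ) := C.limitMap '' C.hairs

variable {C}

theorem isCompact_hairs : IsCompact C.hairs := isCompact_Icc.prod isCompact_limitHeights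

theorem hairs_subset_strands (s : ℕ) : C.hairs ⊆ C.strands s := fun _ hp =>
  .inl ⟨hp.1, limitHeights_subset_heights s hp.2⟩

theorem hairs_subset_slab (s : ℕ) : C.hairs ⊆ C.slab s :=
  (hairs_subset_strands s).trans (strands_subset_slab s)

theorem mem_tail_of_mem_hairs {p : ℝ × ℝ} (hp : p ∈ C.hairs) {m : ℕ}
    (hm : breakpoint ℝ m ≤ p.1) (s : ℕ) : p ∈ C.tail m s :=
  ⟨⟨hm, hp.1.2⟩, (hairs_subset_slab s hp).2⟩

theorem exists_dist_fold_le {ε : ℝ} (hε : 0 < ε) :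
    ∃ s, ∀ k ≥ s, ∀ p ∈ C.hairs, dist (C.fold ℝ k p) (C.fold ℝ s p) ≤ ε := by
  obtain ⟨m, s, hset, hsmall⟩ := exists_settled_image_tail_small (C := C) hε
  refine ⟨s, fun k hk p hp => ?_⟩
  rcases le_total p.1 (breakpoint ℝ m) with hm | hm
  · rw [hset.fold_eq hk hm, dist_self]
    exact hε.le
  · exact hsmall _ (hset.image_tail_subset hk ⟨p, mem_tail_of_mem_hairs hp hm k, rfl⟩) _
      ⟨p, mem_tail_of_mem_hairs hp hm s, rfl⟩

theorem uniformCauchySeqOn_fold : UniformCauchySeqOn (C.fold ℝ) atTop C.hairs := by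
  rw [Metric.uniformCauchySeqOn_iff]
  intro ε hε
  obtain ⟨s, hs⟩ := exists_dist_fold_le (C := C) (show 0 < ε / 3 by positivity)
  refine ⟨s, fun m hm n hn p hp => ?_⟩
  have htri := dist_triangle_right (C.fold ℝ m p) (C.fold ℝ n p) (C.fold ℝ s p)
  linarith [hs m hm p hp, hs n hn p hp]

theorem tendsto_limitMap {p : ℝ × ℝ} (hp : p ∈ C.hairs) :
    Tendsto (fun k => C.fold ℝ k p) atTop (𝓝 (C.limitMap p)) :=
  (uniformCauchySeqOn_fold.cauchySeq hp).tendsto_limUnder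

theorem continuousOn_limitMap : ContinuousOn C.limitMap C.hairs :=
  (uniformCauchySeqOn_fold.tendstoUniformlyOn_of_tendsto fun _ hp =>
    tendsto_limitMap hp).continuousOn
      (Frequently.of_forall fun k => (continuousOn_fold k).mono (hairs_subset_slab k))

theorem Settled.limitMap_eq {m s : ℕ} (h : C.Settled m s) {p : ℝ × ℝ} (hp : p ∈ C.hairs)
    (hm : p.1 ≤ breakpoint ℝ m) : C.limitMap p = C.fold ℝ s p := by
  refine tendsto_nhds_unique (tendsto_limitMap hp) (tendsto_const_nhds.congr' ?_)
  filter_upwards [eventually_ge_atTop s] with k hk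
  exact (h.fold_eq hk hm).symm

theorem Settled.limitMap_mem_image_tail {m s : ℕ} (h : C.Settled m s) {p : ℝ × ℝ}
    (hp : p ∈ C.hairs) (hm : breakpoint ℝ m ≤ p.1) : C.limitMap p ∈ C.fold ℝ s '' C.tail m s := by
  refine (isCompact_image_tail m s).isClosed.mem_of_tendsto (tendsto_limitMap hp) ?_
  filter_upwards [eventually_ge_atTop s] with k hk
  exact h.image_tail_subset hk ⟨p, mem_tail_of_mem_hairs hp hm k, rfl⟩

theorem eq_of_forall_settled_mem {x y : ℝ × ℝ}
    (hx : ∀ m s, C.Settled m s → x ∈ C.fold ℝ s '' C.tail m s)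
    (hy : ∀ m s, C.Settled m s → y ∈ C.fold ℝ s '' C.tail m s) : x = y := by
  refine eq_of_forall_dist_le fun ε hε => ?_
  obtain ⟨m, s, hset, hsmall⟩ := exists_settled_image_tail_small (C := C) hε
  exact hsmall _ (hx m s hset) _ (hy m s hset)

theorem one_mk_mem_hairs {y : ℝ} (hy : y ∈ C.limitHeights) : ((1 : ℝ), y) ∈ C.hairs :=
  ⟨right_mem_Icc.2 zero_le_one, hy⟩

theorem limitMap_one_mem_image_tail {y : ℝ} (hy : y ∈ C.limitHeights) (m s : ℕ)
    (h : C.Settled m s) : C.limitMap (1, y) ∈ C.fold ℝ s '' C.tail m s :=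
  h.limitMap_mem_image_tail (one_mk_mem_hairs hy) (breakpoint_lt_one m).le

theorem limitMap_one_eq {y y' : ℝ} (hy : y ∈ C.limitHeights) (hy' : y' ∈ C.limitHeights) :
    C.limitMap (1, y) = C.limitMap (1, y') :=
  eq_of_forall_settled_mem (limitMap_one_mem_image_tail hy) (limitMap_one_mem_image_tail hy')

theorem eq_of_limitMap_eq_of_fst_lt {p q : ℝ × ℝ} (hp : p ∈ C.hairs) (hq : q ∈ C.hairs)
    (hlt : p.1 < 1) (h : C.limitMap p = C.limitMap q) : p = q := by
  obtain ⟨m, hm⟩ := exists_lt_breakpoint hlt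
  obtain ⟨s, hs⟩ := exists_settled (C := C) m
  rw [hs.limitMap_eq hp hm.le] at h
  rcases le_total q.1 (breakpoint ℝ m) with hq' | hq'
  · rw [hs.limitMap_eq hq hq'] at h
    exact injOn_fold s (hairs_subset_slab s hp) (hairs_subset_slab s hq) h
  · obtain ⟨r, hr, hrq⟩ := hs.limitMap_mem_image_tail hq hq'
    have hpr : p = r :=
      injOn_fold s (hairs_subset_slab s hp) (tail_subset_slab m s hr) (h.trans hrq.symm)
    exact absurd hr.1.1 (hpr ▸ hm).not_ge

theorem eq_or_fst_eq_one_of_limitMap_eq {p q : ℝ × ℝ} (hp : p ∈ C.hairs) (hq : q ∈ C.hairs)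
    (h : C.limitMap p = C.limitMap q) : p = q ∨ p.1 = 1 ∧ q.1 = 1 := by
  rcases hp.1.2.lt_or_eq with hp1 | hp1
  · exact .inl (eq_of_limitMap_eq_of_fst_lt hp hq hp1 h)
  rcases hq.1.2.lt_or_eq with hq1 | hq1
  · exact .inl (eq_of_limitMap_eq_of_fst_lt hq hp hq1 h.symm).symm
  · exact .inr ⟨hp1, hq1⟩

theorem fan_subset_stage (s : ℕ) : C.fan ⊆ C.stage s := by
  rintro _ ⟨p, hp, rfl⟩
  refine (isClosed_stage s).mem_of_tendsto (tendsto_limitMap hp) ?_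
  filter_upwards [eventually_ge_atTop s] with k hk
  exact stage_antitone hk ⟨p, hairs_subset_strands k hp, rfl⟩

theorem Settled.mem_strands_of_fold_eq {m s k : ℕ} (h : C.Settled m s) (hk : s ≤ k)
    {z p : ℝ × ℝ} (hz : z ∉ C.fold ℝ s '' C.tail m s) (hzk : z ∈ C.stage k) (hp : p ∈ C.slab s)
    (hpz : C.fold ℝ s p = z) : p ∈ C.strands k ∧ p.1 < breakpoint ℝ m := by
  obtain ⟨q, hq, hqz⟩ := hzk
  obtain ⟨hfst, hsnd⟩ := strands_subset_slab k hq
  have hlt : q.1 < breakpoint ℝ m := not_le.1 fun hle =>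
    hz (h.image_tail_subset hk ⟨q, ⟨⟨hle, hfst.2⟩, hsnd⟩, hqz⟩)
  have hqs : q ∈ C.slab s := ⟨hfst, (bottom_monotone hk).trans hsnd.1, hsnd.2⟩
  rw [h.fold_eq hk hlt.le] at hqz
  obtain rfl := injOn_fold s hp hqs (hpz.trans hqz.symm)
  exact ⟨hq, hlt⟩

theorem snd_mem_heights_of_mem_strands {m k : ℕ} (hmk : m ≤ k) {p : ℝ × ℝ}
    (hp : p ∈ C.strands k) (hlt : p.1 < breakpoint ℝ m) : p.2 ∈ C.heights k := by
  refine hp.elim And.right fun hright => absurd hright.1.1 (not_le.2 (hlt.trans_le ?_))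
  exact sub_le_sub_left (quarter_pow_le_half_pow (hmk.trans (le_precision k))) 1

theorem mem_fan_of_forall_mem_stage {z : ℝ × ℝ} (h : ∀ s, z ∈ C.stage s) : z ∈ C.fan := by
  by_cases htail : ∀ m s, C.Settled m s → z ∈ C.fold ℝ s '' C.tail m s
  · obtain ⟨y, hy⟩ := C.nonempty_limitHeights
    exact ⟨(1, y), one_mk_mem_hairs hy,
      eq_of_forall_settled_mem (limitMap_one_mem_image_tail hy) htail⟩
  push Not at htail
  obtain ⟨m, s, hset, hz⟩ := htail
  obtain ⟨p, hp, hpz⟩ := h s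
  have hslab := strands_subset_slab s hp
  have hstrands : ∀ k, s ≤ k → p ∈ C.strands k ∧ p.1 < breakpoint ℝ m := fun k hk =>
    hset.mem_strands_of_fold_eq hk hz (h k) hslab hpz
  have hheights : ∀ k, p.2 ∈ C.heights k := fun k => by
    obtain ⟨hmem, hlt⟩ := hstrands (k + s + m) (by omega)
    exact heights_antitone (by omega) (snd_mem_heights_of_mem_strands (by omega) hmem hlt)
  have hhairs : p ∈ C.hairs := ⟨hslab.1, mem_iInter.2 hheights⟩
  exact ⟨p, hhairs, by rw [hset.limitMap_eq hhairs (hstrands s le_rfl).2.le, hpz]⟩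

theorem fan_eq_iInter_stage : C.fan = ⋂ s, C.stage s :=
  (subset_iInter fan_subset_stage).antisymm fun _ hz =>
    mem_fan_of_forall_mem_stage (mem_iInter.1 hz)

theorem fan_subset_unit_square : C.fan ⊆ Icc 0 1 ×ˢ Icc 0 1 :=
  (fan_subset_stage 0).trans ((mapsTo_fold 0).mono_left (strands_subset_slab 0)).image_subset

theorem nonempty_fan : C.fan.Nonempty := by
  obtain ⟨y, hy⟩ := C.nonempty_limitHeights
  exact ⟨_, mem_image_of_mem _ (one_mk_mem_hairs hy)⟩

/-- Sliding along the hairs to their right ends. -/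
def slide (q : unitInterval × C.hairs) : C.hairs :=
  ⟨(max q.2.1.1 q.1, q.2.1.2),
    ⟨q.2.2.1.1.trans (le_max_left _ _), max_le q.2.2.1.2 q.1.2.2⟩, q.2.2.2⟩

theorem continuous_slide : Continuous (slide (C := C)) := by
  unfold slide
  fun_prop

theorem limitMap_slide_eq (u : unitInterval) {p q : C.hairs} (h : C.limitMap p = C.limitMap q) :
    C.limitMap (slide (u, p)) = C.limitMap (slide (u, q)) := by
  rcases eq_or_fst_eq_one_of_limitMap_eq p.2 q.2 h with heq | ⟨hp, hq⟩
  · rw [Subtype.ext heq]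
  · simp only [slide, hp, hq, max_eq_left u.2.2]
    exact limitMap_one_eq p.2.2 q.2.2

theorem contractibleSpace_fan : ContractibleSpace C.fan := by
  have : CompactSpace C.hairs := isCompact_iff_compactSpace.1 isCompact_hairs
  obtain ⟨y, hy⟩ := C.nonempty_limitHeights
  have hmaps : MapsTo C.limitMap C.hairs C.fan := mapsTo_image _ _
  refine contractibleSpace_of_fiberwise_contraction (continuousOn_limitMap.mapsToRestrict hmaps)
    ((MapsTo.restrict_surjective_iff hmaps).2 (surjOn_image _ _)) continuous_slide
    (fun u p q h => Subtype.ext (limitMap_slide_eq u (congrArg Subtype.val h))) (fun p => ?_)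
    (y₀ := hmaps.restrict _ _ _ ⟨_, one_mk_mem_hairs hy⟩) fun p => Subtype.ext ?_
  · congr 1
    exact Subtype.ext (Prod.ext (max_eq_left p.2.1.1) rfl)
  · change C.limitMap (max p.1.1 1, p.1.2) = C.limitMap (1, y)
    rw [max_eq_right p.2.1.2]
    exact limitMap_one_eq p.2.2 hy

end ConstraintSeq

end Limit

/-! ### Evaluation of the folds at rational points -/

/-- The inclusion of the rational points into the plane. -/
def castPair : ℚ × ℚ → ℝ × ℝ := Prod.map Rat.cast Rat.cast

/-- The maximum distance of rational points, in a form that is visibly computable. -/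
def ratDist (p q : ℚ × ℚ) : ℚ :=
  max (max (p.1 - q.1) (q.1 - p.1)) (max (p.2 - q.2) (q.2 - p.2))

/-- A point of the grid of mesh `(1 / 4) ^ n`, at the lower end of the cylinder of the first `n`
binary digits of `k`. -/
def netPoint (𝕜 : Type*) [Field 𝕜] (n j k : ℕ) : 𝕜 × 𝕜 :=
  (j * (1 / 4) ^ n, cylLeft 𝕜 (Nat.testBit k) n)

section Cast

theorem cast_ratDist (p q : ℚ × ℚ) : (ratDist p q : ℝ) = dist (castPair p) (castPair q) := by
  simp [ratDist, castPair, Prod.dist_eq, Real.dist_eq, abs_eq_max_neg]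

theorem cast_breakpoint (m : ℕ) : (breakpoint ℚ m : ℝ) = breakpoint ℝ m := by
  simp [breakpoint]

theorem cast_clamp (u : ℚ) : ((clamp u : ℚ) : ℝ) = clamp (u : ℝ) := by
  simp [clamp]

theorem cast_cylLeft (X : ℕ → Bool) (n : ℕ) : (cylLeft ℚ X n : ℝ) = cylLeft ℝ X n := by
  induction n with
  | zero => simp [cylLeft]
  | succ n ih =>
    rw [cylLeft_succ, cylLeft_succ, ← ih]
    cases X n <;> simp

theorem castPair_netPoint (n j k : ℕ) : castPair (netPoint ℚ n j k) = netPoint ℝ n j k := by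
  simp [castPair, netPoint, cast_cylLeft]

variable {C : ConstraintSeq}

theorem castPair_hook_map (s : ℕ) (p : ℚ × ℚ) :
    castPair ((C.hook ℚ s).map p) = (C.hook ℝ s).map (castPair p) := by
  simp [castPair, Hook.map, Hook.phase, Hook.corner, Hook.level, Hook.turn, ConstraintSeq.hook,
    ConstraintSeq.bottom, cast_breakpoint, cast_clamp, cast_cylLeft]

theorem castPair_fold (s : ℕ) (p : ℚ × ℚ) : castPair (C.fold ℚ s p) = C.fold ℝ s (castPair p) := by
  induction s generalizing p with
  | zero => rfl
  | succ s ih => exact (ih _).trans (congrArg _ (castPair_hook_map s p))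

end Cast

section Computable

variable {α : Type*} [Primcodable α]

theorem computable_ratDist {p q : α → ℚ × ℚ} (hp : Computable p) (hq : Computable q) :
    Computable fun a => ratDist (p a) (q a) := by
  have hp₁ := Computable.fst.comp hp
  have hp₂ := Computable.snd.comp hp
  have hq₁ := Computable.fst.comp hq
  have hq₂ := Computable.snd.comp hq
  exact computable_rat_max
    (computable_rat_max (computable_rat_sub hp₁ hq₁) (computable_rat_sub hq₁ hp₁))
    (computable_rat_max (computable_rat_sub hp₂ hq₂) (computable_rat_sub hq₂ hp₂))

theorem computable_breakpoint {m : α → ℕ} (hm : Computable m) :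
    Computable fun a => breakpoint ℚ (m a) :=
  computable_rat_sub (.const 1) (computable_rat_pow (.const (1 / 2)) hm)

theorem computable_clamp {u : α → ℚ} (hu : Computable u) : Computable fun a => clamp (u a) :=
  computable_rat_max (.const 0) (computable_rat_min hu (.const 1))

theorem computable_cylLeft {X : α → ℕ → Bool} (hX : Computable₂ X) {n : α → ℕ}
    (hn : Computable n) : Computable fun a => cylLeft ℚ (X a) (n a) := by
  have hindex : Computable fun x : α × ℕ × ℚ => x.2.1 := Computable.fst.comp Computable.snd
  have hstep : Computable fun x : α × ℕ × ℚ =>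
      x.2.2 + (bif X x.1 x.2.1 then (3 : ℚ) else 1) * (1 / 4) ^ (x.2.1 + 1) :=
    computable_rat_add (Computable.snd.comp Computable.snd) (computable_rat_mul
      (Computable.cond (hX.comp Computable.fst hindex) (.const 3) (.const 1))
      (computable_rat_pow (.const (1 / 4)) (Computable.succ.comp hindex)))
  refine (Computable.nat_rec hn (.const 0) hstep.to₂).of_eq fun a => ?_
  induction n a with
  | zero => rfl
  | succ n ih => rw [cylLeft_succ, ← ih]

theorem computable_netPoint {n j k : α → ℕ} (hn : Computable n) (hj : Computable j)
    (hk : Computable k) : Computable fun a => netPoint ℚ (n a) (j a) (k a) :=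
  (computable_rat_mul (computable_natCast.comp hj) (computable_rat_pow (.const (1 / 4)) hn)).pair
    (computable_cylLeft (computable_testBit (hk.comp Computable.fst) Computable.snd).to₂ hn)

theorem computable_hook_map {H : α → Hook ℚ} (hexponent : Computable fun a => (H a).exponent)
    (hfloor : Computable fun a => (H a).floor) (hslope : Computable fun a => (H a).slope)
    (hgap : Computable fun a => (H a).gap) {p : α → ℚ × ℚ} (hp : Computable p) :
    Computable fun a => (H a).map (p a) := by
  have hp₁ : Computable fun a => (p a).1 := Computable.fst.comp hp
  have hp₂ : Computable fun a => (p a).2 := Computable.snd.comp hp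
  have hdepth : Computable fun a => 1 - (p a).2 := computable_rat_sub (.const 1) hp₂
  have hstart := computable_breakpoint hexponent
  have hend := computable_breakpoint (Computable.succ.comp hexponent)
  have hphase : Computable fun a => (H a).phase (p a).1 :=
    computable_rat_mul (computable_rat_mul (.const 6) (computable_rat_pow (.const 2) hexponent))
      (computable_rat_sub hp₁ hstart)
  have hcorner : Computable fun a => (H a).corner (p a).2 :=
    computable_rat_sub (.const 1) (computable_rat_mul hgap hdepth)
  have hlevel : Computable fun a => (H a).level (p a).2 :=
    computable_rat_add hfloor (computable_rat_mul hslope hdepth)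
  have hturn : Computable fun a => (H a).turn :=
    (computable_rat_mul (computable_rat_add hstart hend) (.const (1 / 2))).of_eq fun a => by
      rw [mul_one_div]; rfl
  have hfst := computable_rat_sub (computable_rat_sub
    (computable_rat_add (computable_rat_min hp₁ hstart)
      (computable_rat_mul (computable_clamp hphase) (computable_rat_sub hcorner hstart)))
    (computable_rat_mul (computable_clamp (computable_rat_sub hphase (.const 2)))
      (computable_rat_sub hcorner hturn)))
    (computable_rat_mul hslope (computable_rat_max (computable_rat_sub hp₁ hend) (.const 0)))
  have hsnd := computable_rat_add hp₂
    (computable_rat_mul (computable_clamp (computable_rat_sub hphase (.const 1)))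
      (computable_rat_sub hlevel hp₂))
  exact hfst.pair hsnd

namespace ConstraintSeq

variable {C : ConstraintSeq}

namespace IsComputable

theorem precision (hC : C.IsComputable) : Computable C.precision := by
  have hstep : Computable fun x : ℕ × ℕ × ℕ => x.2.2 + C.pos x.2.1 + 4 :=
    computable_nat_add (computable_nat_add (Computable.snd.comp Computable.snd)
      (hC.pos.comp (Computable.fst.comp Computable.snd))) (.const 4)
  refine (Computable.nat_rec Computable.id (.const 0) hstep.to₂).of_eq fun s => ?_
  induction s with
  | zero => rfl
  | succ s ih => rw [precision_succ, ← ih]; rfl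

theorem leastSolution (hC : C.IsComputable) : Computable₂ C.leastSolution := by
  have hbound : Computable fun x : ℕ × ℕ => x.1 := Computable.fst
  have hconstraint : ComputablePred fun x : (ℕ × ℕ) × ℕ =>
      C.pos x.2 = x.1.2 ∧ C.bit x.2 = true :=
    computablePred_and
      (computablePred_eq (hC.pos.comp Computable.snd) (Computable.snd.comp Computable.fst))
      (computablePred_eq (hC.bit.comp Computable.snd) (.const true))
  exact (computablePred_exists_lt (p := fun x k => C.pos k = x.2 ∧ C.bit k = true) hbound
    hconstraint).decide.of_eq fun x => by rw [ConstraintSeq.leastSolution]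

theorem solvesUpTo_testBit (hC : C.IsComputable) {s k : α → ℕ} (hs : Computable s)
    (hk : Computable k) : ComputablePred fun a => C.SolvesUpTo (s a) (Nat.testBit (k a)) :=
  computablePred_forall_lt (p := fun a i => Nat.testBit (k a) (C.pos i) = C.bit i) hs
    (computablePred_eq
      (computable_testBit (hk.comp Computable.fst) (hC.pos.comp Computable.snd))
      (hC.bit.comp Computable.snd))

theorem hook_map (hC : C.IsComputable) {s : α → ℕ} (hs : Computable s) {p : α → ℚ × ℚ}
    (hp : Computable p) : Computable fun a => (C.hook ℚ (s a)).map (p a) := by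
  have hprecision := hC.precision.comp hs
  have hleast : Computable₂ fun a => C.leastSolution (s a) :=
    hC.leastSolution.comp (hs.comp Computable.fst) Computable.snd
  exact computable_hook_map (H := fun a => C.hook ℚ (s a)) (hC.pos.comp hs)
    (computable_cylLeft hleast hprecision)
    (computable_rat_pow (.const (1 / 4)) (computable_nat_add hprecision (.const 2)))
    (computable_rat_pow (.const (1 / 4)) (hC.precision.comp (Computable.succ.comp hs))) hp

theorem fold (hC : C.IsComputable) {s : α → ℕ} (hs : Computable s) {p : α → ℚ × ℚ}
    (hp : Computable p) : Computable fun a => C.fold ℚ (s a) (p a) := by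
  have hstep : Computable fun x : α × ℕ × (ℚ × ℚ) =>
      (C.hook ℚ (s x.1 - (x.2.1 + 1))).map x.2.2 :=
    hC.hook_map (computable_nat_sub (hs.comp Computable.fst)
      (Computable.succ.comp (Computable.fst.comp Computable.snd)))
      (Computable.snd.comp Computable.snd)
  refine (Computable.nat_rec hs hp hstep.to₂).of_eq fun a => ?_
  suffices hpartial : ∀ i ≤ s a, C.fold ℚ (s a) (p a) = C.fold ℚ (s a - i)
      (Nat.rec (p a) (fun y q => (C.hook ℚ (s a - (y + 1))).map q) i) by
    simpa [ConstraintSeq.fold] using (hpartial (s a) le_rfl).symm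
  intro i hi
  induction i with
  | zero => rfl
  | succ i ih =>
    rw [ih (Nat.le_of_succ_le hi), show s a - i = s a - (i + 1) + 1 by omega]
    rfl

end IsComputable

end ConstraintSeq

end Computable

/-! ### Separation from finite nets -/

theorem exists_ballOfCode_far_of_notMem {F : Set (ℝ × ℝ)} (hF : IsClosed F) {z : ℝ × ℝ}
    (hz : z ∉ F) :
    ∃ c, z ∈ ballOfCode c ∧ ∃ ε > 0, ∀ x ∈ F, (c.2 : ℝ) + ε ≤ dist x (castPair c.1) := by
  obtain ⟨ε, hε, hball⟩ := Metric.isOpen_iff.1 hF.isOpen_compl z hz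
  obtain ⟨r, hr₀, hr⟩ := exists_rat_btwn (show (0 : ℝ) < ε / 3 by positivity)
  have hdense : DenseRange castPair := Rat.denseRange_cast.prodMap Rat.denseRange_cast
  obtain ⟨q, hq⟩ := hdense.exists_dist_lt z hr₀
  refine ⟨(q, r), hq, ε / 3, by positivity, fun x hx => ?_⟩
  have hx : ε ≤ dist x z := not_lt.1 fun hlt => hball hlt hx
  have := dist_triangle_right x z (castPair q)
  dsimp only
  linarith

theorem netPoint_mem {n j : ℕ} (hj : j < 4 ^ n + 1) (k : ℕ) :
    netPoint ℝ n j k ∈ Icc (0 : ℝ) 1 ×ˢ cylinder (Nat.testBit k) n := by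
  have hj : (j : ℝ) ≤ 4 ^ n := by exact_mod_cast Nat.lt_succ_iff.1 hj
  refine ⟨⟨by unfold netPoint; positivity, ?_⟩, left_mem_Icc.2 ?_⟩
  · calc (j : ℝ) * (1 / 4) ^ n ≤ 4 ^ n * (1 / 4) ^ n := by gcongr
      _ = 1 := by rw [← mul_pow]; norm_num
  · exact le_add_of_nonneg_right (quarter_pow_pos n).le

theorem exists_netPoint_near {n : ℕ} {X : ℕ → Bool} {p : ℝ × ℝ}
    (hp : p ∈ Icc (0 : ℝ) 1 ×ˢ cylinder X n) :
    ∃ j < 4 ^ n + 1, ∃ k < 2 ^ n, (∀ i < n, Nat.testBit k i = X i) ∧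
      (netPoint ℝ n j k).1 ≤ p.1 ∧ dist p (netPoint ℝ n j k) ≤ (1 / 4) ^ n := by
  obtain ⟨⟨hp₀, hp₁⟩, hlow, hhigh⟩ := hp
  obtain ⟨k, hk, hbits⟩ := exists_testBit_eq X n
  have hpow : (0 : ℝ) < 4 ^ n := by positivity
  have hmesh := quarter_pow_pos (𝕜 := ℝ) n
  have hfloor : (⌊p.1 * 4 ^ n⌋₊ : ℝ) ≤ p.1 * 4 ^ n := Nat.floor_le (by positivity)
  have hceil : p.1 * 4 ^ n ≤ ⌊p.1 * 4 ^ n⌋₊ + 1 := (Nat.lt_floor_add_one _).le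
  have hle : (⌊p.1 * 4 ^ n⌋₊ : ℝ) * (1 / 4) ^ n ≤ p.1 := by
    rwa [one_div_pow, mul_one_div, div_le_iff₀ hpow]
  have hge : p.1 ≤ (⌊p.1 * 4 ^ n⌋₊ : ℝ) * (1 / 4) ^ n + (1 / 4) ^ n := by
    rwa [one_div_pow, mul_one_div, ← add_div, le_div_iff₀ hpow]
  have hindex : ⌊p.1 * 4 ^ n⌋₊ < 4 ^ n + 1 := by
    have : (⌊p.1 * 4 ^ n⌋₊ : ℝ) ≤ 4 ^ n := hfloor.trans (mul_le_of_le_one_left hpow.le hp₁)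
    exact Nat.lt_succ_of_le (by exact_mod_cast this)
  refine ⟨_, hindex, k, hk, hbits, hle, max_le ?_ ?_⟩
  · rw [netPoint, Real.dist_eq, abs_le]
    constructor <;> dsimp only <;> linarith
  · rw [netPoint, cylLeft_congr hbits, Real.dist_eq, abs_le]
    constructor <;> dsimp only <;> linarith

namespace ConstraintSeq

variable (C : ConstraintSeq)

/-- The part to the left of abscissa `b` of the segments at the heights of cylinders of sequences
that satisfy the first `s` constraints and the side condition `Φ`. -/
def strips (b : ℝ) (Φ : (ℕ → Bool) → Prop) (s : ℕ) : Set (ℝ × ℝ) :=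
  Icc 0 b ×ˢ {y | ∃ X, (C.SolvesUpTo s X ∧ Φ X) ∧ y ∈ cylinder X (C.precision s)}

/-- The images under `C.fold ℚ s` of the net points in `C.strips b Φ s` are at least `2⁻ˢ`,
which is the fineness of the net of images, away from the ball with code `c`. -/
def NetFar (b : ℚ) (Φ : (ℕ → Bool) → Prop) (c : (ℚ × ℚ) × ℚ) (s : ℕ) : Prop :=
  ∀ j < 4 ^ C.precision s + 1, ∀ k < 2 ^ C.precision s,
    (C.SolvesUpTo s (Nat.testBit k) ∧ Φ (Nat.testBit k)) ∧
      (netPoint ℚ (C.precision s) j k).1 ≤ b →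
    c.2 + (1 / 2) ^ s ≤ ratDist (C.fold ℚ s (netPoint ℚ (C.precision s) j k)) c.1

/-- Some rational ball witnesses, by means of the net of stage `s`, that `z` is not the image of a
point in `C.strips b Φ s`. -/
def Separated (b : ℚ) (Φ : (ℕ → Bool) → Prop) (z : ℝ × ℝ) (s : ℕ) : Prop :=
  ∃ c, z ∈ ballOfCode c ∧ C.NetFar b Φ c s

variable {C} {b : ℚ} {Φ : (ℕ → Bool) → Prop} {c : (ℚ × ℚ) × ℚ} {s : ℕ} {z : ℝ × ℝ}

theorem netFar_iff :
    C.NetFar b Φ c s ↔ ∀ j < 4 ^ C.precision s + 1, ∀ k < 2 ^ C.precision s,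
      (C.SolvesUpTo s (Nat.testBit k) ∧ Φ (Nat.testBit k)) ∧
        (netPoint ℝ (C.precision s) j k).1 ≤ b →
      (c.2 : ℝ) + (1 / 2) ^ s ≤
        dist (C.fold ℝ s (netPoint ℝ (C.precision s) j k)) (castPair c.1) := by
  simp only [NetFar, ← castPair_netPoint, ← castPair_fold, ← cast_ratDist,
    ← Rat.cast_le (K := ℝ), Rat.cast_add, Rat.cast_pow, Rat.cast_div, Rat.cast_one,
    Rat.cast_ofNat]
  rfl

theorem netPoint_mem_strips {b : ℝ} {j k : ℕ} (hj : j < 4 ^ C.precision s + 1)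
    (hk : C.SolvesUpTo s (Nat.testBit k) ∧ Φ (Nat.testBit k))
    (hb : (netPoint ℝ (C.precision s) j k).1 ≤ b) :
    netPoint ℝ (C.precision s) j k ∈ C.strips b Φ s :=
  ⟨⟨(netPoint_mem hj k).1.1, hb⟩, _, hk, (netPoint_mem hj k).2⟩

theorem strips_subset_strands {b : ℝ} (hb : b ≤ 1) : C.strips b Φ s ⊆ C.strands s := by
  rintro p ⟨hfst, X, ⟨hX, _⟩, hsnd⟩
  exact .inl ⟨⟨hfst.1, hfst.2.trans hb⟩, X, hX, hsnd⟩

theorem strips_subset_slab {b : ℝ} (hb : b ≤ 1) : C.strips b Φ s ⊆ C.slab s :=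
  (strips_subset_strands hb).trans (strands_subset_slab s)

theorem strips_antitone (b : ℝ) (Φ : (ℕ → Bool) → Prop) : Antitone (C.strips b Φ) := by
  rintro s s' h p ⟨hfst, X, ⟨hX, hΦ⟩, hsnd⟩
  exact ⟨hfst, X, ⟨hX.mono h, hΦ⟩, cylinder_antitone X (precision_strictMono.monotone h) hsnd⟩

theorem isClosed_image_strips {b : ℝ} (hb : b ≤ 1) (Φ : (ℕ → Bool) → Prop) (s : ℕ) :
    IsClosed (C.fold ℝ s '' C.strips b Φ s) := by
  have hclosed : IsClosed (C.strips b Φ s) :=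
    isClosed_Icc.prod (isClosed_setOf_exists_mem_cylinder _ _)
  have hcompact : IsCompact (C.strips b Φ s) :=
    (isCompact_strands s).of_isClosed_subset hclosed (strips_subset_strands hb)
  exact (hcompact.image_of_continuousOn
    ((continuousOn_fold s).mono (strips_subset_slab hb))).isClosed

theorem exists_dist_fold_netPoint_le {b : ℝ} (hb : b ≤ 1)
    (hΦ : ∀ X Y, (∀ i < C.precision s, X i = Y i) → Φ X → Φ Y) {p : ℝ × ℝ}
    (hp : p ∈ C.strips b Φ s) :
    ∃ j < 4 ^ C.precision s + 1, ∃ k < 2 ^ C.precision s,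
      ((C.SolvesUpTo s (Nat.testBit k) ∧ Φ (Nat.testBit k)) ∧
        (netPoint ℝ (C.precision s) j k).1 ≤ b) ∧
      dist (C.fold ℝ s p) (C.fold ℝ s (netPoint ℝ (C.precision s) j k)) ≤ (1 / 2) ^ s := by
  obtain ⟨hfst, X, ⟨hX, hΦX⟩, hsnd⟩ := id hp
  obtain ⟨j, hj, k, hk, hbits, hle, hdist⟩ :=
    exists_netPoint_near ⟨⟨hfst.1, hfst.2.trans hb⟩, hsnd⟩
  have hbits' : ∀ i < C.precision s, X i = Nat.testBit k i := fun i hi => (hbits i hi).symm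
  have hvalid : C.SolvesUpTo s (Nat.testBit k) ∧ Φ (Nat.testBit k) :=
    ⟨hX.congr hbits', hΦ _ _ hbits' hΦX⟩
  have hnet := netPoint_mem_strips hj hvalid (hle.trans hfst.2)
  refine ⟨j, hj, k, hk, ⟨hvalid, hle.trans hfst.2⟩, ?_⟩
  calc dist (C.fold ℝ s p) (C.fold ℝ s (netPoint ℝ (C.precision s) j k))
      ≤ 2 ^ C.precision s * dist p (netPoint ℝ (C.precision s) j k) := by
        simpa using (lipschitzOnWith_fold s).dist_le_mul _ (strips_subset_slab hb hp) _
          (strips_subset_slab hb hnet)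
    _ ≤ 2 ^ C.precision s * (1 / 4) ^ C.precision s := by gcongr
    _ = (1 / 2) ^ C.precision s := by rw [← mul_pow]; norm_num
    _ ≤ (1 / 2) ^ s := pow_le_pow_of_le_one (by norm_num) (by norm_num) (le_precision s)

theorem lt_dist_of_mem_ballOfCode {x : ℝ × ℝ} {ε : ℝ} (hz : z ∈ ballOfCode c)
    (hx : (c.2 : ℝ) + ε ≤ dist x (castPair c.1)) : ε < dist z x := by
  have hz : dist z (castPair c.1) < c.2 := hz
  have := dist_triangle_left x (castPair c.1) z
  linarith

theorem Separated.fold_ne (h : C.Separated b Φ z s) (hb : b ≤ 1)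
    (hΦ : ∀ X Y, (∀ i < C.precision s, X i = Y i) → Φ X → Φ Y) {p : ℝ × ℝ}
    (hp : p ∈ C.strips b Φ s) : C.fold ℝ s p ≠ z := by
  rintro rfl
  obtain ⟨c, hball, hfar⟩ := h
  obtain ⟨j, hj, k, hk, hvalid, hdist⟩ :=
    exists_dist_fold_netPoint_le (by exact_mod_cast hb) hΦ hp
  exact hdist.not_gt (lt_dist_of_mem_ballOfCode hball (netFar_iff.1 hfar j hj k hk hvalid))

theorem exists_netFar_of_notMem {F : Set (ℝ × ℝ)} (hF : IsClosed F) (hz : z ∉ F) {s₁ : ℕ}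
    (hmaps : ∀ s ≥ s₁, MapsTo (C.fold ℝ s) (C.strips b Φ s) F) :
    ∃ c, z ∈ ballOfCode c ∧ ∃ s ≥ s₁, C.NetFar b Φ c s := by
  obtain ⟨c, hball, ε, hε, hfar⟩ := exists_ballOfCode_far_of_notMem hF hz
  obtain ⟨n, hn⟩ := exists_pow_lt_of_lt_one hε (y := (1 : ℝ) / 2) (by norm_num)
  refine ⟨c, hball, n + s₁, Nat.le_add_left _ _, netFar_iff.2 fun j hj k _ hk => ?_⟩
  have hpow : ((1 : ℝ) / 2) ^ (n + s₁) ≤ ε :=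
    (pow_le_pow_of_le_one (by norm_num) (by norm_num) (Nat.le_add_right n s₁)).trans hn.le
  have := hfar _ (hmaps _ (Nat.le_add_left _ _) (netPoint_mem_strips hj hk.1 hk.2))
  linarith

theorem Settled.exists_separated {m s₁ : ℕ} (h : C.Settled m s₁)
    (hz : z ∉ C.fold ℝ s₁ '' C.strips (breakpoint ℝ m) Φ s₁) :
    ∃ s ≥ s₁, C.Separated (breakpoint ℚ m) Φ z s := by
  obtain ⟨c, hball, s, hs, hfar⟩ := exists_netFar_of_notMem (C := C) (b := breakpoint ℚ m) (Φ := Φ)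
    (isClosed_image_strips (breakpoint_lt_one m).le Φ s₁) hz fun s hs p hp => by
      rw [cast_breakpoint] at hp
      exact ⟨p, strips_antitone _ _ hs hp, (h.fold_eq hs hp.1.2).symm⟩
  exact ⟨s, hs, c, hball, hfar⟩

end ConstraintSeq

namespace ConstraintSeq

variable {C : ConstraintSeq}

section Computable

variable {α : Type*} [Primcodable α]

theorem IsComputable.netFar (hC : C.IsComputable) {b : α → ℚ} {Φ : α → (ℕ → Bool) → Prop}
    {c : α → (ℚ × ℚ) × ℚ} {s : α → ℕ} (hb : Computable b)
    (hΦ : ComputablePred fun x : α × ℕ => Φ x.1 (Nat.testBit x.2)) (hc : Computable c)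
    (hs : Computable s) : ComputablePred fun a => C.NetFar (b a) (Φ a) (c a) (s a) := by
  have ha : Computable fun x : (α × ℕ) × ℕ => x.1.1 := Computable.fst.comp Computable.fst
  have hk : Computable fun x : (α × ℕ) × ℕ => x.2 := Computable.snd
  have hsa := hs.comp ha
  have hca := hc.comp ha
  have hpoint : Computable fun x : (α × ℕ) × ℕ =>
      netPoint ℚ (C.precision (s x.1.1)) x.1.2 x.2 :=
    computable_netPoint (hC.precision.comp hsa) (Computable.snd.comp Computable.fst) hk
  have hvalid := computablePred_and (computablePred_and (hC.solvesUpTo_testBit hsa hk)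
    (computablePred_comp hΦ (ha.pair hk)))
    (computablePred_rat_le (Computable.fst.comp hpoint) (hb.comp ha))
  have hfar := computablePred_rat_le
    (computable_rat_add (Computable.snd.comp hca) (computable_rat_pow (.const (1 / 2)) hsa))
    (computable_ratDist (hC.fold hsa hpoint) (Computable.fst.comp hca))
  have hprecision := hC.precision.comp hs
  exact computablePred_forall_lt
    (computable_nat_add (computable_nat_pow (.const 4) hprecision) (.const 1))
    (computablePred_forall_lt (computable_nat_pow (.const 2) (hprecision.comp Computable.fst))
      (computablePred_imp hvalid hfar))

theorem IsComputable.separated (hC : C.IsComputable) {b : α → ℚ} {Φ : α → (ℕ → Bool) → Prop}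
    {z : ℝ × ℝ} {s : α → ℕ} (hb : Computable b)
    (hΦ : ComputablePred fun x : α × ℕ => Φ x.1 (Nat.testBit x.2)) (hz : IsComputablePoint z)
    (hs : Computable s) : REPred fun a => C.Separated (b a) (Φ a) z (s a) := by
  have ha : Computable fun x : α × ((ℚ × ℚ) × ℚ) => x.1 := Computable.fst
  have hfar : ComputablePred fun x : α × ((ℚ × ℚ) × ℚ) =>
      C.NetFar (b x.1) (Φ x.1) x.2 (s x.1) :=
    hC.netFar (Φ := fun x => Φ x.1) (hb.comp ha)
      (computablePred_comp hΦ ((ha.comp Computable.fst).pair Computable.snd)) Computable.snd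
      (hs.comp ha)
  exact rePred_exists (rePred_and (rePred_comp hz Computable.snd) hfar.to_re)

end Computable

/-! ### The fan is `Π⁰₁` -/

theorem exists_netPoint_dist_fold_le_of_mem_strands {s : ℕ} {p : ℝ × ℝ} (hp : p ∈ C.strands s) :
    ∃ j < 4 ^ C.precision s + 1, ∃ k < 2 ^ C.precision s, C.SolvesUpTo s (Nat.testBit k) ∧
      dist (C.fold ℝ s p) (C.fold ℝ s (netPoint ℝ (C.precision s) j k)) ≤ (1 / 2) ^ s := by
  rcases hp with ⟨hfst, X, hX, hsnd⟩ | hright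
  · obtain ⟨j, hj, k, hk, ⟨⟨hvalid, _⟩, _⟩, hdist⟩ := exists_dist_fold_netPoint_le (C := C) le_rfl
      (Φ := fun _ => True) (fun _ _ _ => id) ⟨hfst, X, ⟨hX, trivial⟩, hsnd⟩
    exact ⟨j, hj, k, hk, hvalid, hdist⟩
  · have hcorner : ((1 : ℝ), C.bottom ℝ s) ∈
        Icc (0 : ℝ) 1 ×ˢ cylinder (C.leastSolution s) (C.precision s) :=
      ⟨right_mem_Icc.2 zero_le_one,
        left_mem_Icc.2 (le_add_of_nonneg_right (quarter_pow_pos _).le)⟩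
    obtain ⟨j, hj, k, hk, hbits, _, hdist⟩ := exists_netPoint_near hcorner
    have hvalid : C.SolvesUpTo s (Nat.testBit k) :=
      (solvesUpTo_leastSolution s).congr fun i hi => (hbits i hi).symm
    obtain ⟨hfst, hsnd⟩ := netPoint_mem hj k
    refine ⟨j, hj, k, hk, hvalid, dist_fold_le_of_mem_rightEnd hright ⟨⟨?_, hfst.2⟩, ?_⟩⟩
    · have := (abs_le.1 ((le_max_left _ _).trans hdist)).2
      dsimp only at this
      linarith
    · exact heights_subset s ⟨_, hvalid, hsnd⟩

theorem notMem_fan_iff {z : ℝ × ℝ} :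
    z ∉ C.fan ↔ ∃ c, z ∈ ballOfCode c ∧ ∃ s, C.NetFar 1 (fun _ => True) c s := by
  constructor
  · intro hz
    rw [fan_eq_iInter_stage, mem_iInter, not_forall] at hz
    obtain ⟨s₁, hs₁⟩ := hz
    obtain ⟨c, hball, s, _, hfar⟩ := exists_netFar_of_notMem (C := C) (b := 1)
      (Φ := fun _ => True) (isClosed_stage s₁) hs₁ fun s hs p hp =>
        stage_antitone hs ⟨p, strips_subset_strands (by simp) hp, rfl⟩
    exact ⟨c, hball, s, hfar⟩
  · rintro ⟨c, hball, s, hfar⟩ hz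
    obtain ⟨p, hp, rfl⟩ := fan_subset_stage s hz
    obtain ⟨j, hj, k, hk, hvalid, hdist⟩ := exists_netPoint_dist_fold_le_of_mem_strands hp
    have hle : (netPoint ℝ (C.precision s) j k).1 ≤ ((1 : ℚ) : ℝ) := by
      simpa using (netPoint_mem hj k).1.2
    exact hdist.not_gt (lt_dist_of_mem_ballOfCode hball
      (netFar_iff.1 hfar j hj k hk ⟨⟨hvalid, trivial⟩, hle⟩))

theorem isPi01Closed_fan (hC : C.IsComputable) : IsPi01Closed C.fan := by
  refine ⟨fun c => ∃ s, C.NetFar 1 (fun _ => True) c s, rePred_exists_nat ?_, ?_⟩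
  · exact hC.netFar (Φ := fun _ _ => True) (.const 1) computablePred_true Computable.fst
      Computable.snd
  · ext z
    rw [← not_iff_not, notMem_fan_iff]
    simp [and_comm]

/-! ### Computable points of the fan compute solutions -/

theorem exists_separated_of_bit_eq {m s₀ n : ℕ} (hs₀ : C.Settled m s₀) {p : ℝ × ℝ}
    (hp : p ∈ C.hairs) (hm : p.1 ≤ breakpoint ℝ m) {X : ℕ → Bool}
    (hX : ∀ s, p.2 ∈ cylinder X (C.precision s)) :
    ∃ s, (s₀ ≤ s ∧ n < s) ∧
      C.Separated (breakpoint ℚ m) (fun Y => Y n ≠ X n) (C.limitMap p) s := by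
  have hset : C.Settled m (s₀ + n + 1) := hs₀.mono (by omega)
  obtain ⟨s, hs, hsep⟩ := hset.exists_separated (Φ := fun Y => Y n ≠ X n) (z := C.limitMap p) (by
    rintro ⟨q, hq, hqp⟩
    rw [hset.limitMap_eq hp hm] at hqp
    obtain rfl := injOn_fold _ (strips_subset_slab (breakpoint_lt_one m).le hq)
      (hairs_subset_slab _ hp) hqp
    obtain ⟨_, Y, ⟨_, hne⟩, hY⟩ := hq
    have := C.le_precision (s₀ + n + 1)
    exact hne (bit_eq_of_mem_cylinder hY (hX _) (by omega)))
  exact ⟨s, by omega, hsep⟩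

theorem bit_eq_of_separated {m s₀ s n : ℕ} (hs₀ : C.Settled m s₀) {p : ℝ × ℝ}
    (hp : p ∈ C.hairs) (hm : p.1 ≤ breakpoint ℝ m) {X : ℕ → Bool} (hsol : C.Solves X)
    (hX : ∀ s, p.2 ∈ cylinder X (C.precision s)) (hs : s₀ ≤ s) (hn : n < s) {i : Bool}
    (hsep : C.Separated (breakpoint ℚ m) (fun Y => Y n ≠ i) (C.limitMap p) s) : X n = i := by
  by_contra hne
  have hstrip : p ∈ C.strips (breakpoint ℚ m : ℚ) (fun Y => Y n ≠ i) s := by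
    rw [cast_breakpoint]
    exact ⟨⟨hp.1.1, hm⟩, X, ⟨fun k _ => hsol k, hne⟩, hX s⟩
  refine hsep.fold_ne (breakpoint_lt_one m).le (fun Y Z hYZ hY => ?_) hstrip
    ((hs₀.mono hs).limitMap_eq hp hm).symm
  rwa [← hYZ n (hn.trans_le (le_precision s))]

theorem exists_computable_solves_of_fst_lt (hC : C.IsComputable) {p : ℝ × ℝ} (hp : p ∈ C.hairs)
    (hlt : p.1 < 1) (hcomp : IsComputablePoint (C.limitMap p)) :
    ∃ X, Computable X ∧ C.Solves X := by
  obtain ⟨m, hm⟩ := exists_lt_breakpoint hlt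
  obtain ⟨s₀, hs₀⟩ := exists_settled (C := C) m
  obtain ⟨X, hsol, hX⟩ := exists_solves_of_mem_limitHeights hp.2
  have hdec : ComputablePred fun x : ℕ × Bool × ℕ => s₀ ≤ x.2.2 ∧ x.1 < x.2.2 :=
    computablePred_and (computablePred_nat_le (.const s₀) (Computable.snd.comp Computable.snd))
      (computablePred_nat_lt Computable.fst (Computable.snd.comp Computable.snd))
  have hside : ComputablePred fun x : (ℕ × Bool × ℕ) × ℕ => Nat.testBit x.2 x.1.1 ≠ x.1.2.1 :=
    (computablePred_eq
      (computable_testBit Computable.snd (Computable.fst.comp Computable.fst))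
      (Computable.fst.comp (Computable.snd.comp Computable.fst))).not
  have hsep := hC.separated (Φ := fun (x : ℕ × Bool × ℕ) Y => Y x.1 ≠ x.2.1)
    (.const (breakpoint ℚ m)) hside hcomp (Computable.snd.comp Computable.snd)
  obtain ⟨f, hf, hspec⟩ := exists_computable_choice (R := fun n (x : Bool × ℕ) =>
      (s₀ ≤ x.2 ∧ n < x.2) ∧ C.Separated (breakpoint ℚ m) (fun Y => Y n ≠ x.1) (C.limitMap p) x.2)
    (rePred_and hdec.to_re hsep) fun n =>
      have ⟨s, hs⟩ := exists_separated_of_bit_eq hs₀ hp hm.le hX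
      ⟨(X n, s), hs⟩
  refine ⟨X, (Computable.fst.comp hf).of_eq fun n => ?_, hsol⟩
  obtain ⟨⟨hs, hn⟩, hsepn⟩ := hspec n
  exact (bit_eq_of_separated hs₀ hp hm.le hsol hX hs hn hsepn).symm

theorem exists_separated_limitMap_one {y : ℝ} (hy : y ∈ C.limitHeights) (n : ℕ) :
    ∃ s, C.Separated (breakpoint ℚ (n + 1)) (fun _ => True) (C.limitMap (1, y)) s := by
  obtain ⟨s₁, hs₁⟩ := exists_settled (C := C) (n + 2)
  obtain ⟨q, hq, hqz⟩ := limitMap_one_mem_image_tail hy _ _ hs₁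
  have hset : C.Settled (n + 1) s₁ := fun k hk => (Nat.le_succ _).trans (hs₁ k hk)
  obtain ⟨s, _, hsep⟩ := hset.exists_separated (Φ := fun _ => True) (z := C.limitMap (1, y)) (by
    rintro ⟨p, hp, hpz⟩
    obtain rfl := injOn_fold _ (strips_subset_slab (breakpoint_lt_one _).le hp)
      (tail_subset_slab _ _ hq) (hpz.trans hqz.symm)
    exact (hp.1.2.trans_lt (breakpoint_strictMono (n + 1).lt_succ_self)).not_ge hq.1.1)
  exact ⟨s, hsep⟩

/-- The hook of the later stage `k` with the least position folds the right ends of all hairs into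
the strip to the left of `breakpoint ℝ (C.pos k + 1)`, where no other later hook moves them. -/
theorem exists_fold_eq_limitMap_one {y : ℝ} (hy : y ∈ C.limitHeights) {s k : ℕ} (hsk : s ≤ k)
    (hmin : ∀ i, s ≤ i → i ≠ k → C.pos k + 1 ≤ C.pos i) :
    ∃ p ∈ C.strips (breakpoint ℝ (C.pos k + 1)) (fun _ => True) s,
      C.fold ℝ s p = C.limitMap (1, y) := by
  have hset : C.Settled (C.pos k + 1) (k + 1) := fun i hi => hmin i (by omega) (by omega)
  obtain ⟨q, hq, hqz⟩ := limitMap_one_mem_image_tail hy _ _ hset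
  obtain ⟨hleft, hright⟩ := hook_fst_mem_of_mem_tail hq
  have hheight : ((C.hook ℝ k).map q).2 ∈ C.heights s := by
    rw [Hook.map_of_breakpoint_succ_le hq.1.1]
    exact heights_antitone hsk
      (Icc_bottom_subset_heights k (level_mem_Icc_bottom (tail_subset_slab _ _ hq)))
  obtain ⟨X, hX, hcyl⟩ := hheight
  refine ⟨(C.hook ℝ k).map q,
    ⟨⟨(breakpoint_nonneg _).trans hleft, hright⟩, X, ⟨hX, trivial⟩, hcyl⟩, ?_⟩
  rw [← fold_eq_of_le_breakpoint hsk (fun i hi hik => hmin i hi hik.ne) hright]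
  exact hqz

theorem lt_pos_of_separated_limitMap_one {y : ℝ} (hy : y ∈ C.limitHeights) {n s : ℕ}
    (hsep : C.Separated (breakpoint ℚ (n + 1)) (fun _ => True) (C.limitMap (1, y)) s) {i : ℕ}
    (hi : s ≤ i) : n < C.pos i := by
  obtain ⟨k, hsk, hmin⟩ := exists_stage_pos_minimal (C := C) s
  obtain ⟨p, hp, hpz⟩ := exists_fold_eq_limitMap_one hy hsk hmin
  have hk : n < C.pos k := by
    by_contra! hle
    refine hsep.fold_ne (breakpoint_lt_one _).le (fun _ _ _ => id) ?_ hpz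
    rw [cast_breakpoint]
    exact ⟨⟨hp.1.1, hp.1.2.trans (breakpoint_strictMono.monotone (by omega))⟩, hp.2⟩
  by_cases h : i = k
  · rwa [h]
  · exact (Nat.lt_succ_of_lt hk).trans_le (hmin i hi h)

theorem exists_computable_solves_of_fst_eq (hC : C.IsComputable) {y : ℝ}
    (hy : y ∈ C.limitHeights) (hcomp : IsComputablePoint (C.limitMap (1, y))) :
    ∃ X, Computable X ∧ C.Solves X := by
  have hbreak : Computable fun x : ℕ × ℕ => breakpoint ℚ (x.1 + 1) :=
    computable_breakpoint (Computable.succ.comp Computable.fst)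
  obtain ⟨f, hf, hspec⟩ := exists_computable_choice
    (hC.separated (Φ := fun _ _ => True) hbreak computablePred_true hcomp Computable.snd)
    (exists_separated_limitMap_one hy)
  refine ⟨fun n => C.leastSolution (f n) n, hC.leastSolution.comp hf Computable.id, fun k => ?_⟩
  refine solvesUpTo_leastSolution _ k (not_le.1 fun hle => ?_)
  exact (lt_pos_of_separated_limitMap_one hy (hspec (C.pos k)) hle).false

theorem exists_computable_solves (hC : C.IsComputable) {z : ℝ × ℝ} (hz : z ∈ C.fan)
    (hcomp : IsComputablePoint z) : ∃ X, Computable X ∧ C.Solves X := by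
  obtain ⟨⟨x, y⟩, hp, rfl⟩ := hz
  rcases hp.1.2.lt_or_eq with hlt | rfl
  · exact exists_computable_solves_of_fst_lt hC hp hlt hcomp
  · exact exists_computable_solves_of_fst_eq hC hp.2 hcomp

end ConstraintSeq

end CantorFan

theorem exists_contractible_pi01_subset_of_unit_square_without_computable_points :
    ∃ Q : Set (ℝ × ℝ), Q.Nonempty ∧ IsPi01Closed Q ∧
      Q ⊆ Set.Icc (0:ℝ) 1 ×ˢ Set.Icc (0:ℝ) 1 ∧ ContractibleSpace ↥Q ∧
      ∀ x ∈ Q, ¬ IsComputablePoint x := by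
  refine ⟨CantorFan.diagonalConstraints.fan, CantorFan.ConstraintSeq.nonempty_fan,
    CantorFan.ConstraintSeq.isPi01Closed_fan CantorFan.isComputable_diagonalConstraints,
    CantorFan.ConstraintSeq.fan_subset_unit_square,
    CantorFan.ConstraintSeq.contractibleSpace_fan, fun z hz hcomp => ?_⟩
  obtain ⟨X, hX, hsolves⟩ := CantorFan.ConstraintSeq.exists_computable_solves
    CantorFan.isComputable_diagonalConstraints hz hcomp
  exact CantorFan.diagonalConstraints_not_solves hX hsolves
end

section
/- Let f : ℕ → ℕ be strictly increasing with f(0) = 0. For α ∈ 2^ℕ define ι_f(α) ∈ 2^ℕ as the infinite concatenation, over i = 0, 1, 2, …, of the finite blocks (α(i), α(f(i)), α(f(i)+1), …, α(f(i+1)−1)), and define r : 2^ℕ → ℝ by r(β) = Σ_{i∈ℕ} β(i)·2^{−(i+1)}. Then the map α ↦ r(ι_f(α)) from 2^ℕ to ℝ is injective. -/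
open Set Metric

/-- The `i`-th block of `ι_f(α)`: `α(i)` followed by `α(f(i)), …, α(f(i+1)-1)`. -/
def blockList (f : ℕ → ℕ) (a : ℕ → Bool) (i : ℕ) : List Bool :=
  a i :: (List.range (f (i + 1) - f i)).map (fun j => a (f i + j))

/-- The infinite concatenation of the blocks `blockList f a 0, blockList f a 1, …`
(each block is nonempty, so the first `n + 1` blocks determine entry `n`). -/
def iotaMap (f : ℕ → ℕ) (a : ℕ → Bool) : ℕ → Bool :=
  fun n => (((List.range (n + 1)).map (blockList f a)).flatten).getD n false

/-- `r(β) = Σ_i β(i)·2^{-(i+1)}`. -/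
noncomputable def rCantor (b : ℕ → Bool) : ℝ :=
  ∑' i : ℕ, (if b i then (1:ℝ) else 0) * 2 ^ (-((i : ℤ) + 1))

/-! Every index `n` is read twice by `ι_f`: at the head of block `n`, and in the tail of the block
`i` with `f i ≤ n < f (i + 1)`. Hence if two images first differ at position `p`, they differ in the
same way at some later position `q`. The sequence with the larger digit at `p` then has a nonzero
digit at `q`, and this makes its value strictly larger, because the tail of the other sequence is
worth at most one unit in place `p`. -/

section OfDigits

variable {b : ℕ} {x y : ℕ → Fin b}

theorem ofDigits_pos_of_digit_pos {q : ℕ} (hq : 0 < (x q : ℕ)) : 0 < Real.ofDigits x := by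
  have hb : 0 < b := (x q).pos
  have hterm : 0 < Real.ofDigitsTerm x q := by
    unfold Real.ofDigitsTerm
    positivity
  exact Real.summable_ofDigitsTerm.tsum_pos (fun _ ↦ Real.ofDigitsTerm_nonneg) q hterm

theorem ofDigits_lt_ofDigits {p q : ℕ} (heq : ∀ i < p, x i = y i) (hp : x p < y p) (hpq : p < q)
    (hq : 0 < (y q : ℕ)) : Real.ofDigits x < Real.ofDigits y := by
  have hb : 0 < b := (x p).pos
  have hhead : ∑ i ∈ Finset.range p, Real.ofDigitsTerm x i =
      ∑ i ∈ Finset.range p, Real.ofDigitsTerm y i :=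
    Finset.sum_congr rfl fun i hi ↦ by
      simp only [Real.ofDigitsTerm, heq i (Finset.mem_range.mp hi)]
  have hdigit : (x p : ℝ) + 1 ≤ y p := mod_cast hp
  have hx_tail : Real.ofDigits (fun i ↦ x (i + (p + 1))) ≤ 1 := Real.ofDigits_le_one _
  have hy_tail : 0 < Real.ofDigits (fun i ↦ y (i + (p + 1))) :=
    ofDigits_pos_of_digit_pos (q := q - (p + 1)) (by rwa [Nat.sub_add_cancel hpq])
  rw [Real.ofDigits_eq_sum_add_ofDigits x (p + 1), Real.ofDigits_eq_sum_add_ofDigits y (p + 1),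
    Finset.sum_range_succ, Finset.sum_range_succ, hhead, add_assoc, add_assoc,
    Real.ofDigitsTerm, Real.ofDigitsTerm, mul_comm, mul_comm (y p : ℝ), ← mul_add, ← mul_add]
  gcongr _ + _ * ?_
  linarith

theorem ofDigits_comp_injective {s : ℕ → ℕ} (hs : ∀ n, (s ⁻¹' {n}).Nontrivial) :
    Function.Injective fun x : ℕ → Fin b ↦ Real.ofDigits (x ∘ s) := by
  have hs_surj : Function.Surjective s := fun n ↦ (hs n).nonempty
  intro x y hxy
  refine hs_surj.injective_comp_right (by_contra fun hne ↦ ?_)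
  obtain ⟨p, hp, hmin⟩ : ∃ p, x (s p) ≠ y (s p) ∧ ∀ i < p, x (s i) = y (s i) :=
    ⟨_, PiNat.apply_firstDiff_ne hne, fun _ ↦ PiNat.apply_eq_of_lt_firstDiff⟩
  clear hne
  obtain ⟨q, hqs : s q = s p, hqp⟩ := (hs (s p)).exists_ne p
  have hpq : p < q := by
    refine hqp.symm.lt_of_le (not_lt.mp fun hlt ↦ hp ?_)
    simpa only [hqs] using hmin q hlt
  wlog hlt : x (s p) < y (s p) generalizing x y
  · exact this hxy.symm hp.symm (fun i hi ↦ (hmin i hi).symm) (hp.symm.lt_of_le (not_lt.mp hlt))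
  have hq : 0 < (y (s q) : ℕ) := by
    rw [hqs]
    exact (Nat.zero_le _).trans_lt hlt
  exact (ofDigits_lt_ofDigits hmin hlt hpq hq).ne hxy

end OfDigits

theorem rCantor_eq_ofDigits (b : ℕ → Bool) :
    rCantor b = Real.ofDigits (finTwoEquiv.symm ∘ b) := by
  refine tsum_congr fun i ↦ ?_
  have hpow : (2 : ℝ) ^ (-((i : ℤ) + 1)) = (2 ^ (i + 1))⁻¹ := by
    rw [zpow_neg]
    norm_cast
  rw [hpow]
  cases hb : b i <;> simp [Real.ofDigitsTerm, finTwoEquiv, hb]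

section BlockOffset

variable {β : Type*} (B : ℕ → List β)

/-- The position at which block `i` starts in the concatenation `B 0 ++ B 1 ++ ⋯`. -/
def blockOffset (i : ℕ) : ℕ :=
  ((List.range i).flatMap B).length

theorem blockOffset_succ (i : ℕ) : blockOffset B (i + 1) = blockOffset B i + (B i).length := by
  simp [blockOffset, List.range_succ]

theorem blockOffset_monotone : Monotone (blockOffset B) :=
  monotone_nat_of_le_succ fun i ↦ by simp [blockOffset_succ]

variable {B}

theorem le_blockOffset (hB : ∀ i, B i ≠ []) (i : ℕ) : i ≤ blockOffset B i :=
  StrictMono.le_apply <| strictMono_nat_of_lt_succ fun i ↦ by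
    simpa [blockOffset_succ, List.length_pos_iff] using hB i

theorem blockOffset_add_lt {i j k : ℕ} (hj : j < (B i).length) (hik : i < k) :
    blockOffset B i + j < blockOffset B k :=
  calc
    blockOffset B i + j < blockOffset B (i + 1) := by
      rw [blockOffset_succ]
      gcongr
    _ ≤ blockOffset B k := blockOffset_monotone B hik

theorem getElem?_flatMap_range {i j m : ℕ} (hj : j < (B i).length) (him : i < m) :
    ((List.range m).flatMap B)[blockOffset B i + j]? = (B i)[j]? := by
  induction m, him using Nat.le_induction with
  | base =>
    rw [List.range_succ, List.flatMap_append, blockOffset, List.getElem?_append_right (by simp)]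
    simp
  | succ m him ih =>
    rw [List.range_succ, List.flatMap_append,
      List.getElem?_append_left (blockOffset_add_lt hj him), ih]

end BlockOffset

section IotaIndex

variable (f : ℕ → ℕ)

/-- The indices at which block `i` of `ι_f(α)` reads `α`, in order. -/
def indexBlock (i : ℕ) : List ℕ :=
  i :: List.range' (f i) (f (i + 1) - f i)

/-- The index at which entry `n` of `ι_f(α)` reads `α`, so that `ι_f(α) = α ∘ iotaIndex f`. The
blocks are nonempty, so position `n` lies in the first `n + 1` of them and the default value `0` is
never taken. -/
def iotaIndex (n : ℕ) : ℕ :=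
  ((List.range (n + 1)).flatMap (indexBlock f)).getD n 0

theorem blockList_eq_map_indexBlock (a : ℕ → Bool) :
    blockList f a = fun i ↦ (indexBlock f i).map a := by
  funext i
  simp [blockList, indexBlock, List.range'_eq_map_range]

theorem indexBlock_ne_nil (i : ℕ) : indexBlock f i ≠ [] :=
  List.cons_ne_nil _ _

theorem iotaMap_eq_comp_iotaIndex (a : ℕ → Bool) : iotaMap f a = a ∘ iotaIndex f := by
  funext n
  have hblocks : ((List.range (n + 1)).map (blockList f a)).flatten =
      ((List.range (n + 1)).flatMap (indexBlock f)).map a := by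
    simp [List.flatMap, List.map_flatten, Function.comp_def, blockList_eq_map_indexBlock]
  have hn : n < ((List.range (n + 1)).flatMap (indexBlock f)).length :=
    le_blockOffset (indexBlock_ne_nil f) (n + 1)
  rw [iotaMap, hblocks, Function.comp_apply, iotaIndex, List.getD_eq_getElem _ _ hn,
    List.getD_eq_getElem _ _ (by rwa [List.length_map]), List.getElem_map]

variable {f}

theorem iotaIndex_blockOffset_add {i j : ℕ} (hj : j < (indexBlock f i).length) :
    iotaIndex f (blockOffset (indexBlock f) i + j) = (indexBlock f i)[j] := by
  have hi : i < blockOffset (indexBlock f) i + j + 1 :=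
    Nat.lt_succ_of_le <| (le_blockOffset (indexBlock_ne_nil f) i).trans (Nat.le_add_right _ _)
  rw [iotaIndex, List.getD_eq_getElem?_getD, getElem?_flatMap_range hj hi,
    List.getElem?_eq_getElem hj, Option.getD_some]

theorem nontrivial_preimage_iotaIndex {n i : ℕ} (hn : n ∈ Ico (f i) (f (i + 1))) :
    (iotaIndex f ⁻¹' {n}).Nontrivial := by
  obtain ⟨j, rfl⟩ := Nat.exists_eq_add_of_le hn.1
  have hhead : 0 < (indexBlock f (f i + j)).length := by simp [indexBlock]
  have htail : j + 1 < (indexBlock f i).length := by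
    have := hn.2
    simp only [indexBlock, List.length_cons, List.length_range']
    omega
  refine ⟨blockOffset (indexBlock f) (f i + j) + 0, ?_,
    blockOffset (indexBlock f) i + (j + 1), ?_, ?_⟩
  · exact iotaIndex_blockOffset_add hhead
  · rw [mem_preimage, iotaIndex_blockOffset_add htail]
    simp [indexBlock]
  · rcases lt_trichotomy (f i + j) i with hlt | heq | hgt
    · have := blockOffset_add_lt hhead hlt
      omega
    · rw [heq]
      omega
    · have := blockOffset_add_lt htail hgt
      omega

end IotaIndex

theorem rCantor_comp_iotaMap_injective_general (f : ℕ → ℕ)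
    (hf : ⋃ i, Ico (f i) (f (i + 1)) = univ) :
    Function.Injective (fun a : ℕ → Bool => rCantor (iotaMap f a)) := by
  have htwice (n : ℕ) : (iotaIndex f ⁻¹' {n}).Nontrivial := by
    obtain ⟨i, hi⟩ := iUnion_eq_univ_iff.mp hf n
    exact nontrivial_preimage_iotaIndex hi
  simp only [rCantor_eq_ofDigits, iotaMap_eq_comp_iotaIndex]
  exact (ofDigits_comp_injective htwice).comp finTwoEquiv.symm.injective.comp_left

theorem rCantor_comp_iotaMap_injective (f : ℕ → ℕ) (hmono : StrictMono f) (h0 : f 0 = 0) :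
    Function.Injective (fun a : ℕ → Bool => rCantor (iotaMap f a)) :=
  rCantor_comp_iotaMap_injective_general f <| by
    simpa [h0] using iUnion_Ico_map_succ_eq_Ici (f := f) (fun n ↦ hmono.monotone bot_le)
      hmono.not_bddAbove_range_of_isSuccArchimedean
end

section
/- Let H ⊆ ℝ² be the harmonic comb, the topological closure of ({1/(n+1) : n ∈ ℕ} × [0,1]) ∪ ([0,1] × {0}). Then H is a dendroid, H is not a dendrite, and the subspace H is contractible. -/
open Set Metric

/-- The harmonic comb. -/
def harmonicComb : Set (ℝ × ℝ) :=
  closure (({x : ℝ | ∃ n : ℕ, x = 1 / (n + 1)} ×ˢ Set.Icc (0:ℝ) 1) ∪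
    (Set.Icc (0:ℝ) 1 ×ˢ ({0} : Set ℝ)))

/-!
Write the comb as teeth `{a} × [0,1]`, `a ∈ K`, over the base `[0,1] × {0}`, where `K` is the
closure of the unit fractions; what matters about `K ⊆ [0,1]` is that it is compact, has dense
complement and accumulates at one of its own points.

* Every point is joined to the base by a segment of its tooth, and base points are joined by
  segments of the base. Concatenating these segments gives arcs; moving along them, first
  vertically and then horizontally, contracts the comb.
* A closed connected subset of the comb contains, with any two points, the polygonal arc joining
  them. A gap in a tooth could be widened to a rectangle whose vertical sides avoid `K`, and this
  would disconnect the subset; on the base one argues at abscissas outside `K` and passes to the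
  closure. So intersections of closed connected subsets are connected.
* A neighbourhood of the top of a limit tooth that avoids the base projects into `K`, hence is not
  connected.
-/

open Filter Topology

section Arcs

variable {α : Type*} [TopologicalSpace α] {A Y : Set α} {x y z : α}

lemma IsArc.exists_injOn_Icc (h : IsArc A x y) :
    ∃ f : ℝ → α, ContinuousOn f (Icc 0 1) ∧ InjOn f (Icc 0 1) ∧ f '' Icc 0 1 = A ∧
      f 0 = x ∧ f 1 = y := by
  obtain ⟨f, hcont, hinj, rfl, rfl, rfl⟩ := h
  have hext : ∀ t (ht : t ∈ Icc (0 : ℝ) 1), IccExtend zero_le_one f t = f ⟨t, ht⟩ :=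
    fun t ht ↦ IccExtend_of_mem zero_le_one f ht
  refine ⟨IccExtend zero_le_one f, hcont.Icc_extend'.continuousOn, fun s hs t ht hst ↦ ?_, ?_,
    hext 0 _, hext 1 _⟩
  · rw [hext s hs, hext t ht] at hst
    exact congrArg Subtype.val (hinj hst)
  · rw [image_eq_range]
    exact congrArg range (funext fun t ↦ hext t t.2)

lemma SameArcComponent.of_injOn_Icc {f : ℝ → α} {a b : ℝ} (hab : a ≤ b)
    (hcont : ContinuousOn f (Icc a b)) (hinj : InjOn f (Icc a b)) (hY : MapsTo f (Icc a b) Y) :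
    SameArcComponent Y (f a) (f b) := by
  rcases hab.eq_or_lt with rfl | hlt
  · exact Or.inl rfl
  · let e := (iccHomeoI a b hlt).symm
    refine Or.inr ⟨_, ?_, fun t ↦ f (e t), hcont.domRestrict.comp e.continuous,
      (injOn_iff_injective.1 hinj).comp e.injective, rfl, by simp [e], by simp [e]⟩
    rintro _ ⟨t, rfl⟩
    exact hY (e t).2

lemma SameArcComponent.of_concat {f g : ℝ → α} {a b c : ℝ} (hab : a ≤ b) (hbc : b ≤ c)
    (hf : ContinuousOn f (Icc a b)) (hg : ContinuousOn g (Icc b c))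
    (hf_inj : InjOn f (Icc a b)) (hg_inj : InjOn g (Icc b c)) (hfg : f b = g b)
    (hne : ∀ u ∈ Ico a b, ∀ v ∈ Icc b c, f u ≠ g v)
    (hfY : MapsTo f (Icc a b) Y) (hgY : MapsTo g (Icc b c) Y) :
    SameArcComponent Y (f a) (g c) := by
  let k : ℝ → α := fun u ↦ if u ≤ b then f u else g u
  have hkf : EqOn f k (Icc a b) := fun u hu ↦ (if_pos hu.2).symm
  have hkg : EqOn g k (Icc b c) := by
    intro u hu
    rcases hu.1.eq_or_lt with rfl | hlt
    · exact hfg.symm.trans (if_pos le_rfl).symm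
    · exact (if_neg hlt.not_ge).symm
  have hk_cont : ContinuousOn k (Icc a c) := by
    rw [← Icc_union_Icc_eq_Icc hab hbc]
    exact (hf.congr hkf.symm).union_of_isClosed (hg.congr hkg.symm) isClosed_Icc isClosed_Icc
  have hk_inj : InjOn k (Icc a c) := by
    rw [← Ico_union_Icc_eq_Icc hab hbc, injOn_union
      (disjoint_left.2 fun _ hu hv ↦ hu.2.not_ge hv.1)]
    refine ⟨(hf_inj.congr hkf).mono Ico_subset_Icc_self, hg_inj.congr hkg, fun u hu v hv ↦ ?_⟩
    rw [← hkf (Ico_subset_Icc_self hu), ← hkg hv]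
    exact hne u hu v hv
  have hkY : MapsTo k (Icc a c) Y := by
    rw [← Icc_union_Icc_eq_Icc hab hbc]
    exact (hfY.congr hkf).union (hgY.congr hkg)
  rw [hkf ⟨le_rfl, hab⟩, hkg ⟨hbc, le_rfl⟩]
  exact .of_injOn_Icc (hab.trans hbc) hk_cont hk_inj hkY

/-- The first arc is followed up to the first time `t` at which it meets the second one. -/
lemma SameArcComponent.trans [T2Space α] (hxy : SameArcComponent Y x y)
    (hyz : SameArcComponent Y y z) : SameArcComponent Y x z := by
  rcases hxy with rfl | ⟨A, hAY, hA⟩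
  · exact hyz
  rcases hyz with rfl | ⟨B, hBY, hB⟩
  · exact Or.inr ⟨A, hAY, hA⟩
  obtain ⟨f, hf, hf_inj, rfl, rfl, rfl⟩ := hA.exists_injOn_Icc
  obtain ⟨g, hg, hg_inj, rfl, hgf, rfl⟩ := hB.exists_injOn_Icc
  have hmeet : IsCompact (Icc 0 1 ∩ f ⁻¹' (g '' Icc 0 1)) :=
    isCompact_Icc.of_isClosed_subset (hf.preimage_isClosed_of_isClosed isClosed_Icc
      (isCompact_Icc.image_of_continuousOn hg).isClosed) inter_subset_left
  obtain ⟨t, ⟨ht, s, hs, hst⟩, ht_least⟩ := hmeet.exists_isLeast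
    ⟨1, right_mem_Icc.2 zero_le_one, 0, left_mem_Icc.2 zero_le_one, hgf⟩
  have hshift : MapsTo (fun u ↦ u - t + s) (Icc t (t + (1 - s))) (Icc 0 1) :=
    fun u hu ↦ ⟨by linarith [hu.1, hs.1], by linarith [hu.2]⟩
  have hf_sub : Icc 0 t ⊆ Icc 0 1 := Icc_subset_Icc_right ht.2
  have key : SameArcComponent Y (f 0) (g (t + (1 - s) - t + s)) := by
    refine .of_concat (g := fun u ↦ g (u - t + s)) ht.1 (by linarith [hs.2]) (hf.mono hf_sub)
      (hg.comp (by fun_prop) hshift) (hf_inj.mono hf_sub)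
      (fun u hu v hv huv ↦ by simpa using hg_inj (hshift hu) (hshift hv) huv)
      (by simpa using hst.symm) ?_ ((mapsTo_iff_image_subset.2 hAY).mono_left hf_sub)
      ((mapsTo_iff_image_subset.2 hBY).comp hshift)
    intro u hu v hv huv
    exact hu.2.not_ge (ht_least ⟨hf_sub ⟨hu.1, hu.2.le⟩, _, hshift hv, huv.symm⟩)
  simpa using key

end Arcs

section Unicoherence

variable {α : Type*} [TopologicalSpace α]

lemma inter_frontier_nonempty_of_isPreconnected {C U : Set α} (hC : IsPreconnected C)
    (hU : (C ∩ U).Nonempty) (hU' : (C ∩ Uᶜ).Nonempty) : (C ∩ frontier U).Nonempty := by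
  rw [frontier_eq_closure_inter_closure]
  refine isPreconnected_closed_iff.1 hC _ _ isClosed_closure isClosed_closure ?_
    (hU.mono (inter_subset_inter_right _ subset_closure))
    (hU'.mono (inter_subset_inter_right _ subset_closure))
  exact fun p _ ↦ (em (p ∈ U)).imp (subset_closure ·) (subset_closure ·)

lemma HereditarilyUnicoherent.of_exists_connector {X : Set α}
    (h : ∀ p ∈ X, ∀ q ∈ X, ∃ T, p ∈ T ∧ q ∈ T ∧ IsPreconnected T ∧
      ∀ C ⊆ X, IsClosed C → IsPreconnected C → p ∈ C → q ∈ C → T ⊆ C) :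
    HereditarilyUnicoherent X := by
  intro Y hYX hY A B hAY hBY hA_closed hB_closed hA hB hAB
  constructor
  · obtain ⟨p, -, hp⟩ := isPreconnected_closed_iff.1 hY.2.isPreconnected A B hA_closed hB_closed
      hAB.ge (by simpa [inter_eq_self_of_subset_right hAY] using hA.nonempty)
      (by simpa [inter_eq_self_of_subset_right hBY] using hB.nonempty)
    exact ⟨p, hp⟩
  · refine isPreconnected_of_forall_pair fun p hp q hq ↦ ?_
    obtain ⟨T, hpT, hqT, hT, hmin⟩ := h p (hYX (hAY hp.1)) q (hYX (hAY hq.1))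
    exact ⟨T, subset_inter
      (hmin A (hAY.trans hYX) hA_closed hA.isPreconnected hp.1 hq.1)
      (hmin B (hBY.trans hYX) hB_closed hB.isPreconnected hp.2 hq.2), hpT, hqT, hT⟩

end Unicoherence

section Segments

variable {E : Type*} [AddCommGroup E] [Module ℝ E] [TopologicalSpace E] [ContinuousAdd E]
  [ContinuousSMul ℝ E] {S : Set E}

lemma SameArcComponent.of_segment_subset {x y : E} (h : segment ℝ x y ⊆ S) :
    SameArcComponent S x y := by
  by_cases hxy : x = y
  · exact Or.inl hxy
  · exact Or.inr ⟨_, h, Path.segment x y, (Path.segment x y).continuous,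
      Path.segment_injective_of_ne hxy, Path.range_segment x y, (Path.segment x y).source,
      (Path.segment x y).target⟩

lemma homotopic_of_segment_subset {X : Type*} [TopologicalSpace X] {f g : C(X, S)}
    (h : ∀ x, segment ℝ (f x : E) (g x) ⊆ S) : f.Homotopic g :=
  ⟨{ toFun := fun z ↦ ⟨Path.segment (f z.2 : E) (g z.2) z.1,
        h z.2 (Path.range_segment (f z.2 : E) (g z.2) ▸ mem_range_self z.1)⟩
     continuous_toFun := by
        refine Continuous.subtype_mk ?_ _
        simp only [Path.segment_apply, AffineMap.lineMap_apply_module]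
        fun_prop
     map_zero_left := fun x ↦ by simp
     map_one_left := fun x ↦ by simp }⟩

end Segments

/-- The comb with teeth of height `1` over the points of `K`, standing on the base
`[0,1] × {0}`. -/
def comb (K : Set ℝ) : Set (ℝ × ℝ) :=
  K ×ˢ Icc (0 : ℝ) 1 ∪ Icc (0 : ℝ) 1 ×ˢ {(0 : ℝ)}

section Comb

variable {K : Set ℝ}

lemma closure_comb (K : Set ℝ) : closure (comb K) = comb (closure K) := by
  simp only [comb, closure_union, closure_prod_eq, isClosed_Icc.closure_eq, closure_singleton]

lemma isCompact_comb (hK : IsCompact K) : IsCompact (comb K) :=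
  (hK.prod isCompact_Icc).union (isCompact_Icc.prod isCompact_singleton)

lemma fst_mem_of_mem_comb {p : ℝ × ℝ} (hp : p ∈ comb K) (h0 : p.2 ≠ 0) : p.1 ∈ K :=
  hp.elim And.left fun h ↦ absurd h.2 h0

lemma snd_nonneg_of_mem_comb {p : ℝ × ℝ} (hp : p ∈ comb K) : 0 ≤ p.2 :=
  hp.elim (fun h ↦ h.2.1) fun h ↦ (show p.2 = 0 from h.2).ge

lemma fst_mem_Icc_of_mem_comb (hK : K ⊆ Icc 0 1) {p : ℝ × ℝ} (hp : p ∈ comb K) :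
    p.1 ∈ Icc (0 : ℝ) 1 :=
  hp.elim (fun h ↦ hK h.1) And.left

lemma base_segment_subset_comb {a b : ℝ} (ha : a ∈ Icc (0 : ℝ) 1) (hb : b ∈ Icc (0 : ℝ) 1) :
    segment ℝ (a, (0 : ℝ)) (b, 0) ⊆ comb K :=
  (((convex_Icc 0 1).prod (convex_singleton 0)).segment_subset (x := (a, 0)) (y := (b, 0))
    ⟨ha, rfl⟩ ⟨hb, rfl⟩).trans subset_union_right

lemma tooth_segment_subset_comb {p : ℝ × ℝ} (hp : p ∈ comb K) :
    segment ℝ p (p.1, 0) ⊆ comb K := by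
  obtain ⟨a, b⟩ := p
  rcases hp with ⟨ha, hb⟩ | ⟨ha, rfl⟩
  · refine (((convex_singleton a).prod (convex_Icc 0 1)).segment_subset
      (x := (a, b)) (y := (a, 0)) ⟨rfl, hb⟩ ⟨rfl, left_mem_Icc.2 zero_le_one⟩).trans ?_
    exact (prod_mono_left (singleton_subset_iff.2 ha)).trans subset_union_left
  · exact base_segment_subset_comb ha ha

lemma arcwiseConnectedSet_comb (hK : K ⊆ Icc 0 1) : ArcwiseConnectedSet (comb K) := by
  intro p hp q hq hpq
  have hp_base : SameArcComponent (comb K) p (p.1, 0) :=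
    .of_segment_subset (tooth_segment_subset_comb hp)
  have hbase : SameArcComponent (comb K) (p.1, 0) (q.1, 0) :=
    .of_segment_subset (base_segment_subset_comb (fst_mem_Icc_of_mem_comb hK hp)
      (fst_mem_Icc_of_mem_comb hK hq))
  have hq_base : SameArcComponent (comb K) (q.1, 0) q :=
    .of_segment_subset (segment_symm ℝ q (q.1, 0) ▸ tooth_segment_subset_comb hq)
  exact ((hp_base.trans hbase).trans hq_base).resolve_left hpq

lemma contractibleSpace_comb (hK : K ⊆ Icc 0 1) : ContractibleSpace (comb K) := by
  have h0 : (0 : ℝ) ∈ Icc (0 : ℝ) 1 := left_mem_Icc.2 zero_le_one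
  let base : C(comb K, comb K) :=
    ⟨fun p ↦ ⟨(p.1.1, 0), tooth_segment_subset_comb p.2 (right_mem_segment _ _ _)⟩, by fun_prop⟩
  let origin : comb K := ⟨(0, 0), Or.inr ⟨h0, rfl⟩⟩
  have hvert : (ContinuousMap.id (comb K)).Homotopic base :=
    homotopic_of_segment_subset fun p ↦ tooth_segment_subset_comb p.2
  have hhoriz : base.Homotopic (ContinuousMap.const _ origin) :=
    homotopic_of_segment_subset fun p ↦
      base_segment_subset_comb (fst_mem_Icc_of_mem_comb hK p.2) h0
  exact (contractible_iff_id_nullhomotopic _).2 ⟨origin, hvert.trans hhoriz⟩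

lemma isContinuum_comb (hK : IsCompact K) (hKI : K ⊆ Icc 0 1) : IsContinuum (comb K) := by
  have := contractibleSpace_comb hKI
  exact ⟨isCompact_comb hK, isConnected_iff_connectedSpace.2 inferInstance⟩

lemma mk_mem_of_subset_comb (hK : Dense Kᶜ) {C : Set (ℝ × ℝ)} (hCK : C ⊆ comb K)
    (hC_closed : IsClosed C) (hC : IsPreconnected C) {a b c r : ℝ} (hb : (a, b) ∈ C)
    (hc : (a, c) ∈ C) (hr : r ∈ uIcc b c) : (a, r) ∈ C := by
  wlog hbc : b ≤ c generalizing b c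
  · exact this hc hb (uIcc_comm b c ▸ hr) (le_of_not_ge hbc)
  rw [uIcc_of_le hbc] at hr
  by_contra hgap
  have hbr : b < r := hr.1.lt_of_ne fun h ↦ hgap (h ▸ hb)
  have hrc : r < c := hr.2.lt_of_ne fun h ↦ hgap (h ▸ hc)
  have hopen : {x | (x, r) ∉ C} ∈ 𝓝 a :=
    (hC_closed.preimage (by fun_prop : Continuous fun x : ℝ ↦ (x, r))).isOpen_compl.mem_nhds hgap
  obtain ⟨l, m, ⟨hl, hm⟩, hlm⟩ := mem_nhds_iff_exists_Ioo_subset.1 hopen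
  obtain ⟨u, huK, hlu, hua⟩ := hK.exists_between hl
  obtain ⟨v, hvK, hav, hvm⟩ := hK.exists_between hm
  have huv : u < v := hua.trans hav
  obtain ⟨⟨x, y⟩, hxy, hfront⟩ := inter_frontier_nonempty_of_isPreconnected
    (U := Ioo u v ×ˢ Ioi r) hC ⟨(a, c), hc, ⟨hua, hav⟩, hrc⟩
    ⟨(a, b), hb, fun h ↦ hbr.not_gt h.2⟩
  rw [frontier_prod_eq, closure_Ioo huv.ne, frontier_Ioi, frontier_Ioo huv, closure_Ioi] at hfront
  rcases hfront with ⟨hx, rfl⟩ | ⟨hx, hy⟩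
  · exact hlm ⟨hlu.trans_le hx.1, hx.2.trans_lt hvm⟩ hxy
  · have hy0 : 0 < y := ((snd_nonneg_of_mem_comb (hCK hb)).trans_lt hbr).trans_le hy
    have hxK : x ∈ K := fst_mem_of_mem_comb (hCK hxy) hy0.ne'
    rcases hx with rfl | rfl
    · exact huK hxK
    · exact hvK hxK

lemma mk_zero_mem_of_subset_comb (hK : Dense Kᶜ) {C : Set (ℝ × ℝ)} (hCK : C ⊆ comb K)
    (hC_closed : IsClosed C) (hC : IsPreconnected C) {p q : ℝ × ℝ} (hp : p ∈ C) (hq : q ∈ C)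
    (hpq : p.1 < q.1) {x : ℝ} (hx : x ∈ Icc p.1 q.1) : (x, (0 : ℝ)) ∈ C := by
  have hproj : Icc p.1 q.1 ⊆ Prod.fst '' C :=
    (hC.image Prod.fst continuous_fst.continuousOn).Icc_subset (mem_image_of_mem _ hp)
      (mem_image_of_mem _ hq)
  have hoff : Ioo p.1 q.1 ∩ Kᶜ ⊆ {d | (d, (0 : ℝ)) ∈ C} := by
    rintro d ⟨hd, hdK⟩
    obtain ⟨⟨d, y⟩, hdy, rfl⟩ := hproj (Ioo_subset_Icc_self hd)
    have hy : y = 0 := by_contra fun h ↦ hdK (fst_mem_of_mem_comb (hCK hdy) h)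
    exact hy ▸ hdy
  have hclosed : IsClosed {d | (d, (0 : ℝ)) ∈ C} := hC_closed.preimage (by fun_prop)
  have hopen : Ioo p.1 q.1 ⊆ {d | (d, (0 : ℝ)) ∈ C} :=
    (hK.open_subset_closure_inter isOpen_Ioo).trans (closure_minimal hoff hclosed)
  exact closure_minimal hopen hclosed (closure_Ioo hpq.ne ▸ hx)

lemma tooth_segment_subset_of_subset_comb (hK : Dense Kᶜ) {C : Set (ℝ × ℝ)} (hCK : C ⊆ comb K)
    (hC_closed : IsClosed C) (hC : IsPreconnected C) {p q : ℝ × ℝ} (hp : p ∈ C) (hq : q ∈ C)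
    (hpq : p.1 = q.1) : segment ℝ p q ⊆ C := by
  obtain ⟨a, b⟩ := p
  obtain ⟨_, c⟩ := q
  obtain rfl : a = _ := hpq
  rw [← Prod.image_mk_segment_right, segment_eq_uIcc, image_subset_iff]
  exact fun r hr ↦ mk_mem_of_subset_comb hK hCK hC_closed hC hp hq hr

lemma base_segment_subset_of_subset_comb (hK : Dense Kᶜ) {C : Set (ℝ × ℝ)} (hCK : C ⊆ comb K)
    (hC_closed : IsClosed C) (hC : IsPreconnected C) {p q : ℝ × ℝ} (hp : p ∈ C) (hq : q ∈ C)
    (hpq : p.1 ≠ q.1) : segment ℝ (p.1, (0 : ℝ)) (q.1, 0) ⊆ C := by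
  wlog hlt : p.1 < q.1 generalizing p q
  · exact segment_symm ℝ (p.1, (0 : ℝ)) (q.1, 0) ▸
      this hq hp hpq.symm (hpq.lt_or_gt.resolve_left hlt)
  rw [← Prod.image_mk_segment_left, segment_eq_Icc hlt.le, image_subset_iff]
  exact fun x hx ↦ mk_zero_mem_of_subset_comb hK hCK hC_closed hC hp hq hlt hx

lemma hereditarilyUnicoherent_comb (hK : Dense Kᶜ) : HereditarilyUnicoherent (comb K) := by
  refine .of_exists_connector fun p _ q _ ↦ ?_
  have hseg (x y : ℝ × ℝ) : IsPreconnected (segment ℝ x y) := (convex_segment x y).isPreconnected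
  by_cases hpq : p.1 = q.1
  · exact ⟨segment ℝ p q, left_mem_segment _ _ _, right_mem_segment _ _ _, hseg p q,
      fun C hCK hC_closed hC hp hq ↦
        tooth_segment_subset_of_subset_comb hK hCK hC_closed hC hp hq hpq⟩
  · refine ⟨segment ℝ p (p.1, 0) ∪ segment ℝ (p.1, 0) (q.1, 0) ∪ segment ℝ (q.1, 0) q,
      Or.inl (Or.inl (left_mem_segment _ _ _)), Or.inr (right_mem_segment _ _ _), ?_, ?_⟩
    · exact .union (q.1, 0) (Or.inr (right_mem_segment _ _ _)) (left_mem_segment _ _ _)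
        (.union (p.1, 0) (right_mem_segment _ _ _) (left_mem_segment _ _ _) (hseg _ _) (hseg _ _))
        (hseg _ _)
    · intro C hCK hC_closed hC hp hq
      have hbase : segment ℝ (p.1, 0) (q.1, 0) ⊆ C :=
        base_segment_subset_of_subset_comb hK hCK hC_closed hC hp hq hpq
      have hp_base : (p.1, 0) ∈ C := hbase (left_mem_segment _ _ _)
      have hq_base : (q.1, 0) ∈ C := hbase (right_mem_segment _ _ _)
      exact union_subset (union_subset
        (tooth_segment_subset_of_subset_comb hK hCK hC_closed hC hp hp_base rfl) hbase)
        (tooth_segment_subset_of_subset_comb hK hCK hC_closed hC hq_base hq rfl)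

lemma isDendroid_comb (hK : IsCompact K) (hKI : K ⊆ Icc 0 1) (hK_dense : Dense Kᶜ) :
    IsDendroid (comb K) :=
  ⟨isContinuum_comb hK hKI, arcwiseConnectedSet_comb hKI, hereditarilyUnicoherent_comb hK_dense⟩

lemma not_locallyConnectedSpace_comb (hK : Dense Kᶜ) {a : ℝ} (haK : a ∈ K)
    (ha : AccPt a (𝓟 K)) : ¬ LocallyConnectedSpace (comb K) := by
  intro hlc
  have htop {x : ℝ} (hx : x ∈ K) : (x, (1 : ℝ)) ∈ comb K :=
    Or.inl ⟨hx, right_mem_Icc.2 zero_le_one⟩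
  have hpos : {z : comb K | 0 < z.1.2} ∈ 𝓝 ⟨(a, 1), htop haK⟩ :=
    (isOpen_lt continuous_const (by fun_prop)).mem_nhds (by simp)
  obtain ⟨V, hV_pos, hV_open, haV, hV⟩ :=
    locallyConnectedSpace_iff_subsets_isOpen_isConnected.1 hlc _ _ hpos
  have hproj : (fun z : comb K ↦ z.1.1) '' V ⊆ K := by
    rintro _ ⟨z, hz, rfl⟩
    exact fst_mem_of_mem_comb z.2 (hV_pos hz).ne'
  have hproj_ord : OrdConnected ((fun z : comb K ↦ z.1.1) '' V) :=
    (hV.isPreconnected.image _ (by fun_prop)).ordConnected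
  obtain ⟨W, hW_open, hWV⟩ := isOpen_induced_iff.1 hV_open
  have hW : {x | (x, (1 : ℝ)) ∈ W} ∈ 𝓝 a :=
    (hW_open.preimage (by fun_prop)).mem_nhds (hWV.symm ▸ haV : _ ∈ Subtype.val ⁻¹' W)
  obtain ⟨b, ⟨hbW, hbK⟩, hba⟩ := accPt_iff_nhds.1 ha _ hW
  have hbV : (⟨(b, 1), htop hbK⟩ : comb K) ∈ V := hWV ▸ hbW
  have huIcc : uIcc a b ⊆ K :=
    (hproj_ord.uIcc_subset ⟨_, haV, rfl⟩ ⟨_, hbV, rfl⟩).trans hproj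
  obtain ⟨c, hcK, hc⟩ := hK.exists_between (inf_lt_sup.2 hba.symm)
  exact hcK (huIcc ⟨hc.1.le, hc.2.le⟩)

lemma not_isDendrite_comb (hK : Dense Kᶜ) {a : ℝ} (haK : a ∈ K) (ha : AccPt a (𝓟 K)) :
    ¬ IsDendrite (comb K) :=
  fun h ↦ not_locallyConnectedSpace_comb hK haK ha h.2.1

end Comb

/-- The unit fractions `1, 1/2, 1/3, …`, over which the teeth of the harmonic comb stand before
taking the closure. -/
def unitFractions : Set ℝ := {x | ∃ n : ℕ, x = 1 / (n + 1)}

lemma unitFractions_eq_range : unitFractions = range fun n : ℕ ↦ (1 : ℝ) / (n + 1) :=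
  ext fun _ ↦ exists_congr fun _ ↦ eq_comm

lemma closure_unitFractions_subset_Icc : closure unitFractions ⊆ Icc 0 1 := by
  refine closure_minimal ?_ isClosed_Icc
  rintro _ ⟨n, rfl⟩
  exact ⟨by positivity, div_le_one_of_le₀ (by simp) (by positivity)⟩

lemma closure_unitFractions_subset_insert : closure unitFractions ⊆ insert 0 unitFractions := by
  refine closure_minimal (subset_insert _ _) ?_
  rw [unitFractions_eq_range]
  exact tendsto_one_div_add_atTop_nhds_zero_nat.isCompact_insert_range.isClosed

lemma countable_unitFractions : unitFractions.Countable :=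
  unitFractions_eq_range ▸ countable_range _

lemma dense_compl_closure_unitFractions : Dense (closure unitFractions)ᶜ :=
  ((countable_unitFractions.insert 0).mono closure_unitFractions_subset_insert).dense_compl ℝ

lemma accPt_zero_unitFractions : AccPt 0 (𝓟 unitFractions) := by
  refine accPt_iff_frequently.2 (tendsto_one_div_add_atTop_nhds_zero_nat.frequently ?_)
  exact Frequently.of_forall fun n ↦ ⟨Nat.one_div_pos_of_nat.ne', n, rfl⟩

lemma harmonicComb_eq_comb : harmonicComb = comb (closure unitFractions) :=
  closure_comb unitFractions

theorem harmonicComb_dendroid_not_dendrite_contractible :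
    IsDendroid harmonicComb ∧ ¬ IsDendrite harmonicComb ∧
      ContractibleSpace ↥harmonicComb := by
  rw [harmonicComb_eq_comb]
  have hKI : closure unitFractions ⊆ Icc 0 1 := closure_unitFractions_subset_Icc
  have hK : IsCompact (closure unitFractions) :=
    isCompact_Icc.of_isClosed_subset isClosed_closure hKI
  have hacc : AccPt 0 (𝓟 (closure unitFractions)) :=
    accPt_zero_unitFractions.mono (principal_mono.2 subset_closure)
  have h0 : 0 ∈ closure unitFractions :=
    mem_closure_iff_clusterPt.2 accPt_zero_unitFractions.clusterPt
  exact ⟨isDendroid_comb hK hKI dense_compl_closure_unitFractions,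
    not_isDendrite_comb dense_compl_closure_unitFractions h0 hacc, contractibleSpace_comb hKI⟩
end
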